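/- arXiv:1509.01376 — 2 statements merged into one kernel-verified Lean document; each statement's English description precedes it below -/
import Mathlib

section
/- Let n ≥ 2 and let w ∈ SU(2) ∗ Fₙ be a word whose content ε(w) equals the iterated commutator cₙ ∈ Fₙ, where c₁ = x₁ and cₖ = [xₖ, cₖ₋₁] = xₖcₖ₋₁xₖ⁻¹cₖ₋₁⁻¹. Then the word map SU(2)ⁿ → SU(2), sending (g₁,…,gₙ) to the image of w under the evaluation homomorphism (identity on SU(2), xᵢ ↦ gᵢ), is surjective; in particular there exist g₁,…,gₙ ∈ SU(2) with w(g₁,…,gₙ) = 1. -/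
/-- The special unitary group `SU(n)`: the subgroup of the unitary group
`U(n) = Matrix.unitaryGroup (Fin n) ℂ` consisting of matrices of determinant `1`. -/
def SU (n : ℕ) : Subgroup (Matrix.unitaryGroup (Fin n) ℂ) where
  carrier := {A | (A : Matrix (Fin n) (Fin n) ℂ).det = 1}
  mul_mem' := by
    intro a b ha hb
    simp only [Set.mem_setOf_eq] at *
    simp [Matrix.UnitaryGroup.mul_val, Matrix.det_mul, ha, hb]
  one_mem' := by simp
  inv_mem' := by
    intro a ha
    simp only [Set.mem_setOf_eq] at *
    show ((a⁻¹ : Matrix.unitaryGroup (Fin n) ℂ) : Matrix (Fin n) (Fin n) ℂ).det = 1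
    rw [Matrix.UnitaryGroup.inv_val, Matrix.star_eq_conjTranspose, Matrix.det_conjTranspose, ha]
    simp

/-- The iterated commutator `cₙ`:  `c₁(g₁) = g₁` and
`cₖ(g₁, …, gₖ) = [gₖ, cₖ₋₁(g₁, …, gₖ₋₁)]` where `[x,y] = x y x⁻¹ y⁻¹`. -/
def iteratedCommutator {G : Type*} [Group G] : (n : ℕ) → (Fin n → G) → G
  | 0, _ => 1
  | 1, g => g 0
  | (n + 2), g =>
      g (Fin.last (n + 1)) * iteratedCommutator (n + 1) (fun i => g i.castSucc) *
        (g (Fin.last (n + 1)))⁻¹ *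
          (iteratedCommutator (n + 1) (fun i => g i.castSucc))⁻¹

/-!
In `K⁻¹` of a space, conjugation acts on the group `PU(2) = U(2)/scalars`: the difference between
`g a g⁻¹` and `a` is the product of the class of `a` with `L - 1`, where `L` is the line bundle of
`U(2) → PU(2)` and `2 (L - 1) = 0`. Hence the iterated commutator, with its first variable
restricted to the matrices `diag(z, 1)`, represents `∏ (Lᵢ - 1) · [diag(z, 1)]`, and this class is
not divisible by two. If the word map missed a point, it would be null-homotopic in `GL₂(ℂ)`; since
scalars cancel from commutators, it descends to `PU(2)ⁿ`, and moving the constants of the word to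
`1` inside `GL₂(ℂ)` deforms it to the iterated commutator, whose class would vanish.

The classes divisible by two are represented here by the maps to `GL` which are stably homotopic to
a square. The commutators are peeled off one at a time, from the last variable inwards: a projective
plane `ℝP² → PU(2)` in the last variable, given by a disc with antipodal boundary, detects the
factor `L - 1`. This uses the Bott map `K⁻¹(T² × Y) → K⁻¹(Y)` modulo two, which is realized by
quantizing the torus: compressing functions to the span of coherent states on `ℤ/N` gives matrices
which multiply correctly as `N → ∞`. The induction ends with `diag(z, 1)` on the circle, which is
not stably a square since its determinant `z` has no continuous square root.
-/

open Matrix Topology Filter unitInterval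
open scoped Matrix.Norms.L2Operator MatrixGroups Kronecker commutatorElement

namespace WordMap

noncomputable section

section Homotopy

variable {X Y G : Type*} [TopologicalSpace X] [TopologicalSpace Y] [TopologicalSpace G] [Group G]
  [IsTopologicalGroup G]

lemma homotopic_mul {a b c d : C(Y, G)} (hab : a.Homotopic b) (hcd : c.Homotopic d) :
    (a * c).Homotopic (b * d) :=
  (ContinuousMap.Homotopic.refl ⟨fun p : G × G => p.1 * p.2, continuous_mul⟩).comp (hab.prodMk hcd)

lemma homotopic_inv {a b : C(Y, G)} (h : a.Homotopic b) : a⁻¹.Homotopic b⁻¹ :=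
  (ContinuousMap.Homotopic.refl ⟨fun g : G => g⁻¹, continuous_inv⟩).comp h

lemma homotopic_of_family {a b : C(Y, X)} {s t : ℝ} (F : C(ℝ × Y, X))
    (hs : ∀ y, F (s, y) = a y) (ht : ∀ y, F (t, y) = b y) : a.Homotopic b :=
  ⟨{ toFun := fun p => F (s + p.1 * (t - s), p.2)
     map_zero_left := by simp [hs]
     map_one_left := by simp [ht] }⟩

variable {R : Type*} [NormedRing R] [CompleteSpace R]

lemma isUnit_of_norm_sub_one_lt {x : R} (hx : ‖x - 1‖ < 1) : IsUnit x := by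
  simpa using isUnit_one_sub_of_norm_lt_one (x := 1 - x) (by rwa [norm_sub_rev])

variable [NormedSpace ℝ R]

lemma homotopic_of_isUnit_segment {a b : C(Y, Rˣ)}
    (h : ∀ (t : I) (y : Y), IsUnit ((1 - (t : ℝ)) • (a y : R) + (t : ℝ) • (b y : R))) :
    a.Homotopic b := by
  have hcont : Continuous fun p : I × Y =>
      (1 - (p.1 : ℝ)) • (a p.2 : R) + (p.1 : ℝ) • (b p.2 : R) := by fun_prop
  have hunit : ∀ p, IsUnit ((⟨_, hcont⟩ : C(I × Y, R)) p) := fun p => h p.1 p.2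
  exact ⟨{ toContinuousMap := ContinuousMap.unitsOfForallIsUnit hunit
           map_zero_left := fun y => Units.ext (by simp)
           map_one_left := fun y => Units.ext (by simp) }⟩

lemma homotopic_one_of_norm_sub_one_lt {a : C(Y, Rˣ)} (h : ∀ y, ‖(a y : R) - 1‖ < 1) :
    a.Homotopic 1 := by
  refine homotopic_of_isUnit_segment fun t y => isUnit_of_norm_sub_one_lt ?_
  have hsub : (1 - (t : ℝ)) • (a y : R) + (t : ℝ) • (((1 : C(Y, Rˣ)) y : Rˣ) : R) - 1
      = (1 - (t : ℝ)) • ((a y : R) - 1) := by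
    simp only [ContinuousMap.one_apply, Units.val_one]; module
  rw [hsub, norm_smul, Real.norm_of_nonneg (sub_nonneg.2 t.2.2)]
  exact (mul_le_of_le_one_left (norm_nonneg _) (by linarith [t.2.1])).trans_lt (h y)

end Homotopy

section SquareContaining

variable {G : Type*} [Group G] {H : Subgroup G}

lemma commutator_mem_of_mul_self_mem (hH : ∀ g, g * g ∈ H) (a b : G) :
    a * b * a⁻¹ * b⁻¹ ∈ H := by
  have heq : a * b * a⁻¹ * b⁻¹ = a * a * (a⁻¹ * b * (a⁻¹ * b)) * (b⁻¹ * b⁻¹) := by group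
  exact heq ▸ H.mul_mem (H.mul_mem (hH _) (hH _)) (hH _)

lemma conj_mem_iff_of_mul_self_mem (hH : ∀ g, g * g ∈ H) {a b : G} :
    a * b * a⁻¹ ∈ H ↔ b ∈ H := by
  have heq : a * b * a⁻¹ = a * b * a⁻¹ * b⁻¹ * b := by group
  rw [heq]
  exact H.mul_mem_cancel_left (commutator_mem_of_mul_self_mem hH a b)

lemma mul_conj_mem_of_mul_self_mem (hH : ∀ g, g * g ∈ H) (a b : G) : a * (b * a * b⁻¹) ∈ H := by
  have heq : a * (b * a * b⁻¹) = a * b * (a * b) * (b⁻¹ * b⁻¹) := by group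
  exact heq ▸ H.mul_mem (hH _) (hH _)

end SquareContaining

section Frames

/-- `Frame ι κ` is the space of isometries `ℂ^ι → ℂ^κ`, given by matrices `J` with `Jᴴ J = 1`. All
embeddings of `GL ι ℂ` into larger general linear groups come from frames. -/
def Frame (ι κ : Type*) [Fintype κ] [DecidableEq ι] : Type _ :=
  {J : Matrix κ ι ℂ // Jᴴ * J = 1}

namespace Frame

variable {ι ι' κ μ : Type*} [DecidableEq ι] [DecidableEq ι'] [Fintype κ]

instance : TopologicalSpace (Frame ι κ) := instTopologicalSpaceSubtype

/-- Two isometries with orthogonal ranges. -/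
def Orthogonal (J : Frame ι κ) (K : Frame ι' κ) : Prop := J.1ᴴ * K.1 = 0

lemma Orthogonal.symm {J : Frame ι κ} {K : Frame ι' κ} (h : J.Orthogonal K) : K.Orthogonal J := by
  have h' := congrArg conjTranspose (show J.1ᴴ * K.1 = 0 from h)
  rwa [conjTranspose_mul, conjTranspose_conjTranspose, conjTranspose_zero] at h'

/-- The isometry which permutes basis vectors along an injection. -/
def ofInjective [DecidableEq κ] {f : ι → κ} (hf : Function.Injective f) : Frame ι κ :=
  ⟨(1 : Matrix κ κ ℂ).submatrix id f, by
    rw [conjTranspose_submatrix, conjTranspose_one,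
      ← submatrix_mul _ _ f id f Function.bijective_id, Matrix.one_mul, submatrix_one _ hf]⟩

lemma orthogonal_ofInjective [DecidableEq κ] {f : ι → κ} {g : ι' → κ} (hf : Function.Injective f)
    (hg : Function.Injective g) (h : ∀ i j, f i ≠ g j) :
    (ofInjective hf).Orthogonal (ofInjective hg) := by
  unfold Orthogonal ofInjective
  rw [conjTranspose_submatrix, conjTranspose_one,
    ← submatrix_mul _ _ f id g Function.bijective_id, Matrix.one_mul]
  exact Matrix.ext fun i j => by simp [h]

/-- Composition of isometries. -/
def comp [DecidableEq κ] [Fintype μ] (K : Frame κ μ) (J : Frame ι κ) : Frame ι μ :=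
  ⟨K.1 * J.1, by
    rw [conjTranspose_mul, Matrix.mul_assoc, ← Matrix.mul_assoc _ K.1, K.2, Matrix.one_mul, J.2]⟩

lemma Orthogonal.comp {κ' : Type*} [Fintype κ'] [DecidableEq κ] [DecidableEq κ'] [Fintype μ]
    {K : Frame κ μ} {L : Frame κ' μ} (h : K.Orthogonal L) (J : Frame ι κ) (J' : Frame ι' κ') :
    (K.comp J).Orthogonal (L.comp J') := by
  change (K.1 * J.1)ᴴ * (L.1 * J'.1) = 0
  rw [conjTranspose_mul, Matrix.mul_assoc, ← Matrix.mul_assoc _ L.1, show K.1ᴴ * L.1 = 0 from h,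
    Matrix.zero_mul, Matrix.mul_zero]

instance : SMul Circle (Frame ι κ) :=
  ⟨fun z J => ⟨(z : ℂ) • J.1, by
    rw [conjTranspose_smul, Matrix.smul_mul, Matrix.mul_smul, smul_smul, J.2,
      show star (z : ℂ) * z = 1 by simp [← Complex.normSq_eq_conj_mul_self], one_smul]⟩⟩

lemma Orthogonal.smul {J : Frame ι κ} {K : Frame ι' κ} (h : J.Orthogonal K) (z : Circle) :
    (z • J).Orthogonal K := by
  change ((z : ℂ) • J.1)ᴴ * K.1 = 0
  rw [conjTranspose_smul, Matrix.smul_mul, show J.1ᴴ * K.1 = 0 from h, smul_zero]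

/-- The rotation which carries the range of `J` at angle `0` to the range of `K` at angle
`π / 2`. -/
def rotate {J K : Frame ι κ} (h : J.Orthogonal K) (θ : ℝ) : Frame ι κ :=
  ⟨(Real.cos θ : ℂ) • J.1 + (Real.sin θ : ℂ) • K.1, by
    have hJK : J.1ᴴ * K.1 = 0 := h
    have hKJ : K.1ᴴ * J.1 = 0 := h.symm
    simp only [conjTranspose_add, conjTranspose_smul, Matrix.add_mul, Matrix.mul_add,
      Matrix.smul_mul, Matrix.mul_smul, J.2, K.2, hJK, hKJ, smul_zero, add_zero, zero_add,
      Complex.star_def, Complex.conj_ofReal, smul_smul, ← add_smul]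
    rw [show (Real.cos θ : ℂ) * Real.cos θ + Real.sin θ * Real.sin θ = 1 by
      norm_cast; rw [← sq, ← sq, Real.cos_sq_add_sin_sq], one_smul]⟩

variable {J K : Frame ι κ} (h : J.Orthogonal K)

lemma rotate_zero : rotate h 0 = J := Subtype.ext (by simp [rotate])

lemma rotate_pi_div_two : rotate h (Real.pi / 2) = K := Subtype.ext (by simp [rotate])

lemma rotate_neg_smul (z : Circle) (θ : ℝ) :
    rotate (h.smul (-z)) θ = rotate (h.smul z) (Real.pi - θ) :=
  Subtype.ext (by
    change (Real.cos θ : ℂ) • (-(z : ℂ) • J.1) + _ = (Real.cos (Real.pi - θ) : ℂ) • ((z : ℂ) • J.1)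
      + (Real.sin (Real.pi - θ) : ℂ) • K.1
    rw [Real.cos_pi_sub, Real.sin_pi_sub, Complex.ofReal_neg, neg_smul, neg_smul, smul_neg])

lemma orthogonal_rotate (θ : ℝ) : (rotate h θ).Orthogonal (rotate h (θ + Real.pi / 2)) := by
  have hJK : J.1ᴴ * K.1 = 0 := h
  have hKJ : K.1ᴴ * J.1 = 0 := h.symm
  change ((Real.cos θ : ℂ) • J.1 + (Real.sin θ : ℂ) • K.1)ᴴ
    * ((Real.cos (θ + Real.pi / 2) : ℂ) • J.1 + (Real.sin (θ + Real.pi / 2) : ℂ) • K.1) = 0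
  simp only [Real.cos_add_pi_div_two, Real.sin_add_pi_div_two, conjTranspose_add,
    conjTranspose_smul, Matrix.add_mul, Matrix.mul_add, Matrix.smul_mul, Matrix.mul_smul, J.2, K.2,
    hJK, hKJ, smul_zero, add_zero, zero_add, Complex.star_def, Complex.conj_ofReal, smul_smul,
    ← add_smul, Complex.ofReal_neg]
  rw [show -(Real.sin θ : ℂ) * Real.cos θ + Real.cos θ * Real.sin θ = 0 by ring, zero_smul]

lemma rotate_mul_conjTranspose_add (X : Matrix ι ι ℂ) [Fintype ι] (θ : ℝ) :
    (rotate h θ).1 * X * (rotate h θ).1ᴴ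
      + (rotate h (θ + Real.pi / 2)).1 * X * (rotate h (θ + Real.pi / 2)).1ᴴ
      = J.1 * X * J.1ᴴ + K.1 * X * K.1ᴴ := by
  have hcs : (Real.cos θ : ℂ) * Real.cos θ + Real.sin θ * Real.sin θ = 1 := by
    norm_cast; rw [← sq, ← sq, Real.cos_sq_add_sin_sq]
  simp only [rotate, Real.cos_add_pi_div_two, Real.sin_add_pi_div_two, conjTranspose_add,
    conjTranspose_smul, Matrix.add_mul, Matrix.mul_add, Matrix.smul_mul, Matrix.mul_smul,
    Complex.star_def, Complex.ofReal_neg, map_neg, Complex.conj_ofReal]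
  generalize J.1 * X * J.1ᴴ = A, K.1 * X * K.1ᴴ = B
  linear_combination (norm := module) hcs • A + hcs • B

lemma continuous_rotate : Continuous (rotate h) :=
  Continuous.subtype_mk (by fun_prop) _

lemma continuous_rotate_smul :
    Continuous fun p : ℝ × Circle => rotate (h.smul p.2) p.1 :=
  Continuous.subtype_mk (f := fun p : ℝ × Circle =>
    (Real.cos p.1 : ℂ) • (p.2 : ℂ) • J.1 + (Real.sin p.1 : ℂ) • K.1) (by fun_prop) _

end Frame

variable {ι ι' κ μ : Type*} [Fintype ι] [DecidableEq ι] [Fintype ι'] [DecidableEq ι'] [Fintype κ]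
  [DecidableEq κ] [Fintype μ] [DecidableEq μ]

/-- The embedding `GL ι ℂ → GL κ ℂ` which lets matrices act on the range of the isometry `J` and
trivially on its orthogonal complement. -/
def stabilize (J : Frame ι κ) : GL ι ℂ →* GL κ ℂ :=
  Units.map
    { toFun := fun M => 1 + J.1 * (M - 1) * J.1ᴴ
      map_one' := by simp
      map_mul' := fun M N => by
        have hJ (A : Matrix ι κ ℂ) : J.1ᴴ * (J.1 * A) = A := by
          rw [← Matrix.mul_assoc, J.2, Matrix.one_mul]
        simp only [Matrix.add_mul, Matrix.mul_add, Matrix.sub_mul, Matrix.mul_sub, Matrix.one_mul,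
          Matrix.mul_one, Matrix.mul_assoc, hJ]
        abel }

lemma coe_stabilize (J : Frame ι κ) (a : GL ι ℂ) :
    (stabilize J a : Matrix κ κ ℂ) = 1 + J.1 * ((a : Matrix ι ι ℂ) - 1) * J.1ᴴ := rfl

lemma continuous_stabilize {Y : Type*} [TopologicalSpace Y] {J : Y → Frame ι κ} {a : Y → GL ι ℂ}
    (hJ : Continuous J) (ha : Continuous a) : Continuous fun y => stabilize (J y) (a y) := by
  have : Continuous fun y => (J y).1 := continuous_subtype_val.comp hJ
  have hval {b : Y → GL ι ℂ} (hb : Continuous b) :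
      Continuous fun y => (stabilize (J y) (b y) : Matrix κ κ ℂ) := by
    simp only [coe_stabilize]
    have := Units.continuous_val.comp hb
    fun_prop
  refine Units.continuous_iff.2 ⟨hval ha, ?_⟩
  simpa only [Pi.inv_apply, map_inv] using hval ha.inv

lemma stabilize_comp (K : Frame κ μ) (J : Frame ι κ) (a : GL ι ℂ) :
    stabilize (K.comp J) a = stabilize K (stabilize J a) := by
  ext1
  rw [coe_stabilize, coe_stabilize, coe_stabilize, add_sub_cancel_left]
  simp only [Frame.comp, conjTranspose_mul, Matrix.mul_assoc]

lemma stabilize_smul (z : Circle) (J : Frame ι κ) : stabilize (z • J) = stabilize J := by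
  ext1 a
  ext1
  change 1 + ((z : ℂ) • J.1) * ((a : Matrix ι ι ℂ) - 1) * ((z : ℂ) • J.1)ᴴ = _
  rw [conjTranspose_smul, Matrix.mul_smul, Matrix.smul_mul, Matrix.smul_mul, smul_smul,
    show star (z : ℂ) * z = 1 by simp [← Complex.normSq_eq_conj_mul_self], one_smul, coe_stabilize]

lemma det_stabilize (J : Frame ι κ) (a : GL ι ℂ) :
    (stabilize J a : Matrix κ κ ℂ).det = (a : Matrix ι ι ℂ).det := by
  rw [coe_stabilize, Matrix.mul_assoc, det_one_add_mul_comm, Matrix.mul_assoc, J.2, Matrix.mul_one,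
    add_sub_cancel]

lemma coe_stabilize_mul_stabilize {J : Frame ι κ} {K : Frame ι' κ} (h : J.Orthogonal K)
    (a : GL ι ℂ) (b : GL ι' ℂ) :
    (stabilize J a * stabilize K b : Matrix κ κ ℂ)
      = 1 + (J.1 * ((a : Matrix ι ι ℂ) - 1) * J.1ᴴ + K.1 * ((b : Matrix ι' ι' ℂ) - 1) * K.1ᴴ) := by
  have hJK (A : Matrix ι' κ ℂ) : J.1ᴴ * (K.1 * A) = 0 := by
    rw [← Matrix.mul_assoc, show J.1ᴴ * K.1 = 0 from h, Matrix.zero_mul]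
  simp only [coe_stabilize, Matrix.add_mul, Matrix.mul_add, Matrix.one_mul, Matrix.mul_one,
    Matrix.mul_assoc, hJK, Matrix.mul_zero, add_zero]
  abel

lemma commute_stabilize {J : Frame ι κ} {K : Frame ι' κ} (h : J.Orthogonal K) (a : GL ι ℂ)
    (b : GL ι' ℂ) : Commute (stabilize J a) (stabilize K b) := by
  ext1
  rw [Units.val_mul, Units.val_mul, coe_stabilize_mul_stabilize h,
    coe_stabilize_mul_stabilize h.symm, add_comm (J.1 * _ * _)]

lemma stabilize_rotate_mul_stabilize_rotate {J K : Frame ι κ} (h : J.Orthogonal K) (a : GL ι ℂ)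
    (θ : ℝ) :
    stabilize (Frame.rotate h θ) a * stabilize (Frame.rotate h (θ + Real.pi / 2)) a
      = stabilize J a * stabilize K a := by
  ext1
  rw [Units.val_mul, Units.val_mul, coe_stabilize_mul_stabilize h,
    coe_stabilize_mul_stabilize (Frame.orthogonal_rotate h θ), Frame.rotate_mul_conjTranspose_add]

variable {Y : Type*} [TopologicalSpace Y]

/-- Pointwise stabilization of a map into a general linear group. -/
def stabilizeMap (J : Frame ι κ) : C(Y, GL ι ℂ) →* C(Y, GL κ ℂ) :=
  (stabilize J).compLeftContinuous Y (continuous_stabilize continuous_const continuous_id)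

lemma stabilizeMap_apply (J : Frame ι κ) (a : C(Y, GL ι ℂ)) (y : Y) :
    stabilizeMap J a y = stabilize J (a y) := rfl

lemma stabilizeMap_comp (K : Frame κ μ) (J : Frame ι κ) (a : C(Y, GL ι ℂ)) :
    stabilizeMap (K.comp J) a = stabilizeMap K (stabilizeMap J a) :=
  ContinuousMap.ext fun y => stabilize_comp K J (a y)

lemma stabilizeMap_homotopic {a b : C(Y, GL ι ℂ)} (hab : a.Homotopic b) (J : Frame ι κ) :
    (stabilizeMap J a).Homotopic (stabilizeMap J b) :=
  (ContinuousMap.Homotopic.refl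
    ⟨stabilize J, continuous_stabilize continuous_const continuous_id⟩).comp hab

lemma commute_stabilizeMap {J : Frame ι κ} {K : Frame ι' κ} (h : J.Orthogonal K)
    (a : C(Y, GL ι ℂ)) (b : C(Y, GL ι' ℂ)) :
    Commute (stabilizeMap J a) (stabilizeMap K b) :=
  ContinuousMap.ext fun y => commute_stabilize h (a y) (b y)

lemma stabilizeMap_homotopic_of_orthogonal {J K : Frame ι κ} (h : J.Orthogonal K)
    (a : C(Y, GL ι ℂ)) : (stabilizeMap J a).Homotopic (stabilizeMap K a) :=
  homotopic_of_family (s := 0) (t := Real.pi / 2)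
    ⟨fun p => stabilize (Frame.rotate h p.1) (a p.2),
      continuous_stabilize ((Frame.continuous_rotate h).comp continuous_fst) (by fun_prop)⟩
    (fun y => by simp [Frame.rotate_zero, stabilizeMap_apply])
    (fun y => by simp [Frame.rotate_pi_div_two, stabilizeMap_apply])

end Frames

section StablyEven

variable {ι κ Y Z : Type} [Fintype ι] [DecidableEq ι] [Fintype κ] [DecidableEq κ]
  [TopologicalSpace Y] [TopologicalSpace Z]

/-- The maps `Y → GL ι ℂ` which become homotopic to a square in a larger general linear group, that
is, which represent a class divisible by two in `K⁻¹(Y)`. -/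
def stablyEven (ι Y : Type) [Fintype ι] [DecidableEq ι] [TopologicalSpace Y] :
    Subgroup C(Y, GL ι ℂ) where
  carrier := {a | ∃ (κ : Type) (_ : Fintype κ) (_ : DecidableEq κ) (J : Frame ι κ)
    (u : C(Y, GL κ ℂ)), (stabilizeMap J a).Homotopic (u * u)}
  one_mem' := ⟨ι, inferInstance, inferInstance, Frame.ofInjective Function.injective_id, 1, by
    rw [map_one, mul_one]⟩
  inv_mem' := by
    rintro a ⟨κ, _, _, J, u, hu⟩
    refine ⟨κ, _, _, J, u⁻¹, ?_⟩
    simpa only [map_inv, _root_.mul_inv_rev] using homotopic_inv hu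
  mul_mem' := by
    rintro a b ⟨κ, _, _, J, u, hu⟩ ⟨μ, _, _, K, v, hv⟩
    let L := Frame.ofInjective (Sum.inl_injective (α := κ) (β := μ))
    let M := Frame.ofInjective (Sum.inr_injective (α := κ) (β := μ))
    have horth : L.Orthogonal M := Frame.orthogonal_ofInjective _ _ fun _ _ => Sum.inl_ne_inr
    refine ⟨κ ⊕ μ, inferInstance, inferInstance, L.comp J, stabilizeMap L u * stabilizeMap M v, ?_⟩
    have hsquare : stabilizeMap L u * stabilizeMap M v * (stabilizeMap L u * stabilizeMap M v)
        = stabilizeMap L (u * u) * stabilizeMap M (v * v) := by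
      rw [map_mul, map_mul, (commute_stabilizeMap horth u v).symm.mul_mul_mul_comm]
    have hb := stabilizeMap_homotopic_of_orthogonal (horth.comp J K) b
    rw [stabilizeMap_comp M] at hb
    rw [hsquare, map_mul, stabilizeMap_comp L J a]
    exact homotopic_mul (stabilizeMap_homotopic hu L) (hb.trans (stabilizeMap_homotopic hv M))

lemma mem_stablyEven {a : C(Y, GL ι ℂ)} :
    a ∈ stablyEven ι Y ↔ ∃ (κ : Type) (_ : Fintype κ) (_ : DecidableEq κ) (J : Frame ι κ)
      (u : C(Y, GL κ ℂ)), (stabilizeMap J a).Homotopic (u * u) := Iff.rfl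

lemma mul_self_mem_stablyEven (a : C(Y, GL ι ℂ)) : a * a ∈ stablyEven ι Y :=
  mem_stablyEven.2
    ⟨ι, _, _, Frame.ofInjective Function.injective_id, stabilizeMap _ a, by rw [map_mul]⟩

lemma mem_stablyEven_of_homotopic {a b : C(Y, GL ι ℂ)} (hab : a.Homotopic b)
    (hb : b ∈ stablyEven ι Y) : a ∈ stablyEven ι Y := by
  obtain ⟨κ, _, _, J, u, hu⟩ := mem_stablyEven.1 hb
  exact mem_stablyEven.2 ⟨κ, _, _, J, u, (stabilizeMap_homotopic hab J).trans hu⟩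

lemma mem_stablyEven_of_stabilizeMap_mem {a : C(Y, GL ι ℂ)} (J : Frame ι κ)
    (h : stabilizeMap J a ∈ stablyEven κ Y) : a ∈ stablyEven ι Y := by
  obtain ⟨μ, _, _, K, u, hu⟩ := mem_stablyEven.1 h
  refine mem_stablyEven.2 ⟨μ, _, _, K.comp J, u, ?_⟩
  rwa [stabilizeMap_comp]

lemma comp_mem_stablyEven {a : C(Y, GL ι ℂ)} (ha : a ∈ stablyEven ι Y) (f : C(Z, Y)) :
    a.comp f ∈ stablyEven ι Z := by
  obtain ⟨κ, _, _, J, u, hu⟩ := mem_stablyEven.1 ha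
  exact mem_stablyEven.2 ⟨κ, _, _, J, u.comp f, hu.comp (ContinuousMap.Homotopic.refl f)⟩

lemma mem_stablyEven_of_norm_sub_one_lt {a : C(Y, GL ι ℂ)}
    (ha : ∀ y, ‖(a y : Matrix ι ι ℂ) - 1‖ < 1) : a ∈ stablyEven ι Y :=
  mem_stablyEven_of_homotopic (homotopic_one_of_norm_sub_one_lt ha) (one_mem _)

end StablyEven

section Determinant

variable {Y : Type*} [TopologicalSpace Y]

lemma exists_sq_eq_of_homotopic {f g c : C(Y, {z : ℂ // z ≠ 0})} (hfg : f.Homotopic g)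
    (hg : ∀ y, (g y : ℂ) = (c y : ℂ) ^ 2) :
    ∃ d : C(Y, {z : ℂ // z ≠ 0}), ∀ y, (f y : ℂ) = (d y : ℂ) ^ 2 := by
  obtain ⟨H⟩ := hfg.symm
  have hcov := isCoveringMap_npow (𝕜 := ℂ) 2 two_ne_zero
  have hzero : ∀ y, H (0, y) = ⟨(c y : ℂ) ^ 2, pow_ne_zero 2 (c y).2⟩ := fun y => by
    rw [H.apply_zero]; exact Subtype.ext (hg y)
  have hlift := hcov.liftHomotopy_lifts H.toContinuousMap c hzero
  refine ⟨(hcov.liftHomotopy H.toContinuousMap c hzero).comp ⟨fun y => (1, y), by fun_prop⟩,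
    fun y => ?_⟩
  rw [← H.apply_one y]
  exact congrArg Subtype.val (congrFun hlift (1, y)).symm

lemma not_exists_continuous_sq_eq_circle :
    ¬ ∃ c : Circle → ℂ, Continuous c ∧ ∀ z : Circle, (z : ℂ) = c z ^ 2 := by
  rintro ⟨c, hc, hsq⟩
  have hroots : Set.EqOn ((fun t : ℝ => c (Circle.exp t)) ^ 2)
      ((fun t : ℝ => Complex.exp (t / 2 * Complex.I)) ^ 2) Set.univ := fun t _ => by
    change c (Circle.exp t) ^ 2 = Complex.exp (t / 2 * Complex.I) ^ 2
    rw [← hsq, Circle.coe_exp, ← Complex.exp_nat_mul]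
    congr 1
    push_cast
    ring
  have hpi : Complex.exp (((2 * Real.pi : ℝ) : ℂ) / 2 * Complex.I) = -1 := by
    rw [← Complex.exp_pi_mul_I]; congr 1; push_cast; ring
  have hzero : Complex.exp (((0 : ℝ) : ℂ) / 2 * Complex.I) = 1 := by simp
  rcases isPreconnected_univ.eq_or_eq_neg_of_sq_eq (by fun_prop) (by fun_prop) hroots
    (fun _ => Complex.exp_ne_zero _) with h | h
  all_goals
    have h0 := h (Set.mem_univ 0)
    have h1 := h (Set.mem_univ (2 * Real.pi))
    simp only [Pi.neg_apply, Circle.exp_zero, Circle.exp_two_pi, hzero, hpi] at h0 h1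
    norm_num [h0] at h1

/-- The embedding of the circle into `U(2)` as the diagonal matrices with entries `z` and `1`. -/
def diagCircle : Circle →* unitaryGroup (Fin 2) ℂ where
  toFun z := ⟨diagonal ![(z : ℂ), 1], by
    rw [mem_unitaryGroup_iff', star_eq_conjTranspose, diagonal_conjTranspose, diagonal_mul_diagonal,
      ← diagonal_one]
    congr 1
    ext i
    fin_cases i <;> simp [← Complex.normSq_eq_conj_mul_self]⟩
  map_one' := Subtype.ext (by ext i j; fin_cases i <;> fin_cases j <;> rfl)
  map_mul' z w := Subtype.ext (by
    ext i j; fin_cases i <;> fin_cases j <;> simp)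

lemma coe_diagCircle (z : Circle) :
    (diagCircle z : Matrix (Fin 2) (Fin 2) ℂ) = diagonal ![(z : ℂ), 1] := rfl

lemma continuous_diagCircle : Continuous diagCircle :=
  Continuous.subtype_mk (Continuous.matrix_diagonal (by
    refine continuous_pi fun i => ?_
    fin_cases i
    · exact continuous_subtype_val
    · exact continuous_const)) _

lemma continuous_toUnits {ι : Type*} [Fintype ι] [DecidableEq ι] :
    Continuous (Unitary.toUnits : unitaryGroup ι ℂ → GL ι ℂ) :=
  Units.continuous_iff.2 ⟨continuous_subtype_val,
    (continuous_subtype_val.comp continuous_inv : Continuous fun g : unitaryGroup ι ℂ => g⁻¹.1)⟩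

lemma diagCircle_not_mem_stablyEven :
    (⟨fun z => Unitary.toUnits (diagCircle z), continuous_toUnits.comp continuous_diagCircle⟩ :
      C(Circle, GL (Fin 2) ℂ)) ∉ stablyEven (Fin 2) Circle := by
  intro hmem
  obtain ⟨κ, _, _, J, u, hu⟩ := mem_stablyEven.1 hmem
  let det : C(GL κ ℂ, {z : ℂ // z ≠ 0}) :=
    ⟨fun g => ⟨(g : Matrix κ κ ℂ).det, ((isUnit_iff_isUnit_det _).1 g.isUnit).ne_zero⟩,
      Continuous.subtype_mk (Units.continuous_val.matrix_det) _⟩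
  obtain ⟨d, hd⟩ := exists_sq_eq_of_homotopic ((ContinuousMap.Homotopic.refl det).comp hu)
    (c := det.comp u) fun z => by
      change ((u z * u z : GL κ ℂ) : Matrix κ κ ℂ).det = (u z : Matrix κ κ ℂ).det ^ 2
      rw [Units.val_mul, det_mul, sq]
  refine not_exists_continuous_sq_eq_circle ⟨fun z => d z, by fun_prop, fun z => ?_⟩
  rw [← hd z]
  change _ = (stabilize J (Unitary.toUnits (diagCircle z)) : Matrix κ κ ℂ).det
  rw [det_stabilize]
  change _ = (diagCircle z : Matrix (Fin 2) (Fin 2) ℂ).det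
  simp [coe_diagCircle]

end Determinant

section Asymptotic

variable {A : ℕ → Type*} [∀ k, NormedRing (A k)] [∀ k, NormOneClass (A k)]

/-- The ideal of sequences which converge to zero in norm. -/
def nullIdeal (A : ℕ → Type*) [∀ k, NormedRing (A k)] [∀ k, NormOneClass (A k)] :
    TwoSidedIdeal (lp A ⊤) :=
  .mk' {a | Tendsto (fun k => ‖a k‖) atTop (𝓝 0)} (by simp)
    (fun ha hb => squeeze_zero (fun _ => norm_nonneg _) (fun _ => norm_add_le _ _)
      (by simpa using Tendsto.add ha hb))
    (fun ha => by simpa using ha)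
    (fun {a b} hb => squeeze_zero (fun _ => norm_nonneg _)
      (fun k => (norm_mul_le _ _).trans
        (mul_le_mul_of_nonneg_right (lp.norm_apply_le_norm ENNReal.top_ne_zero a k)
          (norm_nonneg _)))
      (by simpa using Tendsto.const_mul ‖a‖ hb))
    (fun {a b} ha => squeeze_zero (fun _ => norm_nonneg _)
      (fun k => (norm_mul_le _ _).trans
        (mul_le_mul_of_nonneg_left (lp.norm_apply_le_norm ENNReal.top_ne_zero b k) (norm_nonneg _)))
      (by simpa using Tendsto.mul_const ‖b‖ ha))

/-- The ring of bounded sequences modulo null sequences, in which asymptotically multiplicative maps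
become ring homomorphisms. -/
def AsymptoticRing (A : ℕ → Type*) [∀ k, NormedRing (A k)] [∀ k, NormOneClass (A k)] : Type _ :=
  (nullIdeal A).ringCon.Quotient

instance : Ring (AsymptoticRing A) := inferInstanceAs (Ring (nullIdeal A).ringCon.Quotient)

namespace AsymptoticRing

/-- The class of a bounded sequence. -/
def mk : lp A ⊤ →+* AsymptoticRing A := (nullIdeal A).ringCon.mk'

lemma mk_surjective : Function.Surjective (mk (A := A)) := RingCon.mk'_surjective _

lemma mk_eq_mk {a b : lp A ⊤} : mk a = mk b ↔ Tendsto (fun k => ‖a k - b k‖) atTop (𝓝 0) := by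
  refine (RingCon.eq _).trans ((nullIdeal A).rel_iff a b |>.trans ?_)
  exact TwoSidedIdeal.mem_mk' ..

lemma eventually_norm_sub_one_lt {a : lp A ⊤} (h : mk a = 1) :
    ∀ᶠ k in atTop, ‖a k - 1‖ < 1 :=
  (mk_eq_mk.1 (h.trans (map_one mk).symm)).eventually_lt_const one_pos

variable [∀ k, CompleteSpace (A k)]

lemma eventually_isUnit (u : (AsymptoticRing A)ˣ) {a : lp A ⊤} (ha : mk a = u) :
    ∀ᶠ k in atTop, IsUnit (a k) := by
  obtain ⟨b, hb⟩ := mk_surjective (u⁻¹ : (AsymptoticRing A)ˣ).val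
  have hab : mk (a * b) = 1 := by rw [map_mul, ha, hb, u.mul_inv]
  have hba : mk (b * a) = 1 := by rw [map_mul, ha, hb, u.inv_mul]
  filter_upwards [eventually_norm_sub_one_lt hab, eventually_norm_sub_one_lt hba] with k h h'
  exact isUnit_iff_exists_and_exists.2
    ⟨(isUnit_of_norm_sub_one_lt h).exists_right_inv.imp' (b k * ·) fun c hc => by
      rwa [← _root_.mul_assoc],
    (isUnit_of_norm_sub_one_lt h').exists_left_inv.imp' (· * b k) fun c hc => by
      rwa [_root_.mul_assoc]⟩

/-- The units of the asymptotic ring whose representatives eventually lie in the given subgroups,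
which have to be so large that this does not depend on the representative. -/
def eventuallyIn (E : ∀ k, Subgroup (A k)ˣ) (hE : ∀ k (v : (A k)ˣ), ‖(v : A k) - 1‖ < 1 → v ∈ E k) :
    Subgroup (AsymptoticRing A)ˣ where
  carrier := {u | ∃ a, mk a = u ∧ ∀ᶠ k in atTop, ∃ v ∈ E k, (v : A k) = a k}
  one_mem' := ⟨1, map_one _, .of_forall fun k => ⟨1, one_mem _, rfl⟩⟩
  mul_mem' := by
    rintro u v ⟨a, ha, hau⟩ ⟨b, hb, hbv⟩
    refine ⟨a * b, by rw [map_mul, ha, hb, Units.val_mul], ?_⟩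
    filter_upwards [hau, hbv] with k ⟨v, hv, hva⟩ ⟨w, hw, hwb⟩
    exact ⟨v * w, mul_mem hv hw, by rw [Units.val_mul, hva, hwb]; rfl⟩
  inv_mem' := by
    rintro u ⟨a, ha, hau⟩
    obtain ⟨b, hb⟩ := mk_surjective (u⁻¹ : (AsymptoticRing A)ˣ).val
    refine ⟨b, hb, ?_⟩
    have hba : mk (b * a) = 1 := by rw [map_mul, ha, hb, u.inv_mul]
    filter_upwards [hau, eventually_norm_sub_one_lt hba] with k ⟨v, hv, hva⟩ hk
    obtain ⟨w, hw⟩ := isUnit_of_norm_sub_one_lt hk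
    refine ⟨w * v⁻¹, mul_mem (hE k w (hw ▸ hk)) (inv_mem hv), ?_⟩
    rw [Units.val_mul, hw, show (b * a : lp A ⊤) k = b k * a k from rfl, ← hva,
      Units.mul_inv_cancel_right]

variable {E : ∀ k, Subgroup (A k)ˣ} {hE : ∀ k (v : (A k)ˣ), ‖(v : A k) - 1‖ < 1 → v ∈ E k}

lemma mem_eventuallyIn_iff {u : (AsymptoticRing A)ˣ} {a : lp A ⊤} (ha : mk a = u) :
    u ∈ eventuallyIn E hE ↔ ∀ᶠ k in atTop, ∃ v ∈ E k, (v : A k) = a k := by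
  refine ⟨fun hu => ?_, fun h => ⟨a, ha, h⟩⟩
  obtain ⟨b, hb, hbu⟩ := inv_mem hu
  have hab : mk (a * b) = 1 := by rw [map_mul, ha, hb, u.mul_inv]
  filter_upwards [hbu, eventually_norm_sub_one_lt hab] with k ⟨v, hv, hvb⟩ hk
  obtain ⟨w, hw⟩ := isUnit_of_norm_sub_one_lt hk
  refine ⟨w * v⁻¹, mul_mem (hE k w (hw ▸ hk)) (inv_mem hv), ?_⟩
  rw [Units.val_mul, hw, show (a * b : lp A ⊤) k = a k * b k from rfl, ← hvb,
    Units.mul_inv_cancel_right]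

lemma mul_self_mem_eventuallyIn (hsq : ∀ k (v : (A k)ˣ), v * v ∈ E k) (u : (AsymptoticRing A)ˣ) :
    u * u ∈ eventuallyIn E hE := by
  obtain ⟨a, ha⟩ := mk_surjective u.val
  refine ⟨a * a, by rw [map_mul, ha, Units.val_mul], ?_⟩
  filter_upwards [eventually_isUnit u ha] with k ⟨v, hv⟩
  exact ⟨v * v, hsq k v, by rw [Units.val_mul, hv]; rfl⟩

end AsymptoticRing

end Asymptotic

section Window

variable {N L : ℕ} [NeZero N]

/-- The normalized indicator function of the first `L` elements of `ZMod N`. -/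
def window (N L : ℕ) (m : ZMod N) : ℝ := if m.val < L then (√L)⁻¹ else 0

lemma card_filter_val_lt (hL : L ≤ N) :
    (Finset.univ.filter fun m : ZMod N => m.val < L).card = L := by
  refine Finset.card_eq_of_equiv_fin ⟨fun m => ⟨m.1.val, (Finset.mem_filter.1 m.2).2⟩,
    fun i => ⟨(i : ℕ), ?_⟩, fun m => Subtype.ext (ZMod.natCast_zmod_val m.1),
    fun i => Fin.ext (ZMod.val_natCast_of_lt (i.2.trans_le hL))⟩
  exact Finset.mem_filter.2 ⟨Finset.mem_univ _, by
    rw [ZMod.val_natCast_of_lt (i.2.trans_le hL)]; exact i.2⟩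

lemma sum_window_sq (h0 : 0 < L) (hL : L ≤ N) : ∑ m, window N L m ^ 2 = 1 := by
  simp only [window, ite_pow, inv_pow, Real.sq_sqrt (Nat.cast_nonneg L), ne_eq, OfNat.ofNat_ne_zero,
    not_false_eq_true, zero_pow]
  rw [← Finset.sum_filter, Finset.sum_const, card_filter_val_lt hL, nsmul_eq_mul,
    mul_inv_cancel₀ (by positivity)]

lemma sum_window_sub_left_sq (h0 : 0 < L) (hL : L ≤ N) (j : ZMod N) :
    ∑ q, window N L (j - q) ^ 2 = 1 :=
  ((Equiv.subLeft j).sum_comp fun m => window N L m ^ 2).trans (sum_window_sq h0 hL)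

lemma le_sum_window_mul_window (h0 : 0 < L) (hL : L ≤ N) :
    1 - 1 / (L : ℝ) ≤ ∑ m, window N L m * window N L (m - 1) := by
  have hprod (m : ZMod N) : window N L m * window N L (m - 1)
      = if m.val < L ∧ (m - 1).val < L then (L : ℝ)⁻¹ else 0 := by
    by_cases h : m.val < L <;> by_cases h' : (m - 1).val < L <;>
      simp [window, h, h', ← _root_.mul_inv, Real.mul_self_sqrt]
  have hcard : L - 1 ≤ (Finset.univ.filter fun m : ZMod N => m.val < L ∧ (m - 1).val < L).card := by
    refine (Finset.card_range (L - 1)).symm.trans_le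
      (Finset.card_le_card_of_injOn (fun i : ℕ => ((i + 1 : ℕ) : ZMod N)) (fun i hi => ?_)
        fun i hi j hj hij => ?_)
    · have hi' : i + 1 < L := by have := Finset.mem_range.1 hi; omega
      refine Finset.mem_coe.2 (Finset.mem_filter.2 ⟨Finset.mem_univ _, ?_, ?_⟩)
      · rwa [ZMod.val_natCast_of_lt (by omega)]
      · change (((i + 1 : ℕ) : ZMod N) - 1).val < L
        rw [Nat.cast_succ, add_sub_cancel_right, ZMod.val_natCast_of_lt (by omega)]
        omega
    · have hi' := Finset.mem_range.1 hi
      have hj' := Finset.mem_range.1 hj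
      have := congrArg ZMod.val hij
      simp only [ZMod.val_natCast_of_lt (show i + 1 < N by omega),
        ZMod.val_natCast_of_lt (show j + 1 < N by omega)] at this
      omega
  have hcast : (L : ℝ) - 1 ≤ ((L - 1 : ℕ) : ℝ) := by rw [Nat.cast_sub h0, Nat.cast_one]
  rw [Finset.sum_congr rfl fun m _ => hprod m, ← Finset.sum_filter, Finset.sum_const, nsmul_eq_mul]
  calc 1 - 1 / (L : ℝ) = (L - 1) * (L : ℝ)⁻¹ := by field_simp
    _ ≤ _ := mul_le_mul_of_nonneg_right (hcast.trans (Nat.cast_le.2 hcard)) (by positivity)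

lemma sum_window_sub_sq_le (h0 : 0 < L) (hL : L ≤ N) :
    ∑ m, (window N L m - window N L (m - 1)) ^ 2 ≤ 2 / L := by
  have hshift : ∑ m, window N L (m - 1) ^ 2 = 1 :=
    ((Equiv.subRight (1 : ZMod N)).sum_comp fun m => window N L m ^ 2).trans (sum_window_sq h0 hL)
  calc ∑ m, (window N L m - window N L (m - 1)) ^ 2
      = ∑ m, window N L m ^ 2 + ∑ m, window N L (m - 1) ^ 2
        - 2 * ∑ m, window N L m * window N L (m - 1) := by
        rw [Finset.mul_sum, ← Finset.sum_add_distrib, ← Finset.sum_sub_distrib]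
        exact Finset.sum_congr rfl fun m _ => by ring
    _ ≤ 2 / L := by
        rw [sum_window_sq h0 hL, hshift]
        have := le_sum_window_mul_window h0 hL
        linarith [show 2 / (L : ℝ) = 2 * (1 / L) by ring]

lemma sum_window_translate_sub_sq_le (h0 : 0 < L) (hL : L ≤ N) {d : ZMod N} (hd : d = 1 ∨ d = -1)
    (j : ZMod N) : ∑ q, (window N L (j - d - q) - window N L (j - q)) ^ 2 ≤ 2 / L := by
  rw [← (Equiv.subLeft j).sum_comp]
  simp only [Equiv.subLeft_apply, sub_sub_cancel]
  rcases hd with rfl | rfl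
  · refine le_of_eq_of_le (Finset.sum_congr rfl fun m _ => ?_) (sum_window_sub_sq_le h0 hL)
    rw [sub_right_comm, sub_sub_cancel, sub_sq_comm]
  · rw [← (Equiv.subRight (1 : ZMod N)).sum_comp]
    refine le_of_eq_of_le (Finset.sum_congr rfl fun m _ => ?_) (sum_window_sub_sq_le h0 hL)
    rw [Equiv.subRight_apply, show j - -1 - (j - (m - 1)) = m by ring]

end Window

section PhaseMatrix

variable {ι : Type*} {N : ℕ} [NeZero N]

/-- A vector bundle version of the short-time Fourier transform on `ZMod N`: the amplitude `c`
depends on the position `q` in phase space and on the site `j`, while the momentum `p` only enters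
through the character `j ↦ exp (2πi p j / N)`. -/
def phaseMatrix (c : ZMod N → ZMod N → Matrix ι ι ℂ) :
    Matrix (ι × ZMod N × ZMod N) (ι × ZMod N) ℂ :=
  of fun a b => (√N : ℂ)⁻¹ * (ZMod.toCircle (a.2.2 * b.2) * c a.2.1 b.2 a.1 b.1)

lemma phaseMatrix_sub (c c' : ZMod N → ZMod N → Matrix ι ι ℂ) :
    phaseMatrix c - phaseMatrix c' = phaseMatrix (c - c') := by
  ext a b
  simp only [phaseMatrix, Matrix.sub_apply, of_apply, Pi.sub_apply]
  ring

lemma sum_star_toCircle_mul_toCircle (i j : ZMod N) :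
    ∑ p : ZMod N, star (ZMod.toCircle (p * i) : ℂ) * ZMod.toCircle (p * j)
      = if i = j then (N : ℂ) else 0 := by
  have h := AddChar.sum_mulShift (j - i) (ZMod.isPrimitive_stdAddChar N)
  rw [ZMod.card, Nat.cast_ite, Nat.cast_zero] at h
  simp only [sub_eq_zero, eq_comm (a := j)] at h
  rw [← h]
  refine Finset.sum_congr rfl fun p _ => ?_
  rw [ZMod.stdAddChar_apply, mul_sub, AddChar.map_sub_eq_div, Circle.coe_div, div_eq_inv_mul]
  congr 1
  exact (Circle.coe_inv_eq_conj _).symm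

lemma conjTranspose_phaseMatrix_mul [Fintype ι] (c c' : ZMod N → ZMod N → Matrix ι ι ℂ) :
    (phaseMatrix c)ᴴ * phaseMatrix c' = blockDiagonal fun j => ∑ q, (c q j)ᴴ * c' q j := by
  have hN : (√N : ℂ)⁻¹ * (√N : ℂ)⁻¹ * N = 1 := by
    norm_cast
    rw [← _root_.mul_inv, Real.mul_self_sqrt (Nat.cast_nonneg N),
      inv_mul_cancel₀ (Nat.cast_ne_zero.2 (NeZero.ne N))]
  ext ⟨i, j⟩ ⟨i', j'⟩
  have hterm (l : ι) (q : ZMod N) :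
      ∑ p, star (phaseMatrix c (l, q, p) (i, j)) * phaseMatrix c' (l, q, p) (i', j')
      = if j = j' then star (c q j l i) * c' q j l i' else 0 := by
    calc _ = (√N : ℂ)⁻¹ * (√N : ℂ)⁻¹ * (star (c q j l i) * c' q j' l i')
        * ∑ p, star (ZMod.toCircle (p * j) : ℂ) * ZMod.toCircle (p * j') := by
          rw [Finset.mul_sum]
          refine Finset.sum_congr rfl fun p _ => ?_
          simp only [phaseMatrix, of_apply, star_mul', star_inv₀, Complex.star_def,
            Complex.conj_ofReal]
          ring
      _ = _ := by
          rw [sum_star_toCircle_mul_toCircle]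
          split_ifs with h
          · rw [mul_right_comm, hN, one_mul, h]
          · rw [mul_zero]
  simp only [mul_apply, conjTranspose_apply, Fintype.sum_prod_type, hterm, blockDiagonal_apply,
    Matrix.sum_apply]
  split_ifs
  · exact Finset.sum_comm
  · simp

end PhaseMatrix

section Sampling

variable {ι J Y Z : Type*} [Fintype ι] [DecidableEq ι] [Fintype J] [DecidableEq J]
  [TopologicalSpace Y] [TopologicalSpace Z]

/-- Samples a matrix-valued function along finitely many maps and puts the samples on the diagonal
of a block matrix. -/
def sampling (φ : J → C(Y, Z)) : C(Z, Matrix ι ι ℂ) →⋆ₐ[ℂ] C(Y, Matrix (ι × J) (ι × J) ℂ) where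
  toFun f := ⟨fun y => blockDiagonal fun j => f (φ j y), by
    refine Continuous.matrix_blockDiagonal ?_
    fun_prop⟩
  map_one' := ContinuousMap.ext fun _ => blockDiagonal_one
  map_mul' f g := ContinuousMap.ext fun y =>
    blockDiagonal_mul (fun j => f (φ j y)) fun j => g (φ j y)
  map_zero' := ContinuousMap.ext fun _ => blockDiagonal_zero
  map_add' f g := ContinuousMap.ext fun y =>
    blockDiagonal_add (fun j => f (φ j y)) fun j => g (φ j y)
  commutes' r := ContinuousMap.ext fun y => by
    change blockDiagonal (fun _ => algebraMap ℂ (Matrix ι ι ℂ) r) = algebraMap ℂ _ r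
    rw [Algebra.algebraMap_eq_smul_one, Algebra.algebraMap_eq_smul_one]
    exact (blockDiagonal_smul r 1).trans (congrArg _ blockDiagonal_one)
  map_star' f := ContinuousMap.ext fun y => (blockDiagonal_conjTranspose fun j => f (φ j y)).symm

lemma sampling_apply (φ : J → C(Y, Z)) (f : C(Z, Matrix ι ι ℂ)) (y : Y) :
    sampling φ f y = blockDiagonal fun j => f (φ j y) := rfl

lemma norm_sampling_le [CompactSpace Y] [CompactSpace Z] (φ : J → C(Y, Z))
    (f : C(Z, Matrix ι ι ℂ)) : ‖sampling φ f‖ ≤ ‖f‖ :=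
  NonUnitalStarAlgHom.norm_apply_le _ f

lemma norm_blockDiagonal_le {B : J → Matrix ι ι ℂ} {r : ℝ} (h0 : 0 ≤ r) (h : ∀ j, ‖B j‖ ≤ r) :
    ‖blockDiagonal B‖ ≤ r := by
  let _ : TopologicalSpace J := ⊥
  have : DiscreteTopology J := ⟨rfl⟩
  let b : C(J, Matrix ι ι ℂ) := ⟨B, continuous_of_discreteTopology⟩
  calc ‖blockDiagonal B‖ = ‖sampling (fun j => ContinuousMap.const Unit j) b ()‖ := rfl
    _ ≤ ‖b‖ := (ContinuousMap.norm_coe_le_norm _ _).trans (norm_sampling_le _ b)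
    _ ≤ r := (ContinuousMap.norm_le _ h0).2 h

end Sampling

section Intertwining

variable {ι : Type*} [Fintype ι] {N : ℕ} [NeZero N]

lemma blockDiagonal_mul_apply {J m : Type*} [Fintype J] [DecidableEq J]
    (B : J → Matrix ι ι ℂ) (X : Matrix (ι × J) m ℂ) (a : ι × J) (b : m) :
    (blockDiagonal B * X) a b = ∑ i, B a.2 a.1 i * X (i, a.2) b := by
  simp [mul_apply, Fintype.sum_prod_type, blockDiagonal_apply, ite_mul]

lemma mul_blockDiagonal_apply {J m : Type*} [Fintype J] [DecidableEq J]
    (X : Matrix m (ι × J) ℂ) (B : J → Matrix ι ι ℂ) (a : m) (b : ι × J) :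
    (X * blockDiagonal B) a b = ∑ i, X a (i, b.2) * B b.2 i b.1 := by
  simp [mul_apply, Fintype.sum_prod_type, blockDiagonal_apply, mul_ite]

lemma blockDiagonal_mul_phaseMatrix (e : ZMod N → Matrix ι ι ℂ)
    (c : ZMod N → ZMod N → Matrix ι ι ℂ) :
    (blockDiagonal fun x : ZMod N × ZMod N => e x.1) * phaseMatrix c
      = phaseMatrix fun q j => e q * c q j := by
  ext a b
  rw [blockDiagonal_mul_apply]
  simp only [phaseMatrix, of_apply, mul_apply, Finset.mul_sum]
  exact Finset.sum_congr rfl fun i _ => by ring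

lemma phaseMatrix_mul_blockDiagonal (c : ZMod N → ZMod N → Matrix ι ι ℂ)
    (e : ZMod N → Matrix ι ι ℂ) :
    phaseMatrix c * blockDiagonal e = phaseMatrix fun q j => c q j * e j := by
  ext a b
  rw [mul_blockDiagonal_apply]
  simp only [phaseMatrix, of_apply, mul_apply, Finset.mul_sum, _root_.mul_assoc]

variable [DecidableEq ι]

lemma norm_phaseMatrix_le {c : ZMod N → ZMod N → Matrix ι ι ℂ} {r : ℝ} (h0 : 0 ≤ r)
    (h : ∀ j, ∑ q, ‖c q j‖ ^ 2 ≤ r ^ 2) : ‖phaseMatrix c‖ ≤ r := by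
  refine le_of_sq_le_sq ?_ h0
  rw [sq, ← l2_opNorm_conjTranspose_mul_self, conjTranspose_phaseMatrix_mul]
  refine norm_blockDiagonal_le (sq_nonneg r) fun j => (norm_sum_le _ _).trans (le_trans ?_ (h j))
  exact (Finset.sum_congr rfl fun q _ => by rw [l2_opNorm_conjTranspose_mul_self, sq]).le

/-- The translation of `ZMod N` by `d` as a matrix. -/
def shift (ι : Type*) [Fintype ι] [DecidableEq ι] (d : ZMod N) : Frame (ι × ZMod N) (ι × ZMod N) :=
  .ofInjective (f := fun x => (x.1, x.2 + d)) fun x y h => by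
    simpa [Prod.ext_iff] using h

lemma mul_shift_apply {m : Type*} (X : Matrix m (ι × ZMod N) ℂ) (d : ZMod N) (a : m)
    (b : ι × ZMod N) : (X * (shift ι d).1) a b = X a (b.1, b.2 + d) := by
  simp [shift, Frame.ofInjective, mul_apply, one_apply]

lemma blockDiagonal_toCircle_mul_phaseMatrix (d : ZMod N) (c : ZMod N → ZMod N → Matrix ι ι ℂ) :
    (blockDiagonal fun x : ZMod N × ZMod N => (ZMod.toCircle (x.2 * d) : ℂ) • (1 : Matrix ι ι ℂ))
        * phaseMatrix c
      = phaseMatrix (fun q j => c q (j - d)) * (shift ι d).1 := by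
  ext a b
  rw [mul_shift_apply, blockDiagonal_mul_apply]
  simp only [phaseMatrix, of_apply, Matrix.smul_apply, one_apply, smul_eq_mul, mul_ite, mul_one,
    mul_zero, ite_mul, zero_mul, Finset.sum_ite_eq, Finset.mem_univ, if_true, add_sub_cancel_right]
  rw [mul_add, AddChar.map_add_eq_mul, Circle.coe_mul]
  ring

end Intertwining

section Compression

lemma Frame.norm_le_one {ι κ : Type*} [Fintype ι] [DecidableEq ι] [Fintype κ]
    (J : Frame ι κ) : ‖J.1‖ ≤ 1 := by
  classical
  refine le_of_sq_le_sq ?_ zero_le_one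
  rw [sq, ← l2_opNorm_conjTranspose_mul_self, J.2, one_pow, ← diagonal_one, l2_opNorm_diagonal]
  exact (pi_norm_le_iff_of_nonneg zero_le_one).2 fun i => norm_one.le

variable {ι κ Y : Type*} [DecidableEq ι] [Fintype κ] [TopologicalSpace Y]

/-- The compression `Vᴴ f V` of a matrix-valued function to the range of the isometry `V`. -/
def compress (V : Frame ι κ) : C(Y, Matrix κ κ ℂ) →+ C(Y, Matrix ι ι ℂ) where
  toFun f := ⟨fun y => V.1ᴴ * f y * V.1, by fun_prop⟩
  map_zero' := by ext1 y; simp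
  map_add' f g := by ext1 y; simp [Matrix.mul_add, Matrix.add_mul]

lemma compress_apply (V : Frame ι κ) (f : C(Y, Matrix κ κ ℂ)) (y : Y) :
    compress V f y = V.1ᴴ * f y * V.1 := rfl

lemma compress_one [DecidableEq κ] (V : Frame ι κ) : compress V (1 : C(Y, Matrix κ κ ℂ)) = 1 := by
  ext1 y
  rw [compress_apply, ContinuousMap.one_apply, Matrix.mul_one, V.2, ContinuousMap.one_apply]

variable [Fintype ι]

/-- The constant function with value the orthogonal projection to the range of `V`. -/
def rangeProj (Y : Type*) [TopologicalSpace Y] (V : Frame ι κ) : C(Y, Matrix κ κ ℂ) :=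
  .const Y (V.1 * V.1ᴴ)

lemma isSelfAdjoint_rangeProj (V : Frame ι κ) : IsSelfAdjoint (rangeProj Y V) :=
  ContinuousMap.ext fun _ => isHermitian_mul_conjTranspose_self V.1

lemma norm_mul_le_of_norm_le_one {l m n : Type*} [Fintype l] [Fintype m] [DecidableEq m]
    [Fintype n] [DecidableEq n] {A : Matrix l m ℂ} {B : Matrix m n ℂ} {r : ℝ}
    (hA : ‖A‖ ≤ 1) (hB : ‖B‖ ≤ r) : ‖A * B‖ ≤ r :=
  (l2_opNorm_mul A B).trans ((mul_le_mul hA hB (norm_nonneg _) zero_le_one).trans (one_mul r).le)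

lemma norm_mul_le_of_norm_le_one' {l m n : Type*} [Fintype l] [Fintype m] [DecidableEq m]
    [Fintype n] [DecidableEq n] {A : Matrix l m ℂ} {B : Matrix m n ℂ} {r : ℝ}
    (hA : ‖A‖ ≤ r) (hB : ‖B‖ ≤ 1) : ‖A * B‖ ≤ r :=
  (l2_opNorm_mul A B).trans
    ((mul_le_mul hA hB (norm_nonneg _) ((norm_nonneg _).trans hA)).trans (mul_one r).le)

lemma norm_conjTranspose_le_one [DecidableEq κ] (V : Frame ι κ) : ‖V.1ᴴ‖ ≤ 1 :=
  (l2_opNorm_conjTranspose V.1).trans_le V.norm_le_one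

variable [CompactSpace Y] {V : Frame ι κ} {f : C(Y, Matrix κ κ ℂ)} {ε : ℝ}

lemma norm_compress_sub_le {D : C(Y, Matrix ι ι ℂ)} (h0 : 0 ≤ ε)
    (h : ∀ y, ‖f y * V.1 - V.1 * D y‖ ≤ ε) : ‖compress V f - D‖ ≤ ε := by
  classical
  refine (ContinuousMap.norm_le _ h0).2 fun y => ?_
  have hfactor : (compress V f - D) y = V.1ᴴ * (f y * V.1 - V.1 * D y) := by
    rw [Matrix.mul_sub, ← Matrix.mul_assoc, ← Matrix.mul_assoc, V.2, Matrix.one_mul]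
    rfl
  exact hfactor ▸ norm_mul_le_of_norm_le_one (norm_conjTranspose_le_one V) (h y)

variable [DecidableEq κ]

lemma norm_rangeProj_le (V : Frame ι κ) : ‖rangeProj Y V‖ ≤ 1 :=
  (ContinuousMap.norm_le _ zero_le_one).2 fun _ =>
    norm_mul_le_of_norm_le_one V.norm_le_one (norm_conjTranspose_le_one V)

lemma norm_compress_le (V : Frame ι κ) (f : C(Y, Matrix κ κ ℂ)) : ‖compress V f‖ ≤ ‖f‖ :=
  (ContinuousMap.norm_le _ (norm_nonneg f)).2 fun y => norm_mul_le_of_norm_le_one'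
    (norm_mul_le_of_norm_le_one (norm_conjTranspose_le_one V) (f.norm_coe_le_norm y)) V.norm_le_one

lemma norm_compress_mul_sub_le (V : Frame ι κ) (f g : C(Y, Matrix κ κ ℂ)) :
    ‖compress V (f * g) - compress V f * compress V g‖
      ≤ ‖f * rangeProj Y V - rangeProj Y V * f‖ * ‖g‖ := by
  have hfactor (y : Y) : (compress V (f * g) - compress V f * compress V g) y
      = V.1ᴴ * ((rangeProj Y V * f - f * rangeProj Y V) y * g y) * V.1 := by
    have hV (A : Matrix ι κ ℂ) : V.1ᴴ * (V.1 * A) = A := by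
      rw [← Matrix.mul_assoc, V.2, Matrix.one_mul]
    simp only [ContinuousMap.sub_apply, ContinuousMap.mul_apply, compress_apply, rangeProj,
      ContinuousMap.const_apply, Matrix.sub_mul, Matrix.mul_sub, Matrix.mul_assoc, hV]
  refine (ContinuousMap.norm_le _ (by positivity)).2 fun y => ?_
  rw [hfactor, norm_sub_rev (f * _)]
  exact norm_mul_le_of_norm_le_one' (norm_mul_le_of_norm_le_one (norm_conjTranspose_le_one V)
    ((norm_mul_le _ _).trans (mul_le_mul (ContinuousMap.norm_coe_le_norm _ y)
      (g.norm_coe_le_norm y) (norm_nonneg _) (norm_nonneg _)))) V.norm_le_one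

lemma norm_commutator_rangeProj_le {D : Y → Matrix ι ι ℂ} (h0 : 0 ≤ ε)
    (h : ∀ y, ‖f y * V.1 - V.1 * D y‖ ≤ ε)
    (h' : ∀ y, ‖star f y * V.1 - V.1 * (D y)ᴴ‖ ≤ ε) :
    ‖f * rangeProj Y V - rangeProj Y V * f‖ ≤ 2 * ε := by
  refine (ContinuousMap.norm_le _ (by positivity)).2 fun y => ?_
  have hsplit : (f * rangeProj Y V - rangeProj Y V * f) y
      = (f y * V.1 - V.1 * D y) * V.1ᴴ - V.1 * ((star f y * V.1 - V.1 * (D y)ᴴ)ᴴ) := by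
    change f y * (V.1 * V.1ᴴ) - V.1 * V.1ᴴ * f y
      = _ - V.1 * (((f y)ᴴ * V.1 - V.1 * (D y)ᴴ)ᴴ)
    simp only [conjTranspose_sub, conjTranspose_mul, conjTranspose_conjTranspose, Matrix.sub_mul,
      Matrix.mul_sub, Matrix.mul_assoc]
    abel
  rw [hsplit, two_mul]
  refine (norm_sub_le _ _).trans (add_le_add
    (norm_mul_le_of_norm_le_one' (h y) (norm_conjTranspose_le_one V))
    (norm_mul_le_of_norm_le_one V.norm_le_one ?_))
  rw [l2_opNorm_conjTranspose]
  exact h' y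

end Compression

section AsymptoticCommutant

variable {A : Type*} [CStarAlgebra A] {B : ℕ → Type*} [∀ k, CStarAlgebra (B k)]
  (S : ∀ k, A →⋆ₐ[ℂ] B k) (p : ∀ k, B k)

lemma norm_commutator_mul_le (k : ℕ) (a b : A) :
    ‖S k (a * b) * p k - p k * S k (a * b)‖
      ≤ ‖a‖ * ‖S k b * p k - p k * S k b‖ + ‖S k a * p k - p k * S k a‖ * ‖b‖ := by
  rw [show S k (a * b) * p k - p k * S k (a * b)
    = S k a * (S k b * p k - p k * S k b) + (S k a * p k - p k * S k a) * S k b by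
      rw [map_mul]; noncomm_ring]
  refine norm_add_le_of_le ((norm_mul_le _ _).trans ?_) ((norm_mul_le _ _).trans ?_)
  · exact mul_le_mul_of_nonneg_right (NonUnitalStarAlgHom.norm_apply_le (S k) a) (norm_nonneg _)
  · exact mul_le_mul_of_nonneg_left (NonUnitalStarAlgHom.norm_apply_le (S k) b) (norm_nonneg _)

/-- The elements whose images under the representations `S k` asymptotically commute with the
self-adjoint elements `p k`. -/
def asymptoticCommutant (hp : ∀ k, IsSelfAdjoint (p k)) : StarSubalgebra ℂ A where
  carrier := {a | Tendsto (fun k => ‖S k a * p k - p k * S k a‖) atTop (𝓝 0)}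
  mul_mem' {a b} ha hb := squeeze_zero (fun k => norm_nonneg _)
    (fun k => norm_commutator_mul_le S p k a b)
    (by simpa using Tendsto.add (hb.const_mul ‖a‖) (ha.mul_const ‖b‖))
  add_mem' {a b} ha hb := squeeze_zero (fun k => norm_nonneg _)
    (fun k => (by rw [map_add, add_mul, mul_add, add_sub_add_comm]; exact norm_add_le _ _ :
      ‖S k (a + b) * p k - p k * S k (a + b)‖
        ≤ ‖S k a * p k - p k * S k a‖ + ‖S k b * p k - p k * S k b‖))
    (by simpa using Tendsto.add ha hb)
  algebraMap_mem' r := by simp [Algebra.commutes, AlgHomClass.commutes]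
  star_mem' {a} ha := by
    refine ha.congr fun k => ?_
    rw [← norm_star, star_sub, star_mul, star_mul, (hp k).star_eq, map_star, norm_sub_rev]

lemma isClosed_asymptoticCommutant (hp : ∀ k, IsSelfAdjoint (p k)) (hp1 : ∀ k, ‖p k‖ ≤ 1) :
    IsClosed (asymptoticCommutant S p hp : Set A) := by
  refine isClosed_of_closure_subset fun a ha => Metric.tendsto_nhds.2 fun ε hε => ?_
  obtain ⟨b, hb, hab⟩ := Metric.mem_closure_iff.1 ha (ε / 3) (by positivity)
  filter_upwards [(show Tendsto _ _ _ from hb).eventually_lt_const (show 0 < ε / 3 by positivity)]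
    with k hk
  have hdiff : ‖S k (a - b)‖ < ε / 3 :=
    (NonUnitalStarAlgHom.norm_apply_le (S k) _).trans_lt (by rwa [← dist_eq_norm])
  have hright : ‖S k (a - b) * p k‖ ≤ ‖S k (a - b)‖ :=
    (norm_mul_le _ _).trans (mul_le_of_le_one_right (norm_nonneg _) (hp1 k))
  have hleft : ‖p k * S k (a - b)‖ ≤ ‖S k (a - b)‖ :=
    (norm_mul_le _ _).trans (mul_le_of_le_one_left (norm_nonneg _) (hp1 k))
  have hsplit : S k a * p k - p k * S k a
      = S k (a - b) * p k - p k * S k (a - b) + (S k b * p k - p k * S k b) := by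
    rw [map_sub]; noncomm_ring
  rw [Real.dist_eq, sub_zero, abs_norm, hsplit]
  linarith [norm_add_le (S k (a - b) * p k - p k * S k (a - b)) (S k b * p k - p k * S k b),
    norm_sub_le (S k (a - b) * p k) (p k * S k (a - b))]

end AsymptoticCommutant

section Density

variable {ι X : Type*} [Fintype ι] [DecidableEq ι] [TopologicalSpace X]

/-- Scalar-valued functions as matrix-valued functions. -/
def scalarMap (ι X : Type*) [Fintype ι] [DecidableEq ι] [TopologicalSpace X] :
    C(X, ℂ) →⋆ₐ[ℂ] C(X, Matrix ι ι ℂ) :=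
  ContinuousMap.compStarAlgHom X (StarAlgHom.ofId ℂ (Matrix ι ι ℂ)) (algebraMapCLM ℂ _).continuous

lemma scalarMap_apply (h : C(X, ℂ)) (x : X) : scalarMap ι X h x = h x • (1 : Matrix ι ι ℂ) :=
  Algebra.algebraMap_eq_smul_one (h x)

lemma eq_top_of_separates [CompactSpace X] {S : StarSubalgebra ℂ C(X, Matrix ι ι ℂ)}
    (hS : IsClosed (S : Set C(X, Matrix ι ι ℂ))) (hconst : ∀ M, ContinuousMap.const X M ∈ S)
    (hsep : ∀ x y : X, x ≠ y → ∃ h : C(X, ℂ), scalarMap ι X h ∈ S ∧ h x ≠ h y) : S = ⊤ := by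
  have hscalar : S.comap (scalarMap ι X) = ⊤ := by
    have hcont : Continuous (scalarMap ι X) := by
      exact ContinuousMap.continuous_postcomp _
    rw [← ContinuousMap.starSubalgebra_topologicalClosure_eq_top_of_separatesPoints
      (S.comap (scalarMap ι X)) fun x y hxy => ?_]
    · exact (StarSubalgebra.topologicalClosure_minimal le_rfl (hS.preimage hcont)).antisymm'
        (StarSubalgebra.le_topologicalClosure _)
    · obtain ⟨h, hh, hne⟩ := hsep x y hxy
      exact ⟨h, ⟨h, hh, rfl⟩, hne⟩
  refine StarSubalgebra.eq_top_iff.2 fun f => ?_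
  have hentries : f = ∑ i, ∑ j, scalarMap ι X ⟨fun x => f x i j, by fun_prop⟩
      * ContinuousMap.const X (single i j 1) := by
    ext1 x
    simp only [ContinuousMap.sum_apply, ContinuousMap.mul_apply, scalarMap_apply,
      ContinuousMap.const_apply, ContinuousMap.coe_mk, smul_mul_assoc, _root_.one_mul, smul_single,
      smul_eq_mul, mul_one]
    exact matrix_eq_sum_single (f x)
  rw [hentries]
  exact sum_mem fun i _ => sum_mem fun j _ =>
    mul_mem (StarSubalgebra.eq_top_iff.1 hscalar _) (hconst _)

end Density

section CoherentStates

variable {ι Y : Type*} [Fintype ι] [DecidableEq ι] [TopologicalSpace Y] {N L : ℕ} [NeZero N]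

/-- The isometry formed by the coherent states on `ZMod N`: the translates in phase space of a
window of width `L`. -/
def coherentFrame (ι : Type*) [Fintype ι] [DecidableEq ι] (h0 : 0 < L) (hL : L ≤ N) :
    Frame (ι × ZMod N) (ι × ZMod N × ZMod N) :=
  ⟨phaseMatrix fun q j => (window N L (j - q) : ℂ) • 1, by
    have hsum (j : ZMod N) : ∑ q, ((window N L (j - q) : ℂ) • (1 : Matrix ι ι ℂ))ᴴ
        * ((window N L (j - q) : ℂ) • (1 : Matrix ι ι ℂ)) = 1 := by
      have hterm (w : ℝ) : ((w : ℂ) • (1 : Matrix ι ι ℂ))ᴴ * ((w : ℂ) • (1 : Matrix ι ι ℂ))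
          = (w ^ 2 : ℂ) • 1 := by
        rw [conjTranspose_smul, conjTranspose_one, Matrix.smul_mul, Matrix.one_mul, smul_smul,
          Complex.star_def, Complex.conj_ofReal, sq]
      simp only [hterm]
      rw [← Finset.sum_smul, show ∑ q, (window N L (j - q) : ℂ) ^ 2 = 1 by
        exact_mod_cast sum_window_sub_left_sq h0 hL j, one_smul]
    rw [conjTranspose_phaseMatrix_mul]
    simp only [hsum]
    exact blockDiagonal_one⟩

/-- The point of the torus with position `x.1` and momentum `x.2`, for every `y : Y`. -/
def phasePoint (Y : Type*) [TopologicalSpace Y] (x : ZMod N × ZMod N) :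
    C(Y, UnitAddCircle × Circle × Y) :=
  ⟨fun y => (ZMod.toAddCircle x.1, ZMod.toCircle x.2, y), by fun_prop⟩

/-- A function of the position, viewed as a function on phase space. -/
def positionMap {M : Type*} [TopologicalSpace M] (e : C(UnitAddCircle × Y, M)) :
    C(UnitAddCircle × Circle × Y, M) :=
  e.comp ⟨fun x => (x.1, x.2.2), by fun_prop⟩

/-- The block diagonal matrices whose blocks are the values of `e` at the sites of `ZMod N`. -/
def siteDiagonal (N : ℕ) [NeZero N] (e : C(UnitAddCircle × Y, Matrix ι ι ℂ)) :
    C(Y, Matrix (ι × ZMod N) (ι × ZMod N) ℂ) :=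
  sampling (fun j : ZMod N => ⟨fun y => (ZMod.toAddCircle j, y), by fun_prop⟩) e

/-- The function `exp (2πi p)` of the momentum `p`, viewed as a function on phase space. -/
def momentumMap (ι Y : Type*) [Fintype ι] [DecidableEq ι] [TopologicalSpace Y] :
    C(UnitAddCircle × Circle × Y, Matrix ι ι ℂ) :=
  scalarMap ι _ ⟨fun x => x.2.1, by fun_prop⟩

lemma norm_position_intertwining_le (h0 : 0 < L) (hL : L ≤ N)
    (e : C(UnitAddCircle × Y, Matrix ι ι ℂ)) (y : Y) {ε : ℝ} (hε : 0 ≤ ε)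
    (h : ∀ q j, window N L (j - q) ≠ 0 →
      ‖e (ZMod.toAddCircle q, y) - e (ZMod.toAddCircle j, y)‖ ≤ ε) :
    ‖sampling (phasePoint (N := N) Y) (positionMap e) y * (coherentFrame ι h0 hL).1
      - (coherentFrame ι h0 hL).1 * siteDiagonal N e y‖ ≤ ε := by
  have hdiff : sampling (phasePoint (N := N) Y) (positionMap e) y * (coherentFrame ι h0 hL).1
      - (coherentFrame ι h0 hL).1 * siteDiagonal N e y = phaseMatrix fun q j =>
        (window N L (j - q) : ℂ) • (e (ZMod.toAddCircle q, y) - e (ZMod.toAddCircle j, y)) := by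
    unfold coherentFrame
    rw [show sampling (phasePoint (N := N) Y) (positionMap e) y
        = blockDiagonal fun x : ZMod N × ZMod N => e (ZMod.toAddCircle x.1, y) from rfl,
      show siteDiagonal N e y = blockDiagonal fun j : ZMod N => e (ZMod.toAddCircle j, y) from rfl,
      blockDiagonal_mul_phaseMatrix fun q : ZMod N => e (ZMod.toAddCircle q, y),
      phaseMatrix_mul_blockDiagonal, phaseMatrix_sub]
    congr 1
    ext q j : 2
    rw [Pi.sub_apply, Pi.sub_apply, Matrix.mul_smul, Matrix.smul_mul, Matrix.mul_one,
      Matrix.one_mul, smul_sub]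
  rw [hdiff]
  refine norm_phaseMatrix_le hε fun j => ?_
  calc ∑ q, ‖(window N L (j - q) : ℂ) • (e (ZMod.toAddCircle q, y) - e (ZMod.toAddCircle j, y))‖ ^ 2
      ≤ ∑ q, window N L (j - q) ^ 2 * ε ^ 2 := Finset.sum_le_sum fun q _ => by
        rw [norm_smul, mul_pow, Complex.norm_real, Real.norm_eq_abs, sq_abs]
        rcases eq_or_ne (window N L (j - q)) 0 with hw | hw
        · simp [hw]
        · gcongr
          exact h q j hw
    _ = ε ^ 2 := by
        rw [← Finset.sum_mul, sum_window_sub_left_sq h0 hL, _root_.one_mul]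

lemma norm_momentum_intertwining_le (h0 : 0 < L) (hL : L ≤ N) {d : ZMod N}
    (hd : d = 1 ∨ d = -1) :
    ‖(blockDiagonal fun x : ZMod N × ZMod N =>
        (ZMod.toCircle (x.2 * d) : ℂ) • (1 : Matrix ι ι ℂ)) * (coherentFrame ι h0 hL).1
      - (coherentFrame ι h0 hL).1 * (shift ι d).1‖ ≤ √(2 / L) := by
  unfold coherentFrame
  rw [blockDiagonal_toCircle_mul_phaseMatrix, ← Matrix.sub_mul, phaseMatrix_sub]
  refine norm_mul_le_of_norm_le_one' (norm_phaseMatrix_le (Real.sqrt_nonneg _) fun j => ?_)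
    (shift ι d).norm_le_one
  rw [Real.sq_sqrt (by positivity)]
  refine (Finset.sum_le_sum fun q _ => ?_).trans (sum_window_translate_sub_sq_le h0 hL hd j)
  rw [Pi.sub_apply, Pi.sub_apply, ← sub_smul, norm_smul, mul_pow, ← Complex.ofReal_sub,
    Complex.norm_real, Real.norm_eq_abs, sq_abs]
  refine mul_le_of_le_one_right (sq_nonneg _) (pow_le_one₀ (norm_nonneg _) ?_)
  rw [← diagonal_one, l2_opNorm_diagonal]
  exact (pi_norm_le_iff_of_nonneg zero_le_one).2 fun i => norm_one.le

lemma sampling_momentumMap (y : Y) :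
    sampling (phasePoint (N := N) Y) (momentumMap ι Y) y
      = blockDiagonal fun x => (ZMod.toCircle (x.2 * 1) : ℂ) • (1 : Matrix ι ι ℂ) := by
  simp only [mul_one]
  exact congrArg blockDiagonal (funext fun x => scalarMap_apply _ (phasePoint Y x y))

lemma star_sampling_momentumMap (y : Y) :
    star (sampling (phasePoint (N := N) Y) (momentumMap ι Y)) y
      = blockDiagonal fun x => (ZMod.toCircle (x.2 * -1) : ℂ) • (1 : Matrix ι ι ℂ) := by
  rw [ContinuousMap.star_apply, sampling_momentumMap]
  refine (blockDiagonal_conjTranspose fun x : ZMod N × ZMod N =>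
    (ZMod.toCircle (x.2 * 1) : ℂ) • (1 : Matrix ι ι ℂ)).trans (congrArg _ (funext fun x => ?_))
  rw [conjTranspose_smul, conjTranspose_one, mul_one, mul_neg, mul_one, AddChar.map_neg_eq_inv,
    Circle.coe_inv_eq_conj]
  rfl

lemma conjTranspose_shift (d : ZMod N) : (shift ι d).1ᴴ = (shift ι (-d)).1 := by
  ext a b
  simp only [shift, Frame.ofInjective, conjTranspose_apply, submatrix_apply, id, one_apply,
    apply_ite star, star_one, star_zero, Prod.ext_iff]
  congr 1
  simp only [← sub_eq_add_neg, eq_sub_iff_add_eq, eq_comm]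

end CoherentStates

section Quantization

/-- The number of lattice sites in the `k`-th quantization of the torus. It is even, so that the
sites can be coloured alternatingly, and the windows of width `√(k + 1)` used for the coherent
states are wide, but short compared with the whole lattice. -/
abbrev latticeSize (k : ℕ) : ℕ := 2 * (k + 1)

lemma sqrt_succ_pos (k : ℕ) : 0 < Nat.sqrt (k + 1) := Nat.sqrt_pos.2 k.succ_pos

lemma sqrt_succ_le_latticeSize (k : ℕ) : Nat.sqrt (k + 1) ≤ latticeSize k :=
  (Nat.sqrt_le_self _).trans (Nat.le_mul_of_pos_left _ two_pos)

lemma tendsto_sqrt_succ : Tendsto (fun k => (Nat.sqrt (k + 1) : ℝ)) atTop atTop :=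
  tendsto_natCast_atTop_atTop.comp ((tendsto_atTop_atTop.2 fun b => ⟨b * b, fun _ ha =>
    Nat.le_sqrt.2 ha⟩).comp (tendsto_add_atTop_nat 1))

lemma tendsto_sqrt_succ_div_latticeSize :
    Tendsto (fun k => (Nat.sqrt (k + 1) : ℝ) / latticeSize k) atTop (𝓝 0) := by
  refine squeeze_zero (fun k => by positivity) (fun k => ?_)
    (tendsto_sqrt_succ.const_div_atTop 1)
  have hpos : (0 : ℝ) < Nat.sqrt (k + 1) := Nat.cast_pos.2 (sqrt_succ_pos k)
  have hsq : (Nat.sqrt (k + 1) : ℝ) * Nat.sqrt (k + 1) ≤ k + 1 := by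
    exact_mod_cast Nat.sqrt_le (k + 1)
  rw [div_le_div_iff₀ (by positivity) hpos]
  push_cast
  linarith

variable {ι Y : Type*} [Fintype ι] [DecidableEq ι] [TopologicalSpace Y]

lemma dist_toAddCircle_le_of_window {N L : ℕ} [NeZero N] {q j : ZMod N}
    (h : window N L (j - q) ≠ 0) :
    dist (ZMod.toAddCircle q) (ZMod.toAddCircle j) ≤ (L : ℝ) / N := by
  have hlt : (j - q).val < L := by
    by_contra hge
    exact h (if_neg hge)
  rw [dist_comm, dist_eq_norm, ← map_sub, ZMod.toAddCircle_apply]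
  refine QuotientAddGroup.norm_mk_le_norm.trans ?_
  rw [Real.norm_of_nonneg (by positivity)]
  gcongr

/-- The coherent states used for the `k`-th quantization of the torus. -/
def stageFrame (ι : Type*) [Fintype ι] [DecidableEq ι] (k : ℕ) :
    Frame (ι × ZMod (latticeSize k)) (ι × ZMod (latticeSize k) × ZMod (latticeSize k)) :=
  coherentFrame ι (sqrt_succ_pos k) (sqrt_succ_le_latticeSize k)

/-- Multiplication by a function on phase space. -/
def stageSampling (ι Y : Type*) [Fintype ι] [DecidableEq ι] [TopologicalSpace Y] (k : ℕ) :
    C(UnitAddCircle × Circle × Y, Matrix ι ι ℂ) →⋆ₐ[ℂ]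
      C(Y, Matrix (ι × ZMod (latticeSize k) × ZMod (latticeSize k))
        (ι × ZMod (latticeSize k) × ZMod (latticeSize k)) ℂ) :=
  sampling (phasePoint Y)

lemma norm_momentum_stage_le (k : ℕ) (y : Y) :
    ‖stageSampling ι Y k (momentumMap ι Y) y * (stageFrame ι k).1
      - (stageFrame ι k).1 * (shift ι 1).1‖ ≤ √(2 / Nat.sqrt (k + 1)) := by
  unfold stageSampling
  rw [sampling_momentumMap]
  exact norm_momentum_intertwining_le _ _ (.inl rfl)

/-- The algebra in which the `k`-th quantization of the torus takes values. -/
abbrev StageAlgebra (ι Y : Type*) [TopologicalSpace Y] (k : ℕ) : Type _ :=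
  C(Y, Matrix (ι × ZMod (latticeSize k)) (ι × ZMod (latticeSize k)) ℂ)

variable [CompactSpace Y]

lemma eventually_norm_sub_le_of_window (e : C(UnitAddCircle × Y, Matrix ι ι ℂ)) {ε : ℝ}
    (hε : 0 < ε) : ∀ᶠ k in atTop, ∀ y, ∀ q j : ZMod (latticeSize k),
      window (latticeSize k) (Nat.sqrt (k + 1)) (j - q) ≠ 0 →
        ‖e (ZMod.toAddCircle q, y) - e (ZMod.toAddCircle j, y)‖ ≤ ε := by
  obtain ⟨δ, hδ, he⟩ := Metric.uniformContinuous_iff.1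
    (CompactSpace.uniformContinuous_of_continuous e.curry.continuous) ε hε
  filter_upwards [tendsto_sqrt_succ_div_latticeSize.eventually_lt_const hδ] with k hk y q j hqj
  rw [← dist_eq_norm]
  exact (ContinuousMap.dist_apply_le_dist y).trans
    (he ((dist_toAddCircle_le_of_window hqj).trans_lt hk)).le

/-- The `k`-th quantization of a function on the torus, depending on a parameter in `Y`: the
associated Toeplitz operator. -/
def quantizeStage (k : ℕ) (f : C(UnitAddCircle × Circle × Y, Matrix ι ι ℂ)) :
    StageAlgebra ι Y k :=
  compress (stageFrame ι k) (stageSampling ι Y k f)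

lemma norm_quantizeStage_le (k : ℕ) (f : C(UnitAddCircle × Circle × Y, Matrix ι ι ℂ)) :
    ‖quantizeStage k f‖ ≤ ‖f‖ :=
  (norm_compress_le _ _).trans (norm_sampling_le _ f)

/-- The bounded sequence of all quantizations of a function. -/
def quantizeSeq (f : C(UnitAddCircle × Circle × Y, Matrix ι ι ℂ)) :
    lp (StageAlgebra ι Y) ⊤ :=
  ⟨fun k => quantizeStage k f, memℓp_infty ⟨‖f‖, by
    rintro _ ⟨k, rfl⟩
    exact norm_quantizeStage_le k f⟩⟩

lemma eventually_position_intertwining (e : C(UnitAddCircle × Y, Matrix ι ι ℂ)) {ε : ℝ}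
    (hε : 0 < ε) : ∀ᶠ k in atTop, ∀ y,
      ‖stageSampling ι Y k (positionMap e) y * (stageFrame ι k).1
        - (stageFrame ι k).1 * siteDiagonal (latticeSize k) e y‖ ≤ ε := by
  filter_upwards [eventually_norm_sub_le_of_window e hε] with k hk y
  exact norm_position_intertwining_le _ _ e y hε.le (hk y)

lemma tendsto_quantizeStage_position (e : C(UnitAddCircle × Y, Matrix ι ι ℂ)) :
    Tendsto (fun k => ‖quantizeStage k (positionMap e) - siteDiagonal (latticeSize k) e‖) atTop
      (𝓝 0) := by
  refine Metric.tendsto_nhds.2 fun ε hε => ?_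
  filter_upwards [eventually_position_intertwining e (half_pos hε)] with k hk
  rw [Real.dist_eq, sub_zero, abs_norm]
  exact (norm_compress_sub_le (half_pos hε).le hk).trans_lt (half_lt_self hε)

lemma tendsto_sqrt_two_div_sqrt_succ :
    Tendsto (fun k => √(2 / (Nat.sqrt (k + 1) : ℝ))) atTop (𝓝 0) := by
  have h := Real.continuous_sqrt.tendsto 0
  rw [Real.sqrt_zero] at h
  exact h.comp (tendsto_sqrt_succ.const_div_atTop 2)

lemma tendsto_quantizeStage_momentum :
    Tendsto (fun k => ‖quantizeStage k (momentumMap ι Y) - .const Y (shift ι 1).1‖) atTop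
      (𝓝 0) :=
  squeeze_zero (fun _ => norm_nonneg _)
    (fun k => norm_compress_sub_le (Real.sqrt_nonneg _) fun y => norm_momentum_stage_le k y)
    tendsto_sqrt_two_div_sqrt_succ

/-- The functions on the torus whose quantizations asymptotically commute with the projection to the
coherent states. -/
def phaseCommutant (ι Y : Type*) [Fintype ι] [DecidableEq ι] [TopologicalSpace Y]
    [CompactSpace Y] : StarSubalgebra ℂ C(UnitAddCircle × Circle × Y, Matrix ι ι ℂ) :=
  asymptoticCommutant (stageSampling ι Y) (fun k => rangeProj Y (stageFrame ι k))
    fun k => isSelfAdjoint_rangeProj (stageFrame ι k)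

lemma positionMap_mem_phaseCommutant (e : C(UnitAddCircle × Y, Matrix ι ι ℂ)) :
    positionMap e ∈ phaseCommutant ι Y := by
  refine Metric.tendsto_nhds.2 fun ε hε => ?_
  filter_upwards [eventually_position_intertwining e (show 0 < ε / 3 by positivity),
    eventually_position_intertwining (star e) (show 0 < ε / 3 by positivity)] with k hk hk'
  rw [Real.dist_eq, sub_zero, abs_norm]
  refine (norm_commutator_rangeProj_le (show 0 ≤ ε / 3 by positivity) hk fun y => ?_).trans_lt
    (by linarith)
  have hsample : star (stageSampling ι Y k (positionMap e))
      = stageSampling ι Y k (positionMap (star e)) :=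
    (map_star (stageSampling ι Y k) (positionMap e)).symm
  have hdiag : (siteDiagonal (latticeSize k) e y)ᴴ = siteDiagonal (latticeSize k) (star e) y :=
    (blockDiagonal_conjTranspose _)
  rw [hsample, hdiag]
  exact hk' y

lemma momentumMap_mem_phaseCommutant : momentumMap ι Y ∈ phaseCommutant ι Y := by
  refine squeeze_zero (fun _ => norm_nonneg _) (fun k => norm_commutator_rangeProj_le
    (Real.sqrt_nonneg _) (norm_momentum_stage_le k) fun y => ?_)
    (by simpa using tendsto_sqrt_two_div_sqrt_succ.const_mul 2)
  unfold stageSampling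
  rw [star_sampling_momentumMap, conjTranspose_shift]
  exact norm_momentum_intertwining_le _ _ (.inr rfl)

lemma phaseCommutant_eq_top [T2Space Y] : phaseCommutant ι Y = ⊤ := by
  refine eq_top_of_separates (isClosed_asymptoticCommutant _ _ _ fun k => norm_rangeProj_le _)
    (fun M => positionMap_mem_phaseCommutant (.const _ M)) fun x x' hne => ?_
  by_cases hpos : (x.1, x.2.2) = (x'.1, x'.2.2)
  · refine ⟨⟨fun x => x.2.1, by fun_prop⟩, momentumMap_mem_phaseCommutant, fun h => hne ?_⟩
    rw [Prod.mk.injEq] at hpos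
    exact Prod.ext hpos.1 (Prod.ext (Subtype.ext h) hpos.2)
  · obtain ⟨h, hh, hne'⟩ := separatesPoints_continuous_of_t35Space hpos
    have hcont : Continuous fun x => (h x : ℂ) :=
      Complex.continuous_ofReal.comp (show Continuous h from hh)
    refine ⟨⟨fun x => h (x.1, x.2.2), hcont.comp (by fun_prop)⟩,
      positionMap_mem_phaseCommutant (scalarMap ι _ ⟨fun x => h x, hcont⟩), ?_⟩
    simpa using hne'

lemma tendsto_quantizeStage_mul [T2Space Y]
    (f g : C(UnitAddCircle × Circle × Y, Matrix ι ι ℂ)) :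
    Tendsto (fun k => ‖quantizeStage k (f * g) - quantizeStage k f * quantizeStage k g‖) atTop
      (𝓝 0) := by
  have hf : f ∈ phaseCommutant ι Y := by
    rw [phaseCommutant_eq_top]
    trivial
  have hcomm : Tendsto (fun k => ‖stageSampling ι Y k f * rangeProj Y (stageFrame ι k)
      - rangeProj Y (stageFrame ι k) * stageSampling ι Y k f‖ * ‖g‖) atTop (𝓝 0) := by
    simpa only [zero_mul] using Tendsto.mul_const ‖g‖ hf
  refine squeeze_zero (fun _ => norm_nonneg _) (fun k => ?_) hcomm
  unfold quantizeStage
  rw [map_mul]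
  exact (norm_compress_mul_sub_le _ _ _).trans
    (mul_le_mul_of_nonneg_left (norm_sampling_le _ g) (norm_nonneg _))

/-- The quantization of the torus as a ring homomorphism, with a parameter in `Y`. -/
def quantize (ι Y : Type*) [Fintype ι] [DecidableEq ι] [Nonempty ι] [TopologicalSpace Y]
    [CompactSpace Y] [T2Space Y] [Nonempty Y] :
    C(UnitAddCircle × Circle × Y, Matrix ι ι ℂ) →+* AsymptoticRing (StageAlgebra ι Y) where
  toFun f := .mk (quantizeSeq f)
  map_one' := congrArg AsymptoticRing.mk (Subtype.ext (funext fun k =>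
    (congrArg _ (map_one (stageSampling ι Y k))).trans (compress_one _)))
  map_mul' f g := by
    rw [← map_mul, AsymptoticRing.mk_eq_mk]
    exact tendsto_quantizeStage_mul f g
  map_zero' := congrArg AsymptoticRing.mk (Subtype.ext (funext fun k =>
    (congrArg _ (map_zero (stageSampling ι Y k))).trans (map_zero _)))
  map_add' f g := congrArg AsymptoticRing.mk (Subtype.ext (funext fun k =>
    (congrArg _ (map_add (stageSampling ι Y k) f g)).trans (map_add _ _ _)))

end Quantization

section OpenSubgroup

variable {X G : Type*} [TopologicalSpace X] [LocallyCompactSpace X] [TopologicalSpace G] [Group G]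
  [IsTopologicalGroup G]

lemma mem_iff_of_homotopic {H : Subgroup C(X, G)} (hH : IsOpen (H : Set C(X, G))) {a b : C(X, G)}
    (h : a.Homotopic b) : a ∈ H ↔ b ∈ H := by
  obtain ⟨F⟩ := h
  have hclopen : IsClopen (F.curry ⁻¹' (H : Set C(X, G))) :=
    (OpenSubgroup.isClopen ⟨H, hH⟩).preimage F.curry.continuous
  have h0 : F.curry 0 = a := ContinuousMap.ext F.map_zero_left
  have h1 : F.curry 1 = b := ContinuousMap.ext F.map_one_left
  rcases isClopen_iff.1 hclopen with hempty | huniv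
  · exact iff_of_false (fun ha => hempty.le (show F.curry 0 ∈ H by rwa [h0]))
      fun hb => hempty.le (show F.curry 1 ∈ H by rwa [h1])
  · exact iff_of_true (h0 ▸ huniv.ge (Set.mem_univ 0)) (h1 ▸ huniv.ge (Set.mem_univ 1))

end OpenSubgroup

section Units

variable {X R : Type*} [TopologicalSpace X] [Monoid R] [TopologicalSpace R] [ContinuousMul R]

/-- Continuous maps into the group of units are the units among the continuous maps. -/
def unitsMulEquiv : C(X, Rˣ) ≃* C(X, R)ˣ :=
  { ContinuousMap.unitsLift with map_mul' := fun _ _ => Units.ext (ContinuousMap.ext fun _ => rfl) }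

lemma coe_unitsMulEquiv_apply (f : C(X, Rˣ)) (x : X) : (unitsMulEquiv f : C(X, R)) x = f x := rfl

lemma coe_unitsMulEquiv_symm_apply (f : C(X, R)ˣ) (x : X) :
    (unitsMulEquiv.symm f x : R) = (f : C(X, R)) x := rfl

lemma continuous_coe_unitsMulEquiv :
    Continuous fun f : C(X, Rˣ) => (unitsMulEquiv f : C(X, R)) :=
  ContinuousMap.continuous_postcomp ⟨Units.val, Units.continuous_val⟩

lemma coe_unitsMulEquiv_comp {Y : Type*} [TopologicalSpace Y] (f : C(X, Rˣ)) (g : C(Y, X)) :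
    (unitsMulEquiv (f.comp g) : C(Y, R)) = (unitsMulEquiv f : C(X, R)).comp g := rfl

end Units

section QuantizedEven

variable {ι Y : Type} [Fintype ι] [DecidableEq ι] [TopologicalSpace Y] [CompactSpace Y]

/-- The units of a stage of the quantization which are stably even. -/
def stageStablyEven (ι Y : Type) [Fintype ι] [DecidableEq ι] [TopologicalSpace Y] (k : ℕ) :
    Subgroup (StageAlgebra ι Y k)ˣ :=
  (stablyEven (ι × ZMod (latticeSize k)) Y).comap unitsMulEquiv.symm.toMonoidHom

lemma mem_stageStablyEven_of_norm_sub_one_lt (k : ℕ) (v : (StageAlgebra ι Y k)ˣ)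
    (hv : ‖(v : StageAlgebra ι Y k) - 1‖ < 1) : v ∈ stageStablyEven ι Y k :=
  mem_stablyEven_of_norm_sub_one_lt fun y => (ContinuousMap.norm_coe_le_norm _ y).trans_lt hv

lemma norm_quantizeStage_sub_one_le (k : ℕ)
    (f : C(UnitAddCircle × Circle × Y, Matrix ι ι ℂ)) :
    ‖quantizeStage k f - 1‖ ≤ ‖f - 1‖ := by
  have hsub : quantizeStage k f - 1 = quantizeStage k (f - 1) := by
    unfold quantizeStage
    rw [map_sub, map_one, map_sub, compress_one]
  exact hsub ▸ norm_quantizeStage_le k _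

variable [Nonempty ι] [T2Space Y] [Nonempty Y]

/-- The invertible functions on the torus whose quantizations are eventually stably even. Since the
quantization realizes Bott periodicity, these represent the classes in `K⁻¹(T² × Y)` whose component
in `K⁻¹(Y)` is divisible by two. -/
def quantizedEven (ι Y : Type) [Fintype ι] [DecidableEq ι] [Nonempty ι] [TopologicalSpace Y]
    [CompactSpace Y] [T2Space Y] [Nonempty Y] : Subgroup C(UnitAddCircle × Circle × Y, GL ι ℂ) :=
  (AsymptoticRing.eventuallyIn (stageStablyEven ι Y) mem_stageStablyEven_of_norm_sub_one_lt).comap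
    ((Units.map (quantize ι Y).toMonoidHom).comp unitsMulEquiv.toMonoidHom)

lemma mem_quantizedEven_iff {f : C(UnitAddCircle × Circle × Y, GL ι ℂ)} :
    f ∈ quantizedEven ι Y ↔ Units.map (quantize ι Y).toMonoidHom (unitsMulEquiv f) ∈
      AsymptoticRing.eventuallyIn (stageStablyEven ι Y) mem_stageStablyEven_of_norm_sub_one_lt :=
  Iff.rfl

lemma mul_self_mem_eventuallyIn_stageStablyEven (u : (AsymptoticRing (StageAlgebra ι Y))ˣ) :
    u * u ∈ AsymptoticRing.eventuallyIn (stageStablyEven ι Y)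
      mem_stageStablyEven_of_norm_sub_one_lt :=
  AsymptoticRing.mul_self_mem_eventuallyIn (fun k v => by
    have h := mul_self_mem_stablyEven (unitsMulEquiv.symm v)
    rwa [← map_mul] at h) u

lemma mul_self_mem_quantizedEven (f : C(UnitAddCircle × Circle × Y, GL ι ℂ)) :
    f * f ∈ quantizedEven ι Y := by
  rw [mem_quantizedEven_iff, map_mul, map_mul]
  exact mul_self_mem_eventuallyIn_stageStablyEven _

lemma isOpen_quantizedEven :
    IsOpen (quantizedEven ι Y : Set C(UnitAddCircle × Circle × Y, GL ι ℂ)) := by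
  refine Subgroup.isOpen_of_mem_nhds _ (g := 1) ?_
  have hball : (fun f : C(UnitAddCircle × Circle × Y, GL ι ℂ) =>
      (unitsMulEquiv f : C(UnitAddCircle × Circle × Y, Matrix ι ι ℂ))) ⁻¹' Metric.ball 1 1 ∈ 𝓝 1 :=
    continuous_coe_unitsMulEquiv.continuousAt.preimage_mem_nhds
      (by rw [map_one, Units.val_one]; exact Metric.ball_mem_nhds _ one_pos)
  filter_upwards [hball] with f hf
  refine mem_quantizedEven_iff.2 ((AsymptoticRing.mem_eventuallyIn_iff rfl).2
    (.of_forall fun k => ?_))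
  have hnorm := (norm_quantizeStage_sub_one_le k (unitsMulEquiv f).val).trans_lt
    (mem_ball_iff_norm.1 hf)
  obtain ⟨v, hv⟩ := isUnit_of_norm_sub_one_lt hnorm
  exact ⟨v, mem_stageStablyEven_of_norm_sub_one_lt k v (hv ▸ hnorm), hv⟩

end QuantizedEven

section Corner

variable {R : Type*} [Ring R] {p : R}

lemma corner_mul_corner (hp : IsIdempotentElem p) {a : R} (ha : Commute a p) (b : R) :
    (p * a + (1 - p)) * (p * b + (1 - p)) = p * (a * b) + (1 - p) := by
  linear_combination (norm := noncomm_ring) p * ha.eq * b + hp.eq * a * b - p * ha.eq - hp.eq * a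
    - hp.eq * b + hp.eq

/-- The unit which acts as `t` on the corner of the idempotent `p` and trivially on the corner of
`1 - p`. -/
def cornerUnit (hp : IsIdempotentElem p) (t : Rˣ) (ht : Commute (t : R) p) : Rˣ where
  val := p * t + (1 - p)
  inv := p * (t⁻¹ : Rˣ) + (1 - p)
  val_inv := by rw [corner_mul_corner hp ht, t.mul_inv, mul_one, add_sub_cancel]
  inv_val := by
    rw [corner_mul_corner hp ht.units_inv_left, t.inv_mul, mul_one, add_sub_cancel]

lemma cornerUnit_mul_cornerUnit_one_sub (hp : IsIdempotentElem p) {t : Rˣ}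
    (ht : Commute (t : R) p) (ht' : Commute (t : R) (1 - p)) :
    cornerUnit hp t ht * cornerUnit hp.one_sub t ht' = t := by
  ext1
  change (p * t + (1 - p)) * ((1 - p) * t + (1 - (1 - p))) = t
  linear_combination (norm := noncomm_ring) p * ht.eq - p * ht.eq * t
    - hp.eq * t * t + 2 * (hp.eq * t) - hp.eq

lemma conj_cornerUnit (hp : IsIdempotentElem p) {t u : Rˣ} (ht : Commute (t : R) p)
    (ht' : Commute (t : R) (1 - p)) (htu : Commute t u) (hup : u * p = (1 - p) * u) :
    u * cornerUnit hp t ht * u⁻¹ = cornerUnit hp.one_sub t ht' := by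
  rw [mul_inv_eq_iff_eq_mul]
  ext1
  change (u : R) * (p * t + (1 - p)) = ((1 - p) * t + (1 - (1 - p))) * u
  have htu' : (t : R) * u = u * t := congrArg Units.val htu.eq
  linear_combination (norm := noncomm_ring) hup * t - hup - (1 - p) * htu'

lemma isIdempotentElem_half_one_add {h e : R} (hh : 2 * h = 1) (he : e * e = 1)
    (hhe : Commute h e) : IsIdempotentElem (h * (1 + e)) := by
  change h * (1 + e) * (h * (1 + e)) = h * (1 + e)
  linear_combination (norm := noncomm_ring) h * h * he + hh * h - h * hhe.eq * (1 + e) + hh * h * e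

end Corner

section Parity

/-- A map is even if it does not change when its circle variable is replaced by the antipode. -/
def CircleEven {A Y Z : Type*} [TopologicalSpace A] [TopologicalSpace Y] [TopologicalSpace Z]
    (f : C(A × Circle × Y, Z)) : Prop :=
  ∀ a z y, f (a, -z, y) = f (a, z, y)

lemma mem_of_commute_of_anticommute {R : Type*} [Ring R] (h2 : IsUnit (2 : R)) {H : Subgroup Rˣ}
    (hH : ∀ v, v * v ∈ H) {e : R} {u t : Rˣ} (he : e * e = 1) (heu : e * u = -(u * e))
    (hte : Commute (t : R) e) (htu : Commute t u) : t ∈ H := by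
  obtain ⟨w, hw⟩ := h2
  have hcentral (x : R) : Commute (w⁻¹ : Rˣ).val x :=
    (show Commute (w : R) x from hw ▸ Commute.ofNat_left 2 x).units_inv_left
  have hp := isIdempotentElem_half_one_add (hw ▸ w.mul_inv) he (hcentral e)
  have htp : Commute (t : R) ((w⁻¹ : Rˣ) * (1 + e)) :=
    (hcentral t).symm.mul_right ((Commute.one_right _).add_right hte)
  have htp' := (Commute.one_right (t : R)).sub_right htp
  have hup : u * ((w⁻¹ : Rˣ) * (1 + e)) = (1 - (w⁻¹ : Rˣ) * (1 + e)) * u := by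
    have hw2 : 2 * (w⁻¹ : Rˣ).val = 1 := hw ▸ w.mul_inv
    have hwu := (hcentral u).eq
    linear_combination (norm := noncomm_ring) hw2 * u + (w⁻¹ : Rˣ).val * heu - hwu - hwu * e
  rw [← cornerUnit_mul_cornerUnit_one_sub hp htp htp', ← conj_cornerUnit hp htp htp' htu hup]
  exact mul_conj_mem_of_mul_self_mem hH _ _

end Parity

section Alternation

/-- The class of `k + 1` in `ZMod (2 * (k + 1))`, the element of order two. -/
def halfPeriod (k : ℕ) : ZMod (latticeSize k) := (k + 1 : ℕ)

lemma halfPeriod_add_self (k : ℕ) : halfPeriod k + halfPeriod k = 0 := by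
  rw [halfPeriod, ← Nat.cast_add, ← two_mul]
  exact ZMod.natCast_self _

lemma toCircle_halfPeriod (k : ℕ) : ZMod.toCircle (halfPeriod k) = -1 := by
  ext1
  rw [halfPeriod, ZMod.toCircle_natCast, latticeSize]
  push_cast
  rw [show 2 * Real.pi * Complex.I * ((k : ℂ) + 1) / (2 * ((k : ℂ) + 1)) = Real.pi * Complex.I by
    field_simp, Complex.exp_pi_mul_I]

lemma toCircle_add_halfPeriod {k : ℕ} (p : ZMod (latticeSize k)) :
    ZMod.toCircle (p + halfPeriod k) = -ZMod.toCircle p := by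
  rw [AddChar.map_add_eq_mul, toCircle_halfPeriod, mul_neg_one]

lemma toCircle_halfPeriod_mul_mul_self {k : ℕ} (j : ZMod (latticeSize k)) :
    (ZMod.toCircle (halfPeriod k * j) : ℂ) * ZMod.toCircle (halfPeriod k * j) = 1 := by
  rw [← Circle.coe_mul, ← AddChar.map_add_eq_mul, ← add_mul, halfPeriod_add_self, zero_mul,
    AddChar.map_zero_eq_one, Circle.coe_one]

variable {ι Y : Type*}

/-- The diagonal matrix with alternating signs along the sites of the lattice. -/
def alternation (ι : Type*) [DecidableEq ι] (k : ℕ) :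
    Matrix (ι × ZMod (latticeSize k)) (ι × ZMod (latticeSize k)) ℂ :=
  diagonal fun b => ZMod.toCircle (halfPeriod k * b.2)

lemma alternation_mul_self [Fintype ι] [DecidableEq ι] (k : ℕ) :
    alternation ι k * alternation ι k = 1 := by
  rw [alternation, diagonal_mul_diagonal, ← diagonal_one]
  congr 1
  ext1 b
  exact toCircle_halfPeriod_mul_mul_self b.2

lemma conjTranspose_alternation [DecidableEq ι] (k : ℕ) : (alternation ι k)ᴴ = alternation ι k := by
  rw [alternation, diagonal_conjTranspose]
  congr 1
  ext1 b
  exact (Circle.coe_inv_eq_conj _).symm.trans (by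
    rw [Circle.coe_inv, inv_eq_of_mul_eq_one_left (toCircle_halfPeriod_mul_mul_self b.2)])

/-- Reversal of the circle variable. -/
def antipode (A Y : Type*) [TopologicalSpace A] [TopologicalSpace Y] :
    C(A × Circle × Y, A × Circle × Y) :=
  ⟨fun x => (x.1, -x.2.1, x.2.2), by fun_prop⟩

variable [Fintype ι] [DecidableEq ι]

/-- Translation of the momentum by half a period. -/
def momentumTranslation (ι : Type*) (k : ℕ) :
    ι × ZMod (latticeSize k) × ZMod (latticeSize k) ≃
      ι × ZMod (latticeSize k) × ZMod (latticeSize k) :=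
  Equiv.prodCongr (.refl _) (.prodCongr (.refl _) (.addRight (halfPeriod k)))

lemma stageFrame_eq_submatrix (k : ℕ) : (stageFrame ι k).1
    = ((stageFrame ι k).1 * alternation ι k).submatrix (momentumTranslation ι k) id := by
  ext a b
  have hχ : (ZMod.toCircle ((a.2.2 + halfPeriod k) * b.2) : ℂ)
      * ZMod.toCircle (halfPeriod k * b.2) = ZMod.toCircle (a.2.2 * b.2) := by
    rw [add_mul, AddChar.map_add_eq_mul, Circle.coe_mul, _root_.mul_assoc,
      toCircle_halfPeriod_mul_mul_self, mul_one]
  rw [submatrix_apply, id, alternation, mul_diagonal]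
  simp only [stageFrame, coherentFrame, phaseMatrix, of_apply, momentumTranslation,
    Equiv.prodCongr_apply, Prod.map, Equiv.refl_apply, Equiv.coe_addRight]
  rw [← hχ]
  ring

variable [TopologicalSpace Y]

lemma stageSampling_comp_antipode (k : ℕ) (f : C(UnitAddCircle × Circle × Y, Matrix ι ι ℂ))
    (y : Y) : stageSampling ι Y k (f.comp (antipode _ _)) y
      = (stageSampling ι Y k f y).submatrix (momentumTranslation ι k)
          (momentumTranslation ι k) := by
  ext a b
  simp only [stageSampling, sampling_apply, submatrix_apply, blockDiagonal_apply, phasePoint,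
    momentumTranslation, antipode, Equiv.prodCongr_apply, Prod.map, Equiv.refl_apply,
    Equiv.coe_addRight, ContinuousMap.comp_apply, ContinuousMap.coe_mk, toCircle_add_halfPeriod,
    Prod.ext_iff, add_left_inj]

lemma quantizeStage_comp_antipode (k : ℕ) (f : C(UnitAddCircle × Circle × Y, Matrix ι ι ℂ)) :
    quantizeStage k (f.comp (antipode _ _))
      = .const Y (alternation ι k) * quantizeStage k f * .const Y (alternation ι k) := by
  ext1 y
  change (stageFrame ι k).1ᴴ * stageSampling ι Y k (f.comp (antipode _ _)) y * (stageFrame ι k).1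
    = alternation ι k * ((stageFrame ι k).1ᴴ * stageSampling ι Y k f y * (stageFrame ι k).1)
      * alternation ι k
  rw [stageSampling_comp_antipode]
  nth_rw 1 2 [stageFrame_eq_submatrix]
  rw [conjTranspose_submatrix, submatrix_mul_equiv, submatrix_mul_equiv, conjTranspose_mul,
    conjTranspose_alternation, submatrix_id_id]
  simp only [Matrix.mul_assoc]

end Alternation

section EvenMaps

variable {ι Y : Type*} [Fintype ι] [DecidableEq ι] [TopologicalSpace Y]

lemma isUnit_momentumMap : IsUnit (momentumMap ι Y) := by
  have h : (⟨fun x => x.2.1, by fun_prop⟩ : C(UnitAddCircle × Circle × Y, ℂ))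
      * ⟨fun x => (x.2.1⁻¹ : Circle), by fun_prop⟩ = 1 := by
    ext1 x
    exact (Circle.coe_mul _ _).symm.trans (by rw [mul_inv_cancel, Circle.coe_one]; rfl)
  exact (IsUnit.of_mul_eq_one _ h).map (scalarMap ι _)

lemma momentumMap_comp_antipode : (momentumMap ι Y).comp (antipode _ _) = -momentumMap ι Y := by
  ext1 x
  rw [ContinuousMap.comp_apply, ContinuousMap.neg_apply, momentumMap, scalarMap_apply,
    scalarMap_apply, ← neg_smul]
  rfl

lemma commute_momentumMap (f : C(UnitAddCircle × Circle × Y, Matrix ι ι ℂ)) :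
    Commute f (momentumMap ι Y) := by
  ext1 x
  rw [ContinuousMap.mul_apply, ContinuousMap.mul_apply, momentumMap, scalarMap_apply,
    mul_smul_one, smul_one_mul]

variable [CompactSpace Y]

/-- The sequence of the alternating signs on the lattices. -/
def alternationSeq (ι Y : Type*) [Fintype ι] [DecidableEq ι] [TopologicalSpace Y]
    [CompactSpace Y] : lp (StageAlgebra ι Y) ⊤ :=
  ⟨fun k => .const Y (alternation ι k), memℓp_infty ⟨1, by
    rintro _ ⟨k, rfl⟩
    exact (ContinuousMap.norm_le _ zero_le_one).2 fun _ => Frame.norm_le_one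
      ⟨alternation ι k, by rw [conjTranspose_alternation, alternation_mul_self]⟩⟩⟩

lemma quantizeSeq_comp_antipode (f : C(UnitAddCircle × Circle × Y, Matrix ι ι ℂ)) :
    quantizeSeq (f.comp (antipode _ _))
      = alternationSeq ι Y * quantizeSeq f * alternationSeq ι Y :=
  Subtype.ext (funext fun k => quantizeStage_comp_antipode k f)

variable [Nonempty ι] [Nonempty Y]

lemma alternationSeq_mul_self : alternationSeq ι Y * alternationSeq ι Y = 1 :=
  Subtype.ext (funext fun k => ContinuousMap.ext fun _ => alternation_mul_self k)

variable [T2Space Y]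

lemma alternationSeq_mul_quantize {f g : C(UnitAddCircle × Circle × Y, Matrix ι ι ℂ)}
    (h : f.comp (antipode _ _) = g) :
    .mk (alternationSeq ι Y) * quantize ι Y f = quantize ι Y g * .mk (alternationSeq ι Y) := by
  have hg : quantize ι Y g = .mk (alternationSeq ι Y * quantizeSeq f * alternationSeq ι Y) := by
    rw [← h, ← quantizeSeq_comp_antipode]
    rfl
  rw [hg, map_mul, map_mul, _root_.mul_assoc _ _ (AsymptoticRing.mk (alternationSeq ι Y)),
    ← map_mul, ← map_mul, alternationSeq_mul_self, map_mul, map_one, mul_one]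
  rfl

end EvenMaps

lemma mem_quantizedEven_of_circleEven {ι Y : Type} [Fintype ι] [DecidableEq ι] [Nonempty ι]
    [TopologicalSpace Y] [CompactSpace Y] [T2Space Y] [Nonempty Y]
    {f : C(UnitAddCircle × Circle × Y, GL ι ℂ)} (hf : CircleEven f) : f ∈ quantizedEven ι Y := by
  have h2 : IsUnit (2 : C(UnitAddCircle × Circle × Y, Matrix ι ι ℂ)) := by
    have h := (two_ne_zero' ℂ).isUnit.map
      (algebraMap ℂ C(UnitAddCircle × Circle × Y, Matrix ι ι ℂ))
    rwa [map_ofNat] at h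
  have hfa : (unitsMulEquiv f).val.comp (antipode _ _) = (unitsMulEquiv f).val := by
    rw [← coe_unitsMulEquiv_comp, show f.comp (antipode _ _) = f from
      ContinuousMap.ext fun x => hf x.1 x.2.1 x.2.2]
  refine mem_quantizedEven_iff.2 (mem_of_commute_of_anticommute (e := .mk (alternationSeq ι Y))
    (u := Units.map (quantize ι Y).toMonoidHom isUnit_momentumMap.unit)
    (by simpa only [map_ofNat] using h2.map (quantize ι Y))
    mul_self_mem_eventuallyIn_stageStablyEven
    (by rw [← map_mul, alternationSeq_mul_self, map_one]) ?_
    (alternationSeq_mul_quantize hfa).symm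
    (((commute_momentumMap (unitsMulEquiv f).val).map (quantize ι Y)).units_of_val))
  exact (alternationSeq_mul_quantize momentumMap_comp_antipode).trans
    (by rw [map_neg, neg_mul]; rfl)

section Loop

variable {V Z : Type*} [TopologicalSpace V] [TopologicalSpace Z]

lemma exists_coe_unitInterval_eq (s : UnitAddCircle) : ∃ t : I, ((t : ℝ) : UnitAddCircle) = s := by
  obtain ⟨t, ht, rfl⟩ : s ∈ ((↑) : ℝ → UnitAddCircle) '' Set.Icc 0 (0 + 1) :=
    (AddCircle.coe_image_Icc_eq 1 0).ge (Set.mem_univ s)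
  exact ⟨⟨t, ht.1, ht.2.trans_eq (zero_add 1)⟩, rfl⟩

lemma exists_loop_of_eq [LocallyCompactSpace V] (g : C(I × V, Z))
    (hg : ∀ v, g (0, v) = g (1, v)) :
    ∃ f : C(UnitAddCircle × V, Z), ∀ (t : I) v, f ((t : ℝ), v) = g (t, v) := by
  let G : ℝ → C(V, Z) := Set.IccExtend zero_le_one g.curry
  have hG (t : I) : G t = g.curry t := Set.IccExtend_val _ _ t
  have hG01 : G 0 = G 1 :=
    (hG 0).trans ((ContinuousMap.ext hg : g.curry 0 = g.curry 1).trans (hG 1).symm)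
  let f : C(UnitAddCircle, C(V, Z)) := ⟨AddCircle.liftIco 1 0 G,
    AddCircle.liftIco_zero_continuous hG01 g.curry.continuous.Icc_extend'.continuousOn⟩
  have hf (t : I) : f (t : ℝ) = G t := by
    obtain ht | ht := t.2.2.lt_or_eq
    · exact AddCircle.liftIco_zero_coe_apply (f := G) ⟨t.2.1, ht⟩
    · rw [ht, ← hG01, ← AddCircle.liftIco_zero_coe_apply (f := G)
        ⟨le_rfl, zero_lt_one' ℝ⟩, AddCircle.coe_period, ← QuotientAddGroup.mk_zero]
      rfl
  exact ⟨f.uncurry, fun t v => by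
    rw [ContinuousMap.uncurry_apply, Function.uncurry, hf, hG]; rfl⟩

end Loop

section QuasiEven

variable {ι Y : Type} [Fintype ι] [DecidableEq ι] [Nonempty ι] [TopologicalSpace Y] [CompactSpace Y]
  [T2Space Y] [Nonempty Y]

/-- A path of maps on `Circle × Y` which becomes even in the circle variable after removing a based
loop whose quantization is stably even. -/
def QuasiEven (g : C(I × Circle × Y, GL ι ℂ)) : Prop :=
  ∃ f ∈ quantizedEven ι Y, ∃ d, CircleEven d ∧ (∀ x, f (0, x) = 1) ∧
    ∀ t x, g (t, x) = f ((t : ℝ), x) * d (t, x)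

lemma CircleEven.quasiEven {g : C(I × Circle × Y, GL ι ℂ)} (hg : CircleEven g) : QuasiEven g :=
  ⟨1, one_mem _, g, hg, fun _ => rfl, fun _ _ => (one_mul _).symm⟩

lemma QuasiEven.mem_quantizedEven {g d : C(I × Circle × Y, GL ι ℂ)} (hg : QuasiEven g)
    (hd : CircleEven d) {f : C(UnitAddCircle × Circle × Y, GL ι ℂ)}
    (hf : ∀ (t : I) x, f ((t : ℝ), x) * d (t, x) = g (t, x)) : f ∈ quantizedEven ι Y := by
  obtain ⟨f', hf', d', hd', -, hfd⟩ := hg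
  have hquot (t : I) (x : Circle × Y) :
      (f'⁻¹ * f) ((t : ℝ), x) = d' (t, x) * (d (t, x))⁻¹ := by
    rw [ContinuousMap.mul_apply, ContinuousMap.inv_apply, inv_mul_eq_iff_eq_mul,
      ← _root_.mul_assoc, ← hfd, ← hf, mul_inv_cancel_right]
  have heven : CircleEven (f'⁻¹ * f) := fun s z y => by
    obtain ⟨t, rfl⟩ := exists_coe_unitInterval_eq s
    rw [hquot, hquot, hd, hd']
  exact (Subgroup.mul_mem_cancel_left _ (inv_mem hf')).1 (mem_quantizedEven_of_circleEven heven)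

lemma QuasiEven.of_homotopy {F : C(I × I × Circle × Y, GL ι ℂ)}
    (h0 : ∀ r z y, F (r, 0, -z, y) = F (r, 0, z, y))
    (h1 : ∀ r z y, F (r, 1, -z, y) = F (r, 1, z, y)) (h : QuasiEven (F.curry 0)) :
    QuasiEven (F.curry 1) := by
  obtain ⟨f, hf, d, hd, hf0, hfd⟩ := h
  have hf1 (x : Circle × Y) : f (((1 : I) : ℝ), x) = 1 := by
    rw [Set.Icc.coe_one, AddCircle.coe_period, hf0]
  have hd0 (x : Circle × Y) : F (0, 0, x) = d (0, x) := (hfd 0 x).trans (by simp [hf0])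
  have hd1 (x : Circle × Y) : F (0, 1, x) = d (1, x) := (hfd 1 x).trans (by rw [hf1, one_mul])
  let D : C(I × I × Circle × Y, GL ι ℂ) := ⟨fun p =>
    F (p.1 * σ p.2.1, 0, p.2.2) * (F (0, 0, p.2.2))⁻¹ * d (p.2.1, p.2.2) *
      (F (0, 1, p.2.2))⁻¹ * F (p.1 * p.2.1, 1, p.2.2), by fun_prop⟩
  have hD (r s : I) (x : Circle × Y) : D (r, s, x) = F (r * σ s, 0, x) * (F (0, 0, x))⁻¹ *
    d (s, x) * (F (0, 1, x))⁻¹ * F (r * s, 1, x) := rfl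
  have hD0 (r : I) (x : Circle × Y) : D (r, 0, x) = F (r, 0, x) := by simp [hD, hd0]
  have hD1 (r : I) (x : Circle × Y) : D (r, 1, x) = F (r, 1, x) := by simp [hD, hd1]
  obtain ⟨K, hK⟩ := exists_loop_of_eq (V := I × Circle × Y)
    ⟨fun p => F (p.2.1, p.1, p.2.2) * (D (p.2.1, p.1, p.2.2))⁻¹, by fun_prop⟩
    (fun v => by simp [hD0, hD1])
  have hK' (t r : I) (x : Circle × Y) : K ((t : ℝ), r, x) = F (r, t, x) * (D (r, t, x))⁻¹ :=
    hK t (r, x)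
  let L : C(I × UnitAddCircle × Circle × Y, GL ι ℂ) :=
    ⟨fun p => K (p.2.1, p.1, p.2.2), by fun_prop⟩
  have hL0 : L.curry 0 = f := ContinuousMap.ext fun ⟨s, x⟩ => by
    obtain ⟨t, rfl⟩ := exists_coe_unitInterval_eq s
    refine (hK' t 0 x).trans (mul_inv_eq_iff_eq_mul.2 ((hfd t x).trans ?_))
    simp [hD]
  refine ⟨L.curry 1, ?_, D.curry 1, fun t z y => ?_, fun x => ?_, fun t x => ?_⟩
  · exact (mem_iff_of_homotopic isOpen_quantizedEven
      ⟨⟨L, fun x => DFunLike.congr_fun hL0 x, fun _ => rfl⟩⟩).1 hf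
  · change D (1, t, -z, y) = D (1, t, z, y)
    rw [hD, hD, h0, h0, h1, h1, hd]
  · exact (hK' 0 1 x).trans (by rw [hD0, mul_inv_cancel])
  · exact (inv_mul_cancel_right (F (1, t, x)) (D (1, t, x))).symm.trans
      (congrArg (· * D (1, t, x)) (hK' t 1 x).symm)

end QuasiEven

section Square

variable {ι κ Y : Type} [Fintype ι] [DecidableEq ι] [Fintype κ] [DecidableEq κ] [Nonempty κ]
  [TopologicalSpace Y] [CompactSpace Y] [T2Space Y] [Nonempty Y] {J K : Frame ι κ}

lemma quasiEven_stabilizeMap_mul_stabilizeMap_antipode (h : J.Orthogonal K)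
    {v : C(I × Circle × Y, GL ι ℂ)} (h0 : ∀ z y, v (0, -z, y) = v (0, z, y))
    (h1 : ∀ z y, v (1, -z, y) = v (1, z, y)) :
    QuasiEven (stabilizeMap J v * stabilizeMap K (v.comp (antipode I Y))) := by
  let T (θ : ℝ) (z : Circle) (a b : GL ι ℂ) : GL κ ℂ :=
    stabilize (Frame.rotate (h.smul z) θ) a
      * stabilize (Frame.rotate (h.smul z) (θ + Real.pi / 2)) b
  have hT (θ : ℝ) (z : Circle) (a : GL ι ℂ) : T θ z a a = stabilize J a * stabilize K a :=
    (stabilize_rotate_mul_stabilize_rotate (h.smul z) a θ).trans (by rw [stabilize_smul])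
  let F : C(I × I × Circle × Y, GL κ ℂ) := ⟨fun p => T (Real.pi / 4 * σ p.1) p.2.2.1 (v p.2)
      (v (p.2.1, -p.2.2.1, p.2.2.2)),
    (continuous_stabilize ((Frame.continuous_rotate_smul h).comp
        (f := fun p : I × I × Circle × Y => (Real.pi / 4 * σ p.1, p.2.2.1)) (by fun_prop))
      (by fun_prop)).mul
    (continuous_stabilize ((Frame.continuous_rotate_smul h).comp
        (f := fun p : I × I × Circle × Y => (Real.pi / 4 * σ p.1 + Real.pi / 2, p.2.2.1))
        (by fun_prop))
      (by fun_prop))⟩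
  have hF (r s : I) (z : Circle) (y : Y) : F (r, s, z, y)
      = T (Real.pi / 4 * σ r) z (v (s, z, y)) (v (s, -z, y)) := rfl
  have hF1 : F.curry 1 = stabilizeMap J v * stabilizeMap K (v.comp (antipode I Y)) :=
    ContinuousMap.ext fun ⟨s, z, y⟩ => by
      refine (hF 1 s z y).trans ?_
      simp only [T, symm_one, Set.Icc.coe_zero, mul_zero, zero_add, Frame.rotate_zero,
        Frame.rotate_pi_div_two, stabilize_smul]
      rfl
  refine hF1 ▸ QuasiEven.of_homotopy (fun r z y => ?_) (fun r z y => ?_)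
    (CircleEven.quasiEven fun s z y => ?_)
  · rw [hF, hF, h0, neg_neg, hT, hT]
  · rw [hF, hF, h1, neg_neg, hT, hT]
  · have hπ : Real.pi - Real.pi / 4 = Real.pi / 4 + Real.pi / 2 := by ring
    have hπ' : Real.pi - (Real.pi / 4 + Real.pi / 2) = Real.pi / 4 := by ring
    change F (0, s, -z, y) = F (0, s, z, y)
    rw [hF, hF, neg_neg]
    simp only [T, symm_zero, Set.Icc.coe_one, mul_one, Frame.rotate_neg_smul h, hπ, hπ']
    exact (commute_stabilize (Frame.orthogonal_rotate (h.smul z) _) _ _).symm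

lemma quasiEven_stabilizeMap_mul_stabilizeMap (h : J.Orthogonal K)
    {v : C(I × Circle × Y, GL ι ℂ)} (h0 : ∀ z y, v (0, -z, y) = v (0, z, y))
    (h1 : ∀ z y, v (1, -z, y) = v (1, z, y)) :
    QuasiEven (stabilizeMap J v * stabilizeMap K v) := by
  let F : C(I × I × Circle × Y, GL κ ℂ) := ⟨fun p => stabilize J (v p.2)
      * stabilize K (v (p.2.1, Circle.exp (Real.pi * σ p.1) * p.2.2.1, p.2.2.2)),
    (continuous_stabilize continuous_const (by fun_prop)).mul
      (continuous_stabilize continuous_const (by fun_prop))⟩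
  have hF (r s : I) (z : Circle) (y : Y) : F (r, s, z, y) = stabilize J (v (s, z, y))
      * stabilize K (v (s, Circle.exp (Real.pi * σ r) * z, y)) := rfl
  have hexp : Circle.exp Real.pi = -1 :=
    Circle.ext ((Circle.coe_exp _).trans Complex.exp_pi_mul_I)
  have hF0 : F.curry 0 = stabilizeMap J v * stabilizeMap K (v.comp (antipode I Y)) :=
    ContinuousMap.ext fun ⟨s, z, y⟩ => by
      refine (hF 0 s z y).trans ?_
      rw [symm_zero, Set.Icc.coe_one, mul_one, hexp, neg_one_mul]
      rfl
  have hF1 : F.curry 1 = stabilizeMap J v * stabilizeMap K v :=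
    ContinuousMap.ext fun ⟨s, z, y⟩ => by
      refine (hF 1 s z y).trans ?_
      rw [symm_one, Set.Icc.coe_zero, mul_zero, Circle.exp_zero, one_mul]
      rfl
  refine hF1 ▸ QuasiEven.of_homotopy (fun r z y => ?_) (fun r z y => ?_)
    (hF0 ▸ quasiEven_stabilizeMap_mul_stabilizeMap_antipode h h0 h1)
  · rw [hF, hF, mul_neg, h0, h0]
  · rw [hF, hF, mul_neg, h1, h1]

end Square

section AsymptoticSampling

lemma cornerUnit_mem_of_inv_mul_mem {R : Type*} [Ring R] {H : Subgroup Rˣ}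
    (hH : ∀ v, v * v ∈ H) {p : R} (hp : IsIdempotentElem p) {u v w ℓ : Rˣ}
    (hu : Commute (u : R) p) (hℓ : Commute (ℓ : R) p) (hv : v * ℓ * u = u * v)
    (hw : (w : R) = v * p * v⁻¹.val * u + (1 - v * p * v⁻¹.val))
    (hmem : (cornerUnit hp u hu)⁻¹ * w ∈ H) : cornerUnit hp ℓ hℓ ∈ H := by
  have hmul : p * (v⁻¹.val * u * v) + (1 - p) = cornerUnit hp ℓ hℓ * cornerUnit hp u hu := by
    have hlu : v⁻¹.val * u * v = ℓ * u := by
      have h : v⁻¹ * u * v = ℓ * u := by rw [_root_.mul_assoc, ← hv]; group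
      exact congrArg Units.val h
    rw [hlu]
    exact (corner_mul_corner hp hℓ _).symm
  have hw' : w = v * (cornerUnit hp ℓ hℓ * cornerUnit hp u hu) * v⁻¹ := by
    rw [eq_mul_inv_iff_mul_eq]
    ext1
    rw [Units.val_mul, hw, Units.val_mul, Units.val_mul, ← hmul]
    linear_combination (norm := noncomm_ring) -(v * p * v.inv_mul)
  generalize cornerUnit hp ℓ hℓ = l at *
  generalize cornerUnit hp u hu = z at *
  have hz : z⁻¹ * w = z⁻¹ * (v * (l * z) * v⁻¹ * (l * z)⁻¹ * l) * z⁻¹⁻¹ := by rw [hw']; group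
  rw [hz, conj_mem_iff_of_mul_self_mem hH,
    Subgroup.mul_mem_cancel_left _ (commutator_mem_of_mul_self_mem hH _ _)] at hmem
  exact hmem

variable {ι Y : Type*} [Fintype ι] [DecidableEq ι]

lemma coe_stabilize_ofInjective_zero {N : ℕ} [NeZero N] (g : GL ι ℂ) :
    (stabilize (.ofInjective (Prod.mk_left_injective (0 : ZMod N))) g :
      Matrix (ι × ZMod N) (ι × ZMod N) ℂ)
      = blockDiagonal fun j => if j = 0 then (g : Matrix ι ι ℂ) else 1 := by
  rw [coe_stabilize]
  ext ⟨i, j⟩ ⟨i', j'⟩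
  by_cases hj : j = 0
  · by_cases hj' : j' = 0
    · simp [Frame.ofInjective, blockDiagonal_apply, mul_apply, one_apply, hj, hj']
    · simp [Frame.ofInjective, blockDiagonal_apply, mul_apply, one_apply, hj, Ne.symm hj']
  · simp [Frame.ofInjective, blockDiagonal_apply, mul_apply, one_apply, hj]
    simp only [← ite_and, and_comm]

lemma blockDiagonal_mul_shift {N : ℕ} [NeZero N] (B : ZMod N → Matrix ι ι ℂ) (d : ZMod N) :
    blockDiagonal B * (shift ι d).1 = (shift ι d).1 * blockDiagonal fun j => B (j + d) := by
  ext a b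
  rw [mul_shift_apply, mul_blockDiagonal_apply, blockDiagonal_apply]
  by_cases h : a.2 = b.2 + d <;> simp [shift, Frame.ofInjective, one_apply, Prod.ext_iff, h]

variable [TopologicalSpace Y]

/-- Block diagonal matrices whose blocks are the values of a function at the times `s j`. -/
def timeSampling {N : ℕ} [NeZero N] (s : ZMod N → I) :
    C(I × Y, Matrix ι ι ℂ) →⋆ₐ[ℂ] C(Y, Matrix (ι × ZMod N) (ι × ZMod N) ℂ) :=
  sampling fun j => ⟨fun y => (s j, y), by fun_prop⟩

/-- The time at which the lattice is cut at the site `j`. -/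
def siteTime {N : ℕ} [NeZero N] (j : ZMod N) : I :=
  ⟨j.val / N, by positivity, div_le_one_of_le₀ (mod_cast j.val_le) (by positivity)⟩

/-- The time of the right neighbour of the site `j`, which is `1` for the last site. -/
def nextSiteTime {N : ℕ} [NeZero N] (j : ZMod N) : I :=
  ⟨(j.val + 1) / N, by positivity,
    div_le_one_of_le₀ (mod_cast Nat.succ_le_of_lt j.val_lt) (by positivity)⟩

lemma siteTime_zero {N : ℕ} [NeZero N] : siteTime (0 : ZMod N) = 0 :=
  Subtype.ext (by simp [siteTime])

lemma dist_nextSiteTime_siteTime {N : ℕ} [NeZero N] (j : ZMod N) :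
    dist (nextSiteTime j) (siteTime j) = 1 / N := by
  rw [Subtype.dist_eq, Real.dist_eq, nextSiteTime, siteTime, ← sub_div, add_sub_cancel_left,
    abs_of_nonneg (by positivity)]

lemma nextSiteTime_eq {N : ℕ} [NeZero N] (j : ZMod N) :
    nextSiteTime j = if j + 1 = 0 then 1 else siteTime (j + 1) := by
  have hj : j + 1 = (j.val + 1 : ℕ) := by rw [Nat.cast_succ, ZMod.natCast_zmod_val]
  rcases (Nat.succ_le_of_lt j.val_lt).eq_or_lt with hlast | hlt
  · rw [if_pos (by rw [hj, ← Nat.succ_eq_add_one, hlast, ZMod.natCast_self])]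
    exact Subtype.ext ((div_eq_one_iff_eq (NeZero.ne (N : ℝ))).2 (mod_cast hlast))
  · have hval : (j + 1).val = j.val + 1 := by rw [hj, ZMod.val_cast_of_lt hlt]
    rw [if_neg fun h0 => by simp [h0] at hval]
    exact Subtype.ext (by simp [nextSiteTime, siteTime, hval])

variable [CompactSpace Y] [Nonempty ι] [Nonempty Y]

/-- The bounded sequence of block diagonal matrices formed by sampling a function at given times. -/
def timeSamplingSeq (s : ∀ k, ZMod (latticeSize k) → I) : C(I × Y, Matrix ι ι ℂ) →+*
    lp (StageAlgebra ι Y) ⊤ where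
  toFun f := ⟨fun k => timeSampling (s k) f, memℓp_infty ⟨‖f‖, by
    rintro _ ⟨k, rfl⟩
    exact norm_sampling_le _ f⟩⟩
  map_one' := Subtype.ext (funext fun k => map_one (timeSampling (s k)))
  map_mul' f g := Subtype.ext (funext fun k => map_mul (timeSampling (s k)) f g)
  map_zero' := Subtype.ext (funext fun k => map_zero (timeSampling (s k)))
  map_add' f g := Subtype.ext (funext fun k => map_add (timeSampling (s k)) f g)

/-- The class of a sequence of block diagonal matrices in the asymptotic ring. -/
def asymptoticSampling (s : ∀ k, ZMod (latticeSize k) → I) : C(I × Y, Matrix ι ι ℂ) →+*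
    AsymptoticRing (StageAlgebra ι Y) :=
  AsymptoticRing.mk.comp (timeSamplingSeq s)

lemma asymptoticSampling_const (p : Matrix ι ι ℂ) (s s' : ∀ k, ZMod (latticeSize k) → I) :
    asymptoticSampling s (.const (I × Y) p) = asymptoticSampling s' (.const (I × Y) p) := rfl

lemma commute_asymptoticSampling_single {f : C(I × Y, Matrix ι ι ℂ)} {p : Matrix ι ι ℂ}
    (h0 : ∀ y, Commute (f (0, y)) p) (h1 : ∀ y, Commute (f (1, y)) p)
    (s : ∀ k, ZMod (latticeSize k) → I) :
    Commute (asymptoticSampling (fun _ => Pi.single 0 1) f)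
      (asymptoticSampling s (.const (I × Y) p)) := by
  change _ * _ = _ * _
  unfold asymptoticSampling
  simp only [RingHom.comp_apply]
  rw [← map_mul, ← map_mul]
  congr 1
  refine Subtype.ext (funext fun k => ContinuousMap.ext fun y => ?_)
  change blockDiagonal (fun j => f ((Pi.single 0 1 : ZMod (latticeSize k) → I) j, y))
    * blockDiagonal (fun _ => p) = blockDiagonal (fun _ => p)
      * blockDiagonal (fun j => f ((Pi.single 0 1 : ZMod (latticeSize k) → I) j, y))
  rw [← blockDiagonal_mul (fun j => f ((Pi.single 0 1 : ZMod (latticeSize k) → I) j, y))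
      fun _ => p, ← blockDiagonal_mul (fun _ => p)]
  congr 1
  ext1 j
  by_cases hj : j = 0
  · rw [hj, Pi.single_eq_same]
    exact h1 y
  · rw [Pi.single_eq_of_ne hj]
    exact h0 y

/-- The homomorphism induced by `asymptoticSampling s` on units. -/
def asymptoticSamplingUnit (s : ∀ k, ZMod (latticeSize k) → I) : C(I × Y, GL ι ℂ) →*
    (AsymptoticRing (StageAlgebra ι Y))ˣ :=
  (Units.map (asymptoticSampling s).toMonoidHom).comp unitsMulEquiv.toMonoidHom

lemma coe_asymptoticSamplingUnit (s : ∀ k, ZMod (latticeSize k) → I) (R : C(I × Y, GL ι ℂ)) :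
    (asymptoticSamplingUnit s R : AsymptoticRing (StageAlgebra ι Y))
      = asymptoticSampling s (unitsMulEquiv R).val := rfl

/-- The sequence of the translations by one site. -/
def shiftSeq (ι Y : Type*) [Fintype ι] [DecidableEq ι] [TopologicalSpace Y] [CompactSpace Y] :
    lp (StageAlgebra ι Y) ⊤ :=
  ⟨fun k => .const Y (shift ι 1).1, memℓp_infty ⟨1, by
    rintro _ ⟨k, rfl⟩
    exact (ContinuousMap.norm_le _ zero_le_one).2 fun _ => Frame.norm_le_one (shift ι 1)⟩⟩

lemma timeSamplingSeq_mul_shiftSeq {f : C(I × Y, Matrix ι ι ℂ)} (hf : ∀ y, f (0, y) = 1) :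
    timeSamplingSeq (fun _ => siteTime) f * timeSamplingSeq (fun _ => Pi.single 0 1) f
        * shiftSeq ι Y
      = shiftSeq ι Y * timeSamplingSeq (fun _ => nextSiteTime) f := by
  refine Subtype.ext (funext fun k => ContinuousMap.ext fun y => ?_)
  change blockDiagonal (fun j => f (siteTime j, y))
      * blockDiagonal (fun j => f ((Pi.single 0 1 : ZMod (latticeSize k) → I) j, y)) * (shift ι 1).1
    = (shift ι 1).1 * blockDiagonal fun j => f (nextSiteTime j, y)
  rw [← blockDiagonal_mul (fun j => f (siteTime j, y))
    (fun j => f ((Pi.single 0 1 : ZMod (latticeSize k) → I) j, y)), blockDiagonal_mul_shift]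
  congr! 3 with j
  rw [nextSiteTime_eq]
  split_ifs with hj
  · rw [hj, Pi.single_eq_same, siteTime_zero, hf, Matrix.one_mul]
  · rw [Pi.single_eq_of_ne hj, hf, Matrix.mul_one]

lemma asymptoticSampling_nextSiteTime (f : C(I × Y, Matrix ι ι ℂ)) :
    asymptoticSampling (fun _ => nextSiteTime) f = asymptoticSampling (fun _ => siteTime) f := by
  refine AsymptoticRing.mk_eq_mk.2 ?_
  refine Metric.tendsto_nhds.2 fun ε hε => ?_
  obtain ⟨δ, hδ, hf⟩ := Metric.uniformContinuous_iff.1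
    (CompactSpace.uniformContinuous_of_continuous f.curry.continuous) (ε / 2) (half_pos hε)
  have hlim : Tendsto (fun k : ℕ => 1 / (latticeSize k : ℝ)) atTop (𝓝 0) := by
    refine tendsto_one_div_atTop_nhds_zero_nat.comp
      (tendsto_atTop_mono (fun k => ?_) tendsto_id)
    exact (Nat.le_succ k).trans (Nat.le_mul_of_pos_left _ two_pos)
  filter_upwards [hlim.eventually_lt_const hδ] with k hk
  rw [Real.dist_eq, sub_zero, abs_norm]
  refine ((ContinuousMap.norm_le _ (half_pos hε).le).2 fun y => ?_).trans_lt (half_lt_self hε)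
  change ‖blockDiagonal (fun j => f (nextSiteTime j, y))
    - blockDiagonal (fun j => f (siteTime j, y))‖ ≤ ε / 2
  rw [← blockDiagonal_sub (fun j => f (nextSiteTime j, y)) (fun j => f (siteTime j, y))]
  refine norm_blockDiagonal_le (half_pos hε).le fun j => ?_
  have hdist : dist (nextSiteTime j) (siteTime j) < δ := by
    rwa [dist_nextSiteTime_siteTime]
  exact (dist_eq_norm _ _).symm.trans_le
    ((ContinuousMap.dist_apply_le_dist y).trans (hf hdist).le)

lemma asymptoticSampling_mul_mk_shiftSeq {f : C(I × Y, Matrix ι ι ℂ)} (hf : ∀ y, f (0, y) = 1) :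
    asymptoticSampling (fun _ => siteTime) f * asymptoticSampling (fun _ => Pi.single 0 1) f
        * .mk (shiftSeq ι Y)
      = .mk (shiftSeq ι Y) * asymptoticSampling (fun _ => siteTime) f := by
  rw [← asymptoticSampling_nextSiteTime f]
  conv_lhs => rw [asymptoticSampling_nextSiteTime f]
  unfold asymptoticSampling
  simp only [RingHom.comp_apply]
  rw [← map_mul, ← map_mul, timeSamplingSeq_mul_shiftSeq hf, map_mul]

variable [T2Space Y]

lemma quantize_momentumMap : quantize ι Y (momentumMap ι Y) = .mk (shiftSeq ι Y) :=
  AsymptoticRing.mk_eq_mk.2 tendsto_quantizeStage_momentum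

lemma quantize_positionMap {e : C(UnitAddCircle × Y, Matrix ι ι ℂ)} {f : C(I × Y, Matrix ι ι ℂ)}
    (he : ∀ (t : I) y, e ((t : ℝ), y) = f (t, y)) :
    quantize ι Y (positionMap e) = asymptoticSampling (fun _ => siteTime) f := by
  refine AsymptoticRing.mk_eq_mk.2 ?_
  have hsite (k : ℕ) :
      timeSamplingSeq (fun _ => siteTime) f k = siteDiagonal (latticeSize k) e := by
    ext1 y
    change blockDiagonal (fun j => f (siteTime j, y))
      = blockDiagonal fun j : ZMod (latticeSize k) => e (ZMod.toAddCircle j, y)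
    congr 1
    ext1 j
    exact (he _ y).symm.trans (congrArg (fun t => e (t, y)) (ZMod.toAddCircle_apply j).symm)
  simp only [hsite]
  exact tendsto_quantizeStage_position e

/-- The class of the translations by one site, the quantization of the momentum. -/
def shiftUnit (ι Y : Type*) [Fintype ι] [DecidableEq ι] [TopologicalSpace Y] [CompactSpace Y]
    [Nonempty ι] [Nonempty Y] [T2Space Y] : (AsymptoticRing (StageAlgebra ι Y))ˣ :=
  Units.map (quantize ι Y).toMonoidHom isUnit_momentumMap.unit

lemma coe_shiftUnit : (shiftUnit ι Y : AsymptoticRing (StageAlgebra ι Y))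
    = quantize ι Y (momentumMap ι Y) := rfl

lemma asymptoticSamplingUnit_mul_shiftUnit {R : C(I × Y, GL ι ℂ)} (hR : ∀ y, R (0, y) = 1) :
    asymptoticSamplingUnit (fun _ => siteTime) R
        * asymptoticSamplingUnit (fun _ => Pi.single 0 1) R * shiftUnit ι Y
      = shiftUnit ι Y * asymptoticSamplingUnit (fun _ => siteTime) R := by
  ext1
  rw [Units.val_mul, Units.val_mul, Units.val_mul, coe_asymptoticSamplingUnit,
    coe_asymptoticSamplingUnit, coe_shiftUnit, quantize_momentumMap]
  exact asymptoticSampling_mul_mk_shiftSeq fun y => congrArg Units.val (hR y)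

lemma quantize_positionMap_conj {e : C(UnitAddCircle × Y, Matrix ι ι ℂ)} {R : C(I × Y, GL ι ℂ)}
    {p : Matrix ι ι ℂ}
    (he : ∀ (t : I) y, e ((t : ℝ), y) = R (t, y) * p * (R (t, y))⁻¹.val) :
    quantize ι Y (positionMap e) = asymptoticSamplingUnit (fun _ => siteTime) R
      * asymptoticSampling (fun _ => siteTime) (.const (I × Y) p)
      * (asymptoticSamplingUnit (fun _ => siteTime) R)⁻¹.val := by
  rw [quantize_positionMap (f := (unitsMulEquiv R).val * .const _ p * (unitsMulEquiv R⁻¹).val) he,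
    map_mul, map_mul, ← map_inv]
  rfl

lemma map_quantize_unitsMulEquiv {e : C(UnitAddCircle × Y, Matrix ι ι ℂ)}
    {g : C(UnitAddCircle × Circle × Y, GL ι ℂ)}
    (hg : ∀ t z y, (g (t, z, y) : Matrix ι ι ℂ) = (z : ℂ) • e (t, y) + (1 - e (t, y))) :
    (Units.map (quantize ι Y).toMonoidHom (unitsMulEquiv g)).val
      = quantize ι Y (positionMap e) * shiftUnit ι Y + (1 - quantize ι Y (positionMap e)) := by
  have h : (unitsMulEquiv g).val = positionMap e * momentumMap ι Y + (1 - positionMap e) := by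
    ext1 x
    rw [ContinuousMap.add_apply, ContinuousMap.mul_apply, momentumMap, scalarMap_apply,
      mul_smul_one]
    exact hg x.1 x.2.1 x.2.2
  rw [Units.coe_map, h, coe_shiftUnit, ← map_mul, ← map_one (quantize ι Y), ← map_sub, ← map_add]
  rfl

lemma commute_shiftUnit_asymptoticSampling (p : Matrix ι ι ℂ) :
    Commute (shiftUnit ι Y : AsymptoticRing (StageAlgebra ι Y))
      (asymptoticSampling (fun _ => siteTime) (.const (I × Y) p)) := by
  rw [← quantize_positionMap (e := .const _ p) fun _ _ => rfl, coe_shiftUnit]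
  exact ((commute_momentumMap _).map (quantize ι Y)).symm

end AsymptoticSampling

section Clutching

variable {ι Y : Type} [Fintype ι] [DecidableEq ι] [TopologicalSpace Y]

lemma circle_smul_add_one_sub_of_conj {p : Matrix ι ι ℂ} {R : C(I × Y, GL ι ℂ)}
    {ζ : C(Circle, GL ι ℂ)} (hζ : ∀ z, (ζ z : Matrix ι ι ℂ) = (z : ℂ) • p + (1 - p))
    {e : C(UnitAddCircle × Y, Matrix ι ι ℂ)}
    (he : ∀ (t : I) y, e ((t : ℝ), y) = R (t, y) * p * (R (t, y))⁻¹.val)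
    {f : C(UnitAddCircle × Circle × Y, GL ι ℂ)}
    (hf : ∀ (t : I) z y, f ((t : ℝ), z, y) = (ζ z)⁻¹ * (R (t, y) * ζ z * (R (t, y))⁻¹))
    (t : UnitAddCircle) (z : Circle) (y : Y) :
    (ζ z * f (t, z, y) : Matrix ι ι ℂ) = (z : ℂ) • e (t, y) + (1 - e (t, y)) := by
  obtain ⟨t, rfl⟩ := exists_coe_unitInterval_eq t
  rw [← Units.val_mul, hf, mul_inv_cancel_left, Units.val_mul, Units.val_mul, hζ, he, mul_add,
    mul_smul_comm, add_mul, smul_mul_assoc, mul_sub, sub_mul, mul_one, (R (t, y)).mul_inv]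

variable [Nonempty ι] [CompactSpace Y] [T2Space Y] [Nonempty Y]

lemma mem_stablyEven_of_cornerUnit_mem {p : Matrix ι ι ℂ} {R : C(I × Y, GL ι ℂ)}
    (hR : ∀ y, R (0, y) = 1) {b : C(Y, GL ι ℂ)}
    (hb : ∀ y, (b y : Matrix ι ι ℂ) = p * R (1, y) + (1 - p))
    {u : (AsymptoticRing (StageAlgebra ι Y))ˣ}
    (hu : asymptoticSampling (fun _ => Pi.single 0 1)
      (.const _ p * (unitsMulEquiv R).val + (1 - .const _ p)) = u)
    (hmem : u ∈ AsymptoticRing.eventuallyIn (stageStablyEven ι Y)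
      mem_stageStablyEven_of_norm_sub_one_lt) : b ∈ stablyEven ι Y := by
  obtain ⟨k, v, hv, hvu⟩ := ((AsymptoticRing.mem_eventuallyIn_iff hu).1 hmem).exists
  have hvb : unitsMulEquiv.symm v
      = stabilizeMap (.ofInjective (Prod.mk_left_injective (0 : ZMod (latticeSize k)))) b := by
    ext1 y
    ext1
    rw [coe_unitsMulEquiv_symm_apply, hvu, stabilizeMap_apply, coe_stabilize_ofInjective_zero]
    change blockDiagonal (fun j => p * (R ((Pi.single 0 1 : ZMod (latticeSize k) → I) j, y)).val
      + (1 - p)) = _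
    congr! 2 with j
    split_ifs with hj
    · rw [hj, Pi.single_eq_same, hb]
    · rw [Pi.single_eq_of_ne hj, hR, Units.val_one, mul_one, add_sub_cancel]
  exact mem_stablyEven_of_stabilizeMap_mem _
    (hvb ▸ show unitsMulEquiv.symm v ∈ stablyEven _ Y from hv)

lemma mem_stablyEven_of_clutching {p : Matrix ι ι ℂ} (hp : IsIdempotentElem p)
    {R : C(I × Y, GL ι ℂ)} (hR : ∀ y, R (0, y) = 1)
    (hcomm : ∀ y, Commute (R (1, y) : Matrix ι ι ℂ) p) {b : C(Y, GL ι ℂ)}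
    (hb : ∀ y, (b y : Matrix ι ι ℂ) = p * R (1, y) + (1 - p)) {ζ : C(Circle, GL ι ℂ)}
    (hζ : ∀ z, (ζ z : Matrix ι ι ℂ) = (z : ℂ) • p + (1 - p))
    {f : C(UnitAddCircle × Circle × Y, GL ι ℂ)}
    (hf : ∀ (t : I) z y, f ((t : ℝ), z, y) = (ζ z)⁻¹ * (R (t, y) * ζ z * (R (t, y))⁻¹))
    (hmem : f ∈ quantizedEven ι Y) : b ∈ stablyEven ι Y := by
  obtain ⟨e, he⟩ := exists_loop_of_eq (V := Y)
    ⟨fun x => (R x : Matrix ι ι ℂ) * p * (R x)⁻¹.val, by fun_prop⟩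
    (fun y => by simp [hR, (hcomm y).eq])
  let ζ' : C(UnitAddCircle × Circle × Y, GL ι ℂ) := ζ.comp ⟨fun x => x.2.1, by fun_prop⟩
  have hw := map_quantize_unitsMulEquiv (g := ζ' * f)
    (circle_smul_add_one_sub_of_conj hζ he hf)
  rw [quantize_positionMap_conj he] at hw
  have hP : IsIdempotentElem (asymptoticSampling (fun _ => siteTime) (.const (I × Y) p) :
      AsymptoticRing (StageAlgebra ι Y)) :=
    (show IsIdempotentElem (ContinuousMap.const (I × Y) p) from ContinuousMap.ext fun _ => hp).map _
  have hcorner : cornerUnit hP (shiftUnit ι Y) (commute_shiftUnit_asymptoticSampling p)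
      = Units.map (quantize ι Y).toMonoidHom (unitsMulEquiv ζ') := by
    ext1
    rw [map_quantize_unitsMulEquiv (e := .const _ p) fun _ z _ => hζ z,
      quantize_positionMap (f := .const _ p) fun _ _ => rfl]
    rfl
  have hcut := commute_asymptoticSampling_single (f := (unitsMulEquiv R).val)
    (fun y => by rw [coe_unitsMulEquiv_apply, hR]; exact .one_left p) hcomm fun _ => siteTime
  refine mem_stablyEven_of_cornerUnit_mem hR hb ?_ (cornerUnit_mem_of_inv_mul_mem
    mul_self_mem_eventuallyIn_stageStablyEven hP (commute_shiftUnit_asymptoticSampling p)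
    hcut (asymptoticSamplingUnit_mul_shiftUnit hR) hw ?_)
  · rw [map_add, map_mul, map_sub, map_one, asymptoticSampling_const p _ fun _ => siteTime]
    rfl
  · rw [hcorner, ← map_inv, ← map_inv, ← map_mul, ← map_mul, inv_mul_cancel_left]
    exact hmem

end Clutching

section Descent

lemma Frame.nonempty {ι κ : Type*} [DecidableEq ι] [Nonempty ι] [Fintype κ] (J : Frame ι κ) :
    Nonempty κ := by
  by_contra hκ
  have : IsEmpty κ := not_nonempty_iff.1 hκ
  have hJ : (1 : Matrix ι ι ℂ) = 0 := J.2.symm.trans (Matrix.ext fun i j => by simp [mul_apply])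
  exact one_ne_zero ((one_apply_eq (Classical.arbitrary ι)).symm.trans
    (congrFun₂ hJ (Classical.arbitrary ι) (Classical.arbitrary ι)))

variable {ι Y P : Type} [Fintype ι] [DecidableEq ι] [TopologicalSpace Y] [TopologicalSpace P]

lemma exists_stabilizeMap_homotopic_mul {b : C(P, GL ι ℂ)} (hb : b ∈ stablyEven ι P) :
    ∃ (κ μ : Type) (_ : Fintype κ) (_ : DecidableEq κ) (_ : Fintype μ) (_ : DecidableEq μ)
      (J J' : Frame ι μ) (K K' : Frame κ μ) (u : C(P, GL κ ℂ)), J.Orthogonal J' ∧ K.Orthogonal K' ∧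
      (stabilizeMap J b).Homotopic (stabilizeMap K u * stabilizeMap K' u) := by
  obtain ⟨κ, _, _, L, u, hu⟩ := mem_stablyEven.1 hb
  let K := Frame.ofInjective (Sum.inl_injective (α := κ) (β := κ))
  let K' := Frame.ofInjective (Sum.inr_injective (α := κ) (β := κ))
  have hK : K.Orthogonal K' := Frame.orthogonal_ofInjective _ _ fun _ _ => Sum.inl_ne_inr
  refine ⟨κ, κ ⊕ κ, _, _, inferInstance, inferInstance, K.comp L, K'.comp L, K, K', u,
    hK.comp L L, hK, ?_⟩
  rw [stabilizeMap_comp]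
  refine (stabilizeMap_homotopic hu K).trans ?_
  rw [map_mul]
  exact homotopic_mul (.refl _) (stabilizeMap_homotopic_of_orthogonal hK u)

variable [CompactSpace Y] [T2Space Y] [Nonempty Y]

lemma exists_quasiEven_stabilizeMap_comp [Nonempty ι] {b : C(P, GL ι ℂ)} (hb : b ∈ stablyEven ι P)
    {φ : C(I × Circle × Y, P)} (h0 : ∀ z y, φ (0, -z, y) = φ (0, z, y))
    (h1 : ∀ z y, φ (1, -z, y) = φ (1, z, y)) :
    ∃ (κ : Type) (_ : Fintype κ) (_ : DecidableEq κ) (_ : Nonempty κ) (J J' : Frame ι κ),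
      J.Orthogonal J' ∧ QuasiEven (stabilizeMap J (b.comp φ)) := by
  obtain ⟨κ, μ, _, _, _, _, J, J', K, K', u, hJ, hK, ⟨H⟩⟩ := exists_stabilizeMap_homotopic_mul hb
  have : Nonempty μ := J.nonempty
  let F : C(I × I × Circle × Y, GL μ ℂ) := ⟨fun p => H (σ p.1, φ p.2), by fun_prop⟩
  have hF (r : I) (x : I × Circle × Y) : F (r, x) = H (σ r, φ x) := rfl
  have hF0 : F.curry 0 = stabilizeMap K (u.comp φ) * stabilizeMap K' (u.comp φ) :=
    ContinuousMap.ext fun x => (hF 0 x).trans (by rw [symm_zero, H.apply_one]; rfl)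
  have hF1 : F.curry 1 = stabilizeMap J (b.comp φ) :=
    ContinuousMap.ext fun x => (hF 1 x).trans (by rw [symm_one, H.apply_zero]; rfl)
  refine ⟨μ, _, _, this, J, J', hJ, hF1 ▸ QuasiEven.of_homotopy (fun r z y => ?_)
    (fun r z y => ?_) (hF0 ▸ quasiEven_stabilizeMap_mul_stabilizeMap hK (fun z y => ?_)
      fun z y => ?_)⟩
  · rw [hF, hF, h0]
  · rw [hF, hF, h1]
  · exact congrArg u (h0 z y)
  · exact congrArg u (h1 z y)

lemma QuasiEven.swap [Nonempty ι] {F : C(I × I × Circle × Y, GL ι ℂ)}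
    (hs : ∀ r z y, F (0, r, -z, y) = F (0, r, z, y))
    (hr : ∀ s z y, F (s, 0, -z, y) = F (s, 0, z, y))
    (h11 : ∀ z y, F (1, 1, -z, y) = F (1, 1, z, y)) {g : C(I × Circle × Y, GL ι ℂ)}
    (hg : ∀ s x, g (s, x) = F (s, 1, x)) (h : QuasiEven g) : QuasiEven (F.curry 1) := by
  let F₁ : C(I × I × Circle × Y, GL ι ℂ) :=
    ⟨fun p => F (p.2.1, σ (p.1 * σ p.2.1), p.2.2), by fun_prop⟩
  let F₂ : C(I × I × Circle × Y, GL ι ℂ) :=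
    ⟨fun p => F (σ (σ p.1 * σ p.2.1), p.2.1, p.2.2), by fun_prop⟩
  have hF₁ (q s : I) (x : Circle × Y) : F₁ (q, s, x) = F (s, σ (q * σ s), x) := rfl
  have hF₂ (q r : I) (x : Circle × Y) : F₂ (q, r, x) = F (σ (σ q * σ r), r, x) := rfl
  have hg₁ : F₁.curry 0 = g := ContinuousMap.ext fun ⟨s, x⟩ =>
    (hF₁ 0 s x).trans (by rw [zero_mul, symm_zero, hg])
  have hF₂₁ : F₂.curry 1 = F.curry 1 := ContinuousMap.ext fun ⟨r, x⟩ =>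
    (hF₂ 1 r x).trans (by rw [symm_one, zero_mul, symm_zero]; rfl)
  have hdiag : F₁.curry 1 = F₂.curry 0 := ContinuousMap.ext fun ⟨s, x⟩ =>
    (hF₁ 1 s x).trans ((hF₂ 0 s x).trans (by
      rw [symm_zero, one_mul, symm_symm])).symm
  refine hF₂₁ ▸ of_homotopy (fun q z y => ?_) (fun q z y => ?_)
    (hdiag ▸ of_homotopy (fun q z y => ?_) (fun q z y => ?_) (hg₁ ▸ h))
  · rw [hF₂, hF₂, hr]
  · rw [hF₂, hF₂, symm_one, mul_zero, symm_zero, h11]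
  · rw [hF₁, hF₁, hs]
  · rw [hF₁, hF₁, symm_one, mul_zero, symm_zero, h11]

end Descent

section RotationPath

lemma commutatorElement_mul_inv_of_commute {G : Type*} [Group G] {a b d : G} (hd : Commute d b)
    (ha : Commute a b) : ⁅d, a * b⁻¹⁆ = ⁅d, a⁆ := by
  have hcomm : Commute ⁅d, a⁆ b := ((hd.mul_left ha).mul_left hd.inv_left).mul_left ha.inv_left
  calc ⁅d, a * b⁻¹⁆ = d * b⁻¹ * a * d⁻¹ * a⁻¹ * b := by
        rw [commutatorElement_def, ha.inv_right.eq]; group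
    _ = b⁻¹ * (⁅d, a⁆ * b) := by
        rw [hd.inv_right.eq, commutatorElement_def]; group
    _ = ⁅d, a⁆ := by rw [hcomm.eq, inv_mul_cancel_left]

variable {ι κ Y P : Type} [Fintype ι] [DecidableEq ι] [Fintype κ]

lemma Frame.isIdempotentElem_mul_conjTranspose (J : Frame ι κ) :
    IsIdempotentElem (J.1 * J.1ᴴ) := by
  rw [IsIdempotentElem, Matrix.mul_assoc, ← Matrix.mul_assoc J.1ᴴ, J.2, Matrix.one_mul]

variable [DecidableEq κ] [TopologicalSpace Y] [TopologicalSpace P] {J K : Frame ι κ}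

/-- The path from the constant `1` to `stabilizeMap J a * (stabilizeMap K a)⁻¹` which rotates the
second factor out of the range of `J`. -/
def rotationPath (h : J.Orthogonal K) (a : C(Y, GL ι ℂ)) : C(I × Y, GL κ ℂ) :=
  ⟨fun p => stabilize J (a p.2) * (stabilize (Frame.rotate h (Real.pi / 2 * p.1)) (a p.2))⁻¹,
    (continuous_stabilize continuous_const (by fun_prop)).mul (continuous_stabilize
      ((Frame.continuous_rotate h).comp (f := fun p : I × Y => Real.pi / 2 * (p.1 : ℝ))
        (by fun_prop)) (by fun_prop)).inv⟩

lemma rotationPath_zero (h : J.Orthogonal K) (a : C(Y, GL ι ℂ)) (y : Y) :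
    rotationPath h a (0, y) = 1 := by
  simp [rotationPath, Frame.rotate_zero]

lemma rotationPath_one (h : J.Orthogonal K) (a : C(Y, GL ι ℂ)) (y : Y) :
    rotationPath h a (1, y) = stabilize J (a y) * (stabilize K (a y))⁻¹ := by
  simp [rotationPath, Frame.rotate_pi_div_two]

lemma commutatorElement_stabilize_rotationPath_one (h : J.Orthogonal K) (a : C(Y, GL ι ℂ))
    (b : GL ι ℂ) (y : Y) :
    ⁅stabilize J b, rotationPath h a (1, y)⁆ = stabilize J ⁅b, a y⁆ := by
  rw [rotationPath_one, commutatorElement_mul_inv_of_commute (commute_stabilize h _ _)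
    (commute_stabilize h _ _), map_commutatorElement]

/-- Scalar matrices of modulus one. -/
def circleScalar (ι : Type*) [Fintype ι] [DecidableEq ι] : Circle →* GL ι ℂ :=
  (Units.map (algebraMap ℂ (Matrix ι ι ℂ)).toMonoidHom).comp Circle.toUnits

lemma coe_circleScalar (z : Circle) : (circleScalar ι z : Matrix ι ι ℂ) = (z : ℂ) • 1 :=
  Algebra.algebraMap_eq_smul_one _

lemma continuous_circleScalar : Continuous (circleScalar ι) := by
  refine Units.continuous_iff.2 ⟨?_, ?_⟩
  · simp only [Function.comp_def, coe_circleScalar]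
    fun_prop
  · simp only [← map_inv, coe_circleScalar]
    exact (continuous_subtype_val.comp (continuous_inv (G := Circle))).smul continuous_const

lemma circleScalar_neg (z : Circle) : circleScalar ι (-z) = -circleScalar ι z := by
  ext1
  rw [Units.val_neg, coe_circleScalar, coe_circleScalar, Circle.coe_neg, neg_smul]

lemma commute_circleScalar (z : Circle) (b : GL ι ℂ) : Commute (circleScalar ι z) b :=
  Units.ext (Algebra.commutes (z : ℂ) (b : Matrix ι ι ℂ))

lemma commutatorElement_mul_circleScalar (b c : GL ι ℂ) (z : Circle) :
    ⁅b * circleScalar ι z, c⁆ = ⁅b, c⁆ := by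
  rw [commutatorElement_def, commutatorElement_def, _root_.mul_assoc b,
    (commute_circleScalar z c).eq]
  group

lemma coe_stabilize_circleScalar (J : Frame ι κ) (z : Circle) :
    (stabilize J (circleScalar ι z) : Matrix κ κ ℂ)
      = (z : ℂ) • (J.1 * J.1ᴴ) + (1 - J.1 * J.1ᴴ) := by
  rw [coe_stabilize, coe_circleScalar, Matrix.mul_sub, Matrix.sub_mul, Matrix.mul_smul,
    Matrix.mul_one, Matrix.smul_mul]
  abel

lemma commute_stabilize_mul_stabilize_inv (h : J.Orthogonal K) (a : GL ι ℂ) :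
    Commute (stabilize J a * (stabilize K a)⁻¹ : GL κ ℂ).val (J.1 * J.1ᴴ) := by
  have hJ (A : Matrix ι κ ℂ) : J.1ᴴ * (J.1 * A) = A := by
    rw [← Matrix.mul_assoc, J.2, Matrix.one_mul]
  have hJK (A : Matrix ι κ ℂ) : J.1ᴴ * (K.1 * A) = 0 := by
    rw [← Matrix.mul_assoc, show J.1ᴴ * K.1 = 0 from h, Matrix.zero_mul]
  have hKJ (A : Matrix ι κ ℂ) : K.1ᴴ * (J.1 * A) = 0 := by
    rw [← Matrix.mul_assoc, show K.1ᴴ * J.1 = 0 from h.symm, Matrix.zero_mul]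
  rw [← map_inv, Units.val_mul, coe_stabilize_mul_stabilize h, Commute, SemiconjBy]
  simp only [Matrix.add_mul, Matrix.mul_add, Matrix.one_mul, Matrix.mul_one, Matrix.mul_assoc, hJ,
    hJK, hKJ, Matrix.mul_zero]

lemma mul_conjTranspose_mul_stabilize_mul_stabilize_inv (h : J.Orthogonal K) (a : GL ι ℂ) :
    J.1 * J.1ᴴ * (stabilize J a * (stabilize K a)⁻¹ : GL κ ℂ).val + (1 - J.1 * J.1ᴴ)
      = (stabilize J a : Matrix κ κ ℂ) := by
  have hJ (A : Matrix ι κ ℂ) : J.1ᴴ * (J.1 * A) = A := by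
    rw [← Matrix.mul_assoc, J.2, Matrix.one_mul]
  have hJK (A : Matrix ι κ ℂ) : J.1ᴴ * (K.1 * A) = 0 := by
    rw [← Matrix.mul_assoc, show J.1ᴴ * K.1 = 0 from h, Matrix.zero_mul]
  rw [← map_inv, Units.val_mul, coe_stabilize_mul_stabilize h, coe_stabilize]
  simp only [Matrix.mul_add, Matrix.mul_one, Matrix.mul_assoc, hJ, hJK, Matrix.mul_zero]
  abel

variable [CompactSpace Y] [T2Space Y] [Nonempty Y]

lemma mem_stablyEven_of_quasiEven_commutator [Nonempty ι] [Nonempty κ] (h : J.Orthogonal K)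
    (a : C(Y, GL ι ℂ)) {d : C(Circle, GL ι ℂ)} (hd : ∀ z, d (-z) = -d z)
    {g : C(I × Circle × Y, GL κ ℂ)}
    (hg : ∀ r z y, g (r, z, y) = ⁅stabilize J (d z), rotationPath h a (r, y)⁆)
    (hquasi : QuasiEven g) : a ∈ stablyEven ι Y := by
  let ζ : C(Circle, GL ι ℂ) := ⟨circleScalar ι, continuous_circleScalar⟩
  let S : C(Circle, GL κ ℂ) := stabilizeMap J (d * ζ)
  let e : C(I × Circle × Y, GL κ ℂ) :=
    ⟨fun p => ⁅S p.2.1, rotationPath h a (p.1, p.2.2)⁆, by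
      simp only [commutatorElement_def]; fun_prop⟩
  have he (r : I) (z : Circle) (y : Y) : e (r, z, y)
      = ⁅stabilize J (d z) * stabilize J (circleScalar ι z), rotationPath h a (r, y)⁆ := by
    rw [← map_mul]; rfl
  have heven : CircleEven e := fun r z y => by
    rw [he, he, hd, circleScalar_neg, ← map_mul, neg_mul_neg, map_mul]
  obtain ⟨f, hf⟩ := exists_loop_of_eq (V := Circle × Y) (g * e⁻¹) (fun ⟨z, y⟩ => by
    rw [ContinuousMap.mul_apply, ContinuousMap.mul_apply, ContinuousMap.inv_apply,
      ContinuousMap.inv_apply, he, he, hg, hg, ← map_mul, rotationPath_zero,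
      commutatorElement_stabilize_rotationPath_one, commutatorElement_stabilize_rotationPath_one,
      commutatorElement_mul_circleScalar, mul_inv_cancel, commutatorElement_one_right,
      commutatorElement_one_right, mul_inv_cancel])
  have hmem : f ∈ quantizedEven κ Y := hquasi.mem_quantizedEven heven fun t x => by
    rw [hf]; exact inv_mul_cancel_right _ _
  let S' : C(UnitAddCircle × Circle × Y, GL κ ℂ) := S.comp ⟨fun p => p.2.1, by fun_prop⟩
  have hmem' : S'⁻¹ * f * S'⁻¹⁻¹ ∈ quantizedEven κ Y :=
    (conj_mem_iff_of_mul_self_mem mul_self_mem_quantizedEven).2 hmem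
  refine mem_stablyEven_of_stabilizeMap_mem J (mem_stablyEven_of_clutching
    J.isIdempotentElem_mul_conjTranspose (R := rotationPath h a) (ζ := stabilizeMap J ζ)
    (rotationPath_zero h a) (fun y => ?_) (fun y => ?_) (fun z => coe_stabilize_circleScalar J z)
    (fun t z y => ?_) hmem')
  · rw [rotationPath_one]
    exact commute_stabilize_mul_stabilize_inv h (a y)
  · rw [rotationPath_one, mul_conjTranspose_mul_stabilize_mul_stabilize_inv h]
    rfl
  · change (S z)⁻¹ * f ((t : ℝ), z, y) * (S z)⁻¹⁻¹ = (stabilize J (circleScalar ι z))⁻¹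
      * (rotationPath h a (t, y) * stabilize J (circleScalar ι z) * (rotationPath h a (t, y))⁻¹)
    rw [hf, ContinuousMap.mul_apply, ContinuousMap.inv_apply, he, hg,
      show S z = stabilize J (d z) * stabilize J (circleScalar ι z) from
        map_mul (stabilize J) _ _, commutatorElement_def, commutatorElement_def]
    group

lemma mem_stablyEven_of_commutator_mem [Nonempty ι] {a : C(Y, GL ι ℂ)}
    {d : C(I × Circle, GL ι ℂ)} (hd0 : ∀ z, d (0, z) = 1) (hd1 : ∀ z, d (1, -z) = -d (1, z))
    {x : C(I × Circle, P)} (hx0 : ∀ z, x (0, -z) = x (0, z)) (hx1 : ∀ z, x (1, -z) = x (1, z))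
    {b : C(P × Y, GL ι ℂ)} (hb : ∀ s z y, b (x (s, z), y) = ⁅d (s, z), a y⁆)
    (hmem : b ∈ stablyEven ι (P × Y)) : a ∈ stablyEven ι Y := by
  obtain ⟨κ, _, _, _, J, K, h, hquasi⟩ := exists_quasiEven_stabilizeMap_comp hmem
    (φ := ⟨fun p : I × Circle × Y => (x (p.1, p.2.1), p.2.2), by fun_prop⟩)
    (fun z y => congrArg (·, y) (hx0 z)) (fun z y => congrArg (·, y) (hx1 z))
  let F : C(I × I × Circle × Y, GL κ ℂ) :=
    ⟨fun p => ⁅stabilizeMap J d (p.1, p.2.2.1), rotationPath h a (p.2.1, p.2.2.2)⁆, by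
      simp only [commutatorElement_def]; fun_prop⟩
  have hF (s r : I) (z : Circle) (y : Y) :
      F (s, r, z, y) = ⁅stabilize J (d (s, z)), rotationPath h a (r, y)⁆ := rfl
  have hF0 (r : I) (z : Circle) (y : Y) : F (0, r, z, y) = 1 := by
    rw [hF, hd0, map_one, commutatorElement_one_left]
  have hF1 (s : I) (z : Circle) (y : Y) : F (s, 0, z, y) = 1 := by
    rw [hF, rotationPath_zero, commutatorElement_one_right]
  refine mem_stablyEven_of_quasiEven_commutator h a (d := d.comp ⟨fun z => (1, z), by fun_prop⟩)
    hd1 (fun r z y => rfl) (QuasiEven.swap (F := F) (fun r z y => ?_) (fun s z y => ?_)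
      (fun z y => ?_) (fun s ⟨z, y⟩ => ?_) hquasi)
  · rw [hF0, hF0]
  · rw [hF1, hF1]
  · rw [hF, hF, commutatorElement_stabilize_rotationPath_one,
      commutatorElement_stabilize_rotationPath_one, hd1]
    simp [commutatorElement_def]
  · rw [hF, commutatorElement_stabilize_rotationPath_one]
    exact congrArg (stabilize J) (hb s z y)

end RotationPath

section PathConnected

variable {ι : Type*} [Fintype ι] [DecidableEq ι]

lemma exists_polynomial_eval_eq_det (M : Matrix ι ι ℂ) :
    ∃ p : Polynomial ℂ, ∀ z, p.eval z = (1 + z • (M - 1)).det := by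
  refine ⟨(1 + (Polynomial.X : Polynomial ℂ) • (M - 1).map Polynomial.C).det, fun z => ?_⟩
  rw [← Polynomial.coe_evalRingHom, RingHom.map_det]
  congr 1
  ext i j
  obtain rfl | hij := eq_or_ne i j
  · simp
  · simp [hij, mul_comm z]

lemma joined_one (g : GL ι ℂ) : Joined g 1 := by
  obtain ⟨p, hp⟩ := exists_polynomial_eval_eq_det (g : Matrix ι ι ℂ)
  have hp0 : p ≠ 0 := by
    rintro rfl
    simpa using hp 0
  have hmem (z : ℂ) : z ∈ (p.rootSet ℂ)ᶜ ↔ IsUnit (1 + z • ((g : Matrix ι ι ℂ) - 1)) := by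
    rw [Set.mem_compl_iff, Polynomial.mem_rootSet, Polynomial.coe_aeval_eq_eval, hp,
      isUnit_iff_isUnit_det, isUnit_iff_ne_zero, not_and, imp_iff_right hp0]
  have hconn : IsPathConnected (p.rootSet ℂ)ᶜ :=
    (p.rootSet_finite ℂ).countable.isPathConnected_compl_of_one_lt_rank
      (by rw [Complex.rank_real_complex]; exact Nat.one_lt_ofNat)
  obtain ⟨γ, hγ⟩ := hconn.joinedIn 1 ((hmem 1).2 (by simp)) 0 ((hmem 0).2 (by simp))
  have hcont : Continuous fun t => 1 + γ t • ((g : Matrix ι ι ℂ) - 1) := by fun_prop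
  have hunit (t : I) : IsUnit ((⟨_, hcont⟩ : C(I, Matrix ι ι ℂ)) t) := (hmem _).1 (hγ t)
  exact ⟨⟨ContinuousMap.unitsOfForallIsUnit hunit, Units.ext (by simp), Units.ext (by simp)⟩⟩

end PathConnected

section TopologicalGroup

variable {G X Z : Type*} [Group G] [TopologicalSpace G] [IsTopologicalGroup G]
  [TopologicalSpace X] [TopologicalSpace Z] {n : ℕ}

lemma exists_factor_pi_quotient (N : Subgroup G) (f : C((Fin n → G) × X, Z))
    (hf : ∀ g c x, (∀ i, c i ∈ N) → f (g * c, x) = f (g, x)) :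
    ∃ F : C((Fin n → G ⧸ N) × X, Z), ∀ g x, F (fun i => (g i : G ⧸ N), x) = f (g, x) := by
  have hq : IsOpenQuotientMap (Prod.map (Pi.map fun _ : Fin n => ((↑) : G → G ⧸ N)) (id : X → X)) :=
    (IsOpenQuotientMap.piMap fun _ => QuotientGroup.isOpenQuotientMap_mk).prodMap .id
  let q : C((Fin n → G) × X, (Fin n → G ⧸ N) × X) := ⟨_, hq.continuous⟩
  have hfq : Function.FactorsThrough f q := by
    rintro ⟨g, x⟩ ⟨g', x'⟩ heq
    obtain ⟨hg, rfl⟩ := Prod.ext_iff.1 heq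
    have hc := hf g (g⁻¹ * g') x fun i => QuotientGroup.eq.1 (congrFun hg i)
    rw [mul_inv_cancel_left] at hc
    exact hc.symm
  exact ⟨hq.isQuotientMap.lift (f := q) f hfq, fun g x =>
    DFunLike.congr_fun (IsQuotientMap.lift_comp (f := q) hq.isQuotientMap f hfq) (g, x)⟩

end TopologicalGroup

section IteratedCommutator

variable {G H : Type*} [Group G] [Group H]

lemma map_iteratedCommutator (f : G →* H) :
    ∀ (n : ℕ) (g : Fin n → G), f (iteratedCommutator n g) = iteratedCommutator n (f ∘ g)
  | 0, _ => map_one f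
  | 1, _ => rfl
  | n + 2, g => by
    simp only [iteratedCommutator, map_mul, map_inv, map_iteratedCommutator f (n + 1)]
    rfl

lemma iteratedCommutator_cons_snoc (m : ℕ) (b : G) (g : Fin m → G) (x : G) :
    iteratedCommutator (m + 2) (Fin.cons b (Fin.snoc g x : Fin (m + 1) → G))
      = ⁅x, iteratedCommutator (m + 1) (Fin.cons b g)⁆ := by
  have hcons : (Fin.cons b (Fin.snoc g x : Fin (m + 1) → G) : Fin (m + 2) → G)
      = Fin.snoc (Fin.cons b g : Fin (m + 1) → G) x := Fin.cons_snoc_eq_snoc_cons b g x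
  simp only [hcons, iteratedCommutator, Fin.snoc_last, Fin.snoc_castSucc, commutatorElement_def]

lemma continuous_iteratedCommutator [TopologicalSpace G] [IsTopologicalGroup G] :
    ∀ n : ℕ, Continuous fun g : Fin n → G => iteratedCommutator n g
  | 0 => continuous_const
  | 1 => continuous_apply 0
  | n + 2 => by
    have := (continuous_iteratedCommutator (n + 1)).comp
      (f := fun (g : Fin (n + 2) → G) (i : Fin (n + 1)) => g i.castSucc) (by fun_prop)
    simp only [iteratedCommutator]
    fun_prop

end IteratedCommutator

section WordHomotopy

variable {ι K H : Type*} [Group K] [Group H]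

lemma freeGroup_lift_mem_center {c : ι → H} (hc : ∀ i, c i ∈ Subgroup.center H)
    (v : FreeGroup ι) : FreeGroup.lift c v ∈ Subgroup.center H :=
  FreeGroup.range_lift_le (Set.range_subset_iff.2 hc) ⟨v, rfl⟩

lemma freeGroup_lift_mul_of_mem_center (a : ι → H) {c : ι → H}
    (hc : ∀ i, c i ∈ Subgroup.center H) (v : FreeGroup ι) :
    FreeGroup.lift (a * c) v = FreeGroup.lift a v * FreeGroup.lift c v := by
  have hcomm (v w) : Commute (FreeGroup.lift a w) (FreeGroup.lift c v) :=
    Subgroup.mem_center_iff.1 (freeGroup_lift_mem_center hc v) _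
  induction v using FreeGroup.induction_on with
  | C1 => simp
  | of i => simp
  | inv_of i ih => rw [map_inv, ih, map_inv, map_inv, (hcomm _ _).mul_inv]
  | mul v w hv hw => rw [map_mul, hv, hw, map_mul, map_mul, (hcomm v w).symm.mul_mul_mul_comm]

lemma freeGroup_lift_iteratedCommutator {n : ℕ} (g : Fin n → H) :
    FreeGroup.lift g (iteratedCommutator n fun i => FreeGroup.of i) = iteratedCommutator n g := by
  rw [map_iteratedCommutator]
  congr 1
  funext i
  exact FreeGroup.lift_apply_of

lemma iteratedCommutator_eq_one_of_mem_center {m : ℕ} {c : Fin (m + 2) → H}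
    (hc : ∀ i, c i ∈ Subgroup.center H) : iteratedCommutator (m + 2) c = 1 := by
  rw [iteratedCommutator, ← commutatorElement_def, commutatorElement_eq_one_iff_mul_comm]
  exact (Subgroup.mem_center_iff.1 (hc _) _).symm

lemma iteratedCommutator_mul_of_mem_center {m : ℕ} (a : Fin (m + 2) → H) {c : Fin (m + 2) → H}
    (hc : ∀ i, c i ∈ Subgroup.center H) :
    iteratedCommutator (m + 2) (a * c) = iteratedCommutator (m + 2) a := by
  rw [← freeGroup_lift_iteratedCommutator, freeGroup_lift_mul_of_mem_center a hc,
    freeGroup_lift_iteratedCommutator, freeGroup_lift_iteratedCommutator,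
    iteratedCommutator_eq_one_of_mem_center hc, _root_.mul_one]

lemma iteratedCommutator_cons_mul_of_mem_center {m : ℕ} (b : H) (a : Fin m → H) {c : Fin m → H}
    (hc : ∀ i, c i ∈ Subgroup.center H) : iteratedCommutator (m + 1) (Fin.cons b (a * c))
      = iteratedCommutator (m + 1) (Fin.cons b a) := by
  cases m with
  | zero => rfl
  | succ m =>
    have hcons : (Fin.cons b (a * c) : Fin (m + 2) → H) = Fin.cons b a * Fin.cons 1 c := by
      ext i
      refine Fin.cases ?_ (fun i => ?_) i <;> simp
    rw [hcons]
    exact iteratedCommutator_mul_of_mem_center _ (Fin.cases (one_mem _) hc)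

variable [TopologicalSpace H] [IsTopologicalGroup H]

lemma continuous_freeGroup_lift (v : FreeGroup ι) :
    Continuous fun a : ι → H => FreeGroup.lift a v := by
  induction v using FreeGroup.induction_on with
  | C1 => simp only [map_one, continuous_const]
  | of i => simpa only [FreeGroup.lift_apply_of] using continuous_apply i
  | inv_of i ih => simp only [map_inv]; exact ih.inv
  | mul v w hv hw => simp only [map_mul]; exact hv.mul hw

lemma exists_homotopy_lift_content (α : K →* H) (hα : ∀ k, Joined (α k) 1)
    (w : Monoid.Coprod K (FreeGroup ι)) :
    ∃ Γ : C((ι → H) × I, H),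
      (∀ a, Γ (a, 0) = Monoid.Coprod.lift α (FreeGroup.lift a) w) ∧
      (∀ a, Γ (a, 1) = FreeGroup.lift a (Monoid.Coprod.snd w)) ∧
      ∀ a c t, (∀ i, c i ∈ Subgroup.center H) →
        Γ (a * c, t) = Γ (a, t) * FreeGroup.lift c (Monoid.Coprod.snd w) := by
  induction w using Monoid.Coprod.induction_on with
  | inl k =>
    obtain ⟨γ⟩ := hα k
    exact ⟨⟨fun p => γ p.2, by fun_prop⟩, fun a => by simp, fun a => by simp,
      fun a c t _ => by simp⟩
  | inr v =>
    exact ⟨⟨fun p => FreeGroup.lift p.1 v, (continuous_freeGroup_lift v).comp continuous_fst⟩,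
      fun a => by simp, fun a => by simp,
      fun a c t hc => by simp [freeGroup_lift_mul_of_mem_center a hc]⟩
  | mul w w' hw hw' =>
    obtain ⟨Γ, hΓ0, hΓ1, hΓ⟩ := hw
    obtain ⟨Γ', hΓ0', hΓ1', hΓ'⟩ := hw'
    refine ⟨Γ * Γ', fun a => ?_, fun a => ?_, fun a c t hc => ?_⟩
    · simp only [ContinuousMap.mul_apply, hΓ0, hΓ0', map_mul]
    · simp only [ContinuousMap.mul_apply, hΓ1, hΓ1', map_mul]
    · have hcomm : Commute (Γ' (a, t)) (FreeGroup.lift c (Monoid.Coprod.snd w)) :=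
        Subgroup.mem_center_iff.1 (freeGroup_lift_mem_center hc _) _
      simp only [ContinuousMap.mul_apply, hΓ a c t hc, hΓ' a c t hc, map_mul]
      exact hcomm.symm.mul_mul_mul_comm _ _

end WordHomotopy

section ProjectiveUnitary

variable (ι : Type*) [Fintype ι] [DecidableEq ι]

instance : CompactSpace (unitaryGroup ι ℂ) := by
  have hball : IsCompact (Set.univ.pi fun _ : ι => Set.univ.pi fun _ : ι =>
      Metric.closedBall (0 : ℂ) 1) :=
    isCompact_univ_pi fun _ => isCompact_univ_pi fun _ => isCompact_closedBall _ _
  refine isCompact_iff_compactSpace.1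
    (IsCompact.of_isClosed_subset (X := Matrix ι ι ℂ) hball isClosed_unitary ?_)
  exact fun A hA i _ j _ => mem_closedBall_zero_iff.2 (entry_norm_bound_of_unitary hA i j)

/-- The scalar unitary matrices, encoded as the unitary matrices commuting with all of
`GL ι ℂ`. -/
def unitaryScalars : Subgroup (unitaryGroup ι ℂ) :=
  (Subgroup.center (GL ι ℂ)).comap Unitary.toUnits

/-- The projective unitary group. -/
abbrev ProjectiveUnitary : Type _ := unitaryGroup ι ℂ ⧸ unitaryScalars ι

instance : (unitaryScalars ι).Normal := by
  unfold unitaryScalars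
  infer_instance

instance : IsClosed (unitaryScalars ι : Set (unitaryGroup ι ℂ)) := by
  have hcenter : IsClosed (Subgroup.center (GL ι ℂ) : Set (GL ι ℂ)) := by
    rw [← Subgroup.centralizer_univ]
    exact Set.isClosed_centralizer _
  exact hcenter.preimage continuous_toUnits

variable {ι}

lemma unitaryScalars_le_center : unitaryScalars ι ≤ Subgroup.center (unitaryGroup ι ℂ) :=
  fun c hc => Subgroup.mem_center_iff.2 fun g =>
    Unitary.toUnits_injective (by simpa using Subgroup.mem_center_iff.1 hc (Unitary.toUnits g))

lemma projectiveUnitary_eq_of_toUnits_eq_neg {g h : unitaryGroup ι ℂ}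
    (hgh : Unitary.toUnits g = -Unitary.toUnits h) : (g : ProjectiveUnitary ι) = h := by
  refine QuotientGroup.eq.2 (Subgroup.mem_center_iff.2 fun a => ?_)
  rw [map_mul, map_inv, hgh]
  simp

end ProjectiveUnitary

section AntipodalDisc

lemma mem_unitaryGroup_of_norm_sq_add_norm_sq_eq_one {α β : ℂ}
    (h : α * star α + β * star β = 1) :
    !![α, β; -star β, star α] ∈ unitaryGroup (Fin 2) ℂ := by
  rw [mem_unitaryGroup_iff]
  ext i j
  fin_cases i <;> fin_cases j
  · simpa [Matrix.mul_apply, star_apply] using h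
  · simp [Matrix.mul_apply, star_apply, mul_comm α]
  · simp [Matrix.mul_apply, star_apply, mul_comm (starRingEnd ℂ α)]
  · simpa [Matrix.mul_apply, star_apply, mul_comm, add_comm] using h

lemma antipodalDisc_norm_sq_add_norm_sq (s : I) (z : Circle) :
    (1 - s + s * z : ℂ) * star (1 - s + s * z : ℂ)
      + (√(s * (1 - s)) * (1 - z) : ℂ) * star (√(s * (1 - s)) * (1 - z) : ℂ) = 1 := by
  have hz : (z : ℂ) * (starRingEnd ℂ) z = 1 := by rw [Complex.mul_conj, Circle.normSq_coe]; simp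
  have hsqrt : (√(s * (1 - s)) : ℂ) * √(s * (1 - s)) = s * (1 - s) := by
    rw [← Complex.ofReal_mul, Real.mul_self_sqrt (mul_nonneg s.2.1 (sub_nonneg.2 s.2.2))]
    push_cast
    rfl
  simp only [Complex.star_def, map_add, map_sub, map_mul, map_one, Complex.conj_ofReal]
  linear_combination (s : ℂ) * hz + (1 - (z : ℂ)) * (1 - (starRingEnd ℂ) z) * hsqrt

/-- A map of the disc, in polar coordinates with centre `s = 0`, to `U(2)` whose boundary is
antipodal. Modulo scalars it becomes a map of the real projective plane. -/
def antipodalDisc : C(I × Circle, unitaryGroup (Fin 2) ℂ) where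
  toFun p := ⟨_, mem_unitaryGroup_of_norm_sq_add_norm_sq_eq_one
    (antipodalDisc_norm_sq_add_norm_sq p.1 p.2)⟩
  continuous_toFun := by
    refine Continuous.subtype_mk (continuous_matrix fun i j => ?_) _
    fin_cases i <;> fin_cases j <;>
      simp only [star_mul', star_sub, star_add, star_one, RCLike.star_def, Complex.conj_ofReal,
        Fin.zero_eta, Fin.mk_one, Fin.isValue, of_apply, cons_val', cons_val_zero, cons_val_one,
        cons_val_fin_one] <;>
      fun_prop

lemma antipodalDisc_zero (z : Circle) : antipodalDisc (0, z) = 1 := by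
  ext i j
  fin_cases i <;> fin_cases j <;> simp [antipodalDisc]

lemma toUnits_antipodalDisc_one_neg (z : Circle) :
    Unitary.toUnits (antipodalDisc (1, -z)) = -Unitary.toUnits (antipodalDisc (1, z)) := by
  ext i j
  fin_cases i <;> fin_cases j <;> simp [antipodalDisc]

end AntipodalDisc

section IteratedCommutatorMap

lemma continuous_toUnits_iteratedCommutator (m : ℕ) :
    Continuous fun p : (Fin m → unitaryGroup (Fin 2) ℂ) × Circle =>
      Unitary.toUnits (iteratedCommutator (m + 1) (Fin.cons (diagCircle p.2) p.1)) := by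
  have hdiag := continuous_diagCircle
  refine continuous_toUnits.comp ((continuous_iteratedCommutator (m + 1)).comp ?_)
  fun_prop

/-- `a` is the iterated commutator with first variable `diag(z, 1)`, as a map on the projective
unitary group in the remaining variables. -/
def IsIteratedCommutatorMap {m : ℕ}
    (a : C((Fin m → ProjectiveUnitary (Fin 2)) × Circle, GL (Fin 2) ℂ)) : Prop :=
  ∀ (g : Fin m → unitaryGroup (Fin 2) ℂ) z, a (fun i => (g i : ProjectiveUnitary (Fin 2)), z)
    = Unitary.toUnits (iteratedCommutator (m + 1) (Fin.cons (diagCircle z) g))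

lemma exists_isIteratedCommutatorMap (m : ℕ) :
    ∃ a : C((Fin m → ProjectiveUnitary (Fin 2)) × Circle, GL (Fin 2) ℂ),
      IsIteratedCommutatorMap a :=
  exists_factor_pi_quotient _ ⟨_, continuous_toUnits_iteratedCommutator m⟩ fun g _ _ hc =>
    congrArg Unitary.toUnits <| iteratedCommutator_cons_mul_of_mem_center _ g
      fun i => unitaryScalars_le_center (hc i)

lemma IsIteratedCommutatorMap.not_mem_stablyEven_zero
    {a : C((Fin 0 → ProjectiveUnitary (Fin 2)) × Circle, GL (Fin 2) ℂ)}
    (ha : IsIteratedCommutatorMap a) : a ∉ stablyEven (Fin 2) _ := by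
  intro hmem
  have hcomp := comp_mem_stablyEven hmem ⟨fun z : Circle => (fun i => i.elim0, z), by fun_prop⟩
  have heq : a.comp ⟨fun z : Circle => (fun i => i.elim0, z), by fun_prop⟩
      = ⟨fun z => Unitary.toUnits (diagCircle z),
        continuous_toUnits.comp continuous_diagCircle⟩ := by
    ext1 z
    refine (congrArg a ?_).trans (ha Fin.elim0 z)
    exact Prod.ext (Subsingleton.elim _ _) rfl
  exact diagCircle_not_mem_stablyEven (heq ▸ hcomp)

lemma IsIteratedCommutatorMap.apply_snoc {m : ℕ}
    {a : C((Fin (m + 1) → ProjectiveUnitary (Fin 2)) × Circle, GL (Fin 2) ℂ)}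
    {a' : C((Fin m → ProjectiveUnitary (Fin 2)) × Circle, GL (Fin 2) ℂ)}
    (ha : IsIteratedCommutatorMap a) (ha' : IsIteratedCommutatorMap a')
    (q : Fin m → ProjectiveUnitary (Fin 2)) (u : unitaryGroup (Fin 2) ℂ) (z : Circle) :
    a (Fin.snoc q (u : ProjectiveUnitary (Fin 2)), z) = ⁅Unitary.toUnits u, a' (q, z)⁆ := by
  choose g hg using fun i => QuotientGroup.mk_surjective (q i)
  obtain rfl : (fun i => (g i : ProjectiveUnitary (Fin 2))) = q := funext hg
  have hsnoc : (Fin.snoc (fun i => (g i : ProjectiveUnitary (Fin 2)))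
      (u : ProjectiveUnitary (Fin 2)) : Fin (m + 1) → ProjectiveUnitary (Fin 2))
        = fun i => ((Fin.snoc g u : Fin (m + 1) → _) i : ProjectiveUnitary (Fin 2)) :=
    funext fun i => Fin.lastCases (by simp) (fun i => by simp) i
  rw [hsnoc, ha, iteratedCommutator_cons_snoc, map_commutatorElement, ha']

lemma IsIteratedCommutatorMap.mem_stablyEven_of_succ {m : ℕ}
    {a : C((Fin (m + 1) → ProjectiveUnitary (Fin 2)) × Circle, GL (Fin 2) ℂ)}
    {a' : C((Fin m → ProjectiveUnitary (Fin 2)) × Circle, GL (Fin 2) ℂ)}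
    (ha : IsIteratedCommutatorMap a) (ha' : IsIteratedCommutatorMap a')
    (hmem : a ∈ stablyEven (Fin 2) _) : a' ∈ stablyEven (Fin 2) _ := by
  let snoc : C(ProjectiveUnitary (Fin 2) × (Fin m → ProjectiveUnitary (Fin 2)) × Circle,
      (Fin (m + 1) → ProjectiveUnitary (Fin 2)) × Circle) :=
    ⟨fun p => (Fin.snoc p.2.1 p.1, p.2.2), by fun_prop⟩
  let x : C(I × Circle, ProjectiveUnitary (Fin 2)) := ⟨fun p => antipodalDisc p, by fun_prop⟩
  refine mem_stablyEven_of_commutator_mem (b := a.comp snoc) (x := x)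
    (d := ⟨fun p => Unitary.toUnits (antipodalDisc p),
      continuous_toUnits.comp antipodalDisc.continuous⟩)
    (fun z => ?_) toUnits_antipodalDisc_one_neg (fun z => ?_) (fun z => ?_)
    (fun s z y => ha.apply_snoc ha' y.1 (antipodalDisc (s, z)) y.2)
    (comp_mem_stablyEven hmem snoc)
  · exact (congrArg Unitary.toUnits (antipodalDisc_zero z)).trans (map_one _)
  · exact congrArg QuotientGroup.mk ((antipodalDisc_zero (-z)).trans (antipodalDisc_zero z).symm)
  · exact projectiveUnitary_eq_of_toUnits_eq_neg (toUnits_antipodalDisc_one_neg z)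

lemma IsIteratedCommutatorMap.not_mem_stablyEven {m : ℕ}
    {a : C((Fin m → ProjectiveUnitary (Fin 2)) × Circle, GL (Fin 2) ℂ)}
    (ha : IsIteratedCommutatorMap a) : a ∉ stablyEven (Fin 2) _ := by
  induction m with
  | zero => exact ha.not_mem_stablyEven_zero
  | succ m ih =>
    obtain ⟨a', ha'⟩ := exists_isIteratedCommutatorMap m
    exact fun hmem => ih ha' (ha.mem_stablyEven_of_succ ha' hmem)

end IteratedCommutatorMap

section SpecialUnitary

open scoped ComplexOrder in
lemma re_trace_lt_card_of_ne_one {ι : Type*} [Fintype ι] [DecidableEq ι] {U : Matrix ι ι ℂ}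
    (hU : U ∈ unitaryGroup ι ℂ) (hne : U ≠ 1) : U.trace.re < Fintype.card ι := by
  have hpos : 0 < ((U - 1) * (U - 1)ᴴ).trace :=
    lt_of_le_of_ne (posSemidef_self_mul_conjTranspose (U - 1)).trace_nonneg fun h =>
      hne (sub_eq_zero.1 (trace_mul_conjTranspose_self_eq_zero_iff.1 h.symm))
  have hmul : (U - 1) * (U - 1)ᴴ = (1 - U) + (1 - U)ᴴ := by
    have hUU : U * Uᴴ = 1 := mem_unitaryGroup_iff.1 hU
    simp only [conjTranspose_sub, conjTranspose_one]
    linear_combination (norm := noncomm_ring) hUU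
  rw [hmul, trace_add, trace_conjTranspose] at hpos
  have hre := (Complex.lt_def.1 hpos).1
  simp only [trace_sub, trace_one, Complex.zero_re, Complex.add_re, Complex.sub_re,
    Complex.star_def, Complex.conj_re, Complex.natCast_re] at hre
  linarith

lemma isUnit_segment_neg_one {U : Matrix (Fin 2) (Fin 2) ℂ} (hU : U ∈ unitaryGroup (Fin 2) ℂ)
    (hdet : U.det = 1) (hne : U ≠ 1) (t : I) : IsUnit ((1 - (t : ℝ)) • U + (t : ℝ) • -1) := by
  have htrace := re_trace_lt_card_of_ne_one hU hne
  have hdet_segment : ((1 - (t : ℝ)) • U + (t : ℝ) • -1).det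
      = (((1 - t) ^ 2 + t ^ 2 : ℝ) : ℂ) - ((t * (1 - t) : ℝ) : ℂ) * U.trace := by
    rw [det_fin_two] at hdet ⊢
    simp only [trace_fin_two, Matrix.add_apply, Matrix.smul_apply, Matrix.neg_apply, one_apply,
      Complex.real_smul, Fin.isValue, one_ne_zero, zero_ne_one, if_true, if_false]
    push_cast
    linear_combination (1 - (t : ℂ)) ^ 2 * hdet
  rw [isUnit_iff_isUnit_det, isUnit_iff_ne_zero, hdet_segment]
  intro hzero
  have hre := congrArg Complex.re hzero
  simp only [Complex.sub_re, Complex.re_ofReal_mul, Complex.ofReal_re, Complex.zero_re] at hre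
  have hgap : 0 ≤ (t * (1 - t) : ℝ) * (2 - U.trace.re) :=
    mul_nonneg (mul_nonneg t.2.1 (sub_nonneg.2 t.2.2)) (by simpa using htrace.le)
  have hhalf : (t : ℝ) = 1 / 2 := by nlinarith [sq_nonneg (1 - 2 * (t : ℝ))]
  rw [hhalf] at hre
  norm_num at hre htrace
  linarith

/-- The inclusion of `SU n` in the general linear group. -/
def specialUnitaryToGL (n : ℕ) : SU n →* GL (Fin n) ℂ :=
  Unitary.toUnits.comp (SU n).subtype

lemma exists_circle_pow_eq {n : ℕ} (hn : n ≠ 0) (z : Circle) : ∃ w : Circle, w ^ n = z := by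
  refine ⟨Circle.exp ((z : ℂ).arg / n), ?_⟩
  rw [← Circle.exp_natCast_mul, mul_div_cancel₀ _ (Nat.cast_ne_zero.2 hn), Circle.exp_arg]

lemma exists_specialUnitary_mul_eq_toUnits {n : ℕ} (hn : n ≠ 0) (u : unitaryGroup (Fin n) ℂ) :
    ∃ s : SU n, ∃ c ∈ Subgroup.center (GL (Fin n) ℂ),
      specialUnitaryToGL n s * c = Unitary.toUnits u := by
  have hdet := det_of_mem_unitary u.2
  obtain ⟨z, hz⟩ := exists_circle_pow_eq hn
    ⟨(u : Matrix (Fin n) (Fin n) ℂ).det,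
      mem_sphere_zero_iff_norm.2 (CStarRing.norm_of_mem_unitary hdet)⟩
  have hzdet : (z : ℂ) ^ n = (u : Matrix (Fin n) (Fin n) ℂ).det := congrArg Subtype.val hz
  have hunitary : (z : ℂ)⁻¹ • (u : Matrix (Fin n) (Fin n) ℂ) ∈ unitaryGroup (Fin n) ℂ :=
    Unitary.smul_mem_of_mem (by simp [Unitary.mem_iff, ← Circle.coe_inv_eq_conj]) u.2
  have hspecial : (⟨_, hunitary⟩ : unitaryGroup (Fin n) ℂ) ∈ SU n := by
    change ((z : ℂ)⁻¹ • (u : Matrix (Fin n) (Fin n) ℂ)).det = 1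
    rw [det_smul, Fintype.card_fin, inv_pow, hzdet]
    exact inv_mul_cancel₀ (hzdet ▸ pow_ne_zero n z.coe_ne_zero)
  refine ⟨⟨_, hspecial⟩, circleScalar (Fin n) z,
    Subgroup.mem_center_iff.2 fun b => (commute_circleScalar z b).symm, Units.ext ?_⟩
  change ((z : ℂ)⁻¹ • (u : Matrix (Fin n) (Fin n) ℂ)) * (circleScalar (Fin n) z).val = u
  rw [coe_circleScalar, Matrix.smul_mul, Matrix.mul_smul, smul_smul,
    inv_mul_cancel₀ z.coe_ne_zero, one_smul, Matrix.mul_one]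

lemma lift_specialUnitaryToGL {n : ℕ} {ι : Type*} (s : ι → SU n)
    (w : Monoid.Coprod (SU n) (FreeGroup ι)) :
    Monoid.Coprod.lift (specialUnitaryToGL n) (FreeGroup.lift (specialUnitaryToGL n ∘ s)) w
      = specialUnitaryToGL n (Monoid.Coprod.lift (MonoidHom.id _) (FreeGroup.lift s) w) := by
  refine DFunLike.congr_fun (Monoid.Coprod.hom_ext ?_ ?_ :
    _ = (specialUnitaryToGL n).comp (Monoid.Coprod.lift (MonoidHom.id _) (FreeGroup.lift s))) w
  · ext; simp
  · ext; simp

lemma homotopic_one_of_forall_ne {X : Type*} [TopologicalSpace X] {f : C(X, GL (Fin 2) ℂ)}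
    (h : SU 2) (hf : ∀ x, ∃ s ≠ h, f x = specialUnitaryToGL 2 s) : f.Homotopic 1 := by
  have hneg : f.Homotopic (.const X (-specialUnitaryToGL 2 h)) := by
    refine homotopic_of_isUnit_segment fun t x => ?_
    obtain ⟨s, hs, hfs⟩ := hf x
    have hne : h⁻¹ * s ≠ 1 := fun e => hs (inv_mul_eq_one.1 e).symm
    have hunit := isUnit_segment_neg_one (h⁻¹ * s).1.2 (h⁻¹ * s).2
      (fun e => hne (Subtype.ext (Subtype.ext e))) t
    have hmul : (specialUnitaryToGL 2 h : Matrix (Fin 2) (Fin 2) ℂ) * (h⁻¹ * s).1.1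
        = specialUnitaryToGL 2 s := by
      have hmap := congrArg Units.val (map_mul (specialUnitaryToGL 2) h (h⁻¹ * s)).symm
      rwa [mul_inv_cancel_left] at hmap
    convert (specialUnitaryToGL 2 h).isUnit.mul hunit using 1
    rw [hfs, Matrix.mul_add, Matrix.mul_smul, Matrix.mul_smul, hmul, Matrix.mul_neg, Matrix.mul_one]
    rfl
  obtain ⟨γ⟩ := joined_one (-specialUnitaryToGL 2 h)
  exact hneg.trans ⟨⟨⟨fun p => γ p.1, by fun_prop⟩, fun x => by simp, fun x => by simp⟩⟩

end SpecialUnitary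

section Surjectivity

variable {m : ℕ} {w : Monoid.Coprod (SU 2) (FreeGroup (Fin (m + 2)))}

lemma exists_homotopy_projectiveUnitary
    (hw : Monoid.Coprod.snd w = iteratedCommutator (m + 2) fun i => FreeGroup.of i) :
    ∃ F : C((Fin (m + 2) → ProjectiveUnitary (Fin 2)) × I, GL (Fin 2) ℂ),
      (∀ p, ∃ s : Fin (m + 2) → SU 2, F (p, 0) = specialUnitaryToGL 2
        (Monoid.Coprod.lift (MonoidHom.id (SU 2)) (FreeGroup.lift s) w)) ∧
      ∀ g : Fin (m + 2) → unitaryGroup (Fin 2) ℂ,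
        F (fun i => (g i : ProjectiveUnitary (Fin 2)), 1)
          = Unitary.toUnits (iteratedCommutator (m + 2) g) := by
  obtain ⟨Γ, hΓ0, hΓ1, hΓ⟩ := exists_homotopy_lift_content (specialUnitaryToGL 2)
    (fun k => joined_one _) w
  have hinv (a c t) (hc : ∀ i, c i ∈ Subgroup.center (GL (Fin 2) ℂ)) : Γ (a * c, t) = Γ (a, t) := by
    rw [hΓ a c t hc, hw, freeGroup_lift_iteratedCommutator,
      iteratedCommutator_eq_one_of_mem_center hc, _root_.mul_one]
  have htoUnits : Continuous fun g : Fin (m + 2) → unitaryGroup (Fin 2) ℂ =>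
      fun i => Unitary.toUnits (g i) :=
    continuous_pi fun i => continuous_toUnits.comp (continuous_apply i)
  obtain ⟨F, hF⟩ := exists_factor_pi_quotient (unitaryScalars (Fin 2))
    (Γ.comp ⟨fun p => (fun i => Unitary.toUnits (p.1 i), p.2), by
      exact (htoUnits.comp continuous_fst).prodMk continuous_snd⟩)
    (fun g c t hc => by
      have hmul : (fun i => Unitary.toUnits ((g * c) i))
          = (fun i => Unitary.toUnits (g i)) * fun i => Unitary.toUnits (c i) :=
        funext fun i => map_mul _ _ _
      change Γ (fun i => Unitary.toUnits ((g * c) i), t) = Γ (fun i => Unitary.toUnits (g i), t)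
      rw [hmul, hinv _ _ t hc])
  refine ⟨F, fun p => ?_, fun g => ?_⟩
  · choose g hg using fun i => QuotientGroup.mk_surjective (p i)
    obtain rfl : (fun i => (g i : ProjectiveUnitary (Fin 2))) = p := funext hg
    choose s c hc hsc using fun i => exists_specialUnitary_mul_eq_toUnits two_ne_zero (g i)
    refine ⟨s, ?_⟩
    calc F (fun i => (g i : ProjectiveUnitary (Fin 2)), 0)
        = Γ (specialUnitaryToGL 2 ∘ s * c, 0) :=
          (hF g 0).trans (congrArg Γ (Prod.ext (funext fun i => (hsc i).symm) rfl))
      _ = Γ (specialUnitaryToGL 2 ∘ s, 0) := hinv _ _ 0 hc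
      _ = _ := (hΓ0 _).trans (lift_specialUnitaryToGL s w)
  · rw [map_iteratedCommutator, ← freeGroup_lift_iteratedCommutator, ← hw]
    exact (hF g 1).trans (hΓ1 _)

theorem wordMap_surjective
    (hw : Monoid.Coprod.snd w = iteratedCommutator (m + 2) fun i => FreeGroup.of i) :
    Function.Surjective fun g : Fin (m + 2) → SU 2 =>
      Monoid.Coprod.lift (MonoidHom.id (SU 2)) (FreeGroup.lift g) w := by
  intro h
  by_contra! hmiss
  obtain ⟨F, hF0, hF1⟩ := exists_homotopy_projectiveUnitary hw
  let F' (t : I) : C(Fin (m + 2) → ProjectiveUnitary (Fin 2), GL (Fin 2) ℂ) :=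
    ⟨fun p => F (p, t), by fun_prop⟩
  have hhomotopic : (F' 1).Homotopic (F' 0) :=
    .symm ⟨⟨F.comp .prodSwap, fun _ => rfl, fun _ => rfl⟩⟩
  have htrivial : (F' 0).Homotopic 1 := homotopic_one_of_forall_ne h fun p =>
    (hF0 p).imp' _ fun g hg => ⟨hmiss g, hg⟩
  have hmem : F' 1 ∈ stablyEven (Fin 2) _ :=
    mem_stablyEven_of_homotopic (hhomotopic.trans htrivial) (one_mem _)
  let cons : C((Fin (m + 1) → ProjectiveUnitary (Fin 2)) × Circle,
      Fin (m + 2) → ProjectiveUnitary (Fin 2)) :=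
    ⟨fun p => Fin.cons (QuotientGroup.mk (diagCircle p.2)) p.1, by
      have := continuous_diagCircle
      fun_prop⟩
  refine IsIteratedCommutatorMap.not_mem_stablyEven (fun g z => ?_)
    (comp_mem_stablyEven hmem cons)
  have hcons : cons (fun i => (g i : ProjectiveUnitary (Fin 2)), z)
      = fun i => ((Fin.cons (diagCircle z) g : Fin (m + 2) → _) i : ProjectiveUnitary (Fin 2)) := by
    funext i
    refine Fin.cases ?_ (fun i => ?_) i <;> simp [cons]
  rw [ContinuousMap.comp_apply, hcons]
  exact hF1 _

end Surjectivity

end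

end WordMap

/-- Let `n ≥ 2` and let `w ∈ SU(2) ∗ Fₙ` be a word whose content is the iterated
commutator `cₙ ∈ Fₙ`. Then the word map `SU(2)ⁿ → SU(2)` associated with `w` is
surjective; in particular the equation `w(g₁, …, gₙ) = 1` can be solved in `SU(2)`. -/
theorem wordMap_surjective_of_content_eq_iteratedCommutator
    (n : ℕ) (hn : 2 ≤ n)
    (w : Monoid.Coprod (SU 2) (FreeGroup (Fin n)))
    (hw : Monoid.Coprod.lift (1 : SU 2 →* FreeGroup (Fin n))
        (MonoidHom.id (FreeGroup (Fin n))) w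
      = iteratedCommutator n (fun i => FreeGroup.of i)) :
    Function.Surjective (fun g : Fin n → SU 2 =>
        Monoid.Coprod.lift (MonoidHom.id (SU 2)) (FreeGroup.lift g) w) ∧
    ∃ g : Fin n → SU 2,
        Monoid.Coprod.lift (MonoidHom.id (SU 2)) (FreeGroup.lift g) w = 1 := by
  obtain ⟨m, rfl⟩ := Nat.exists_eq_add_of_le' hn
  have hsurj := WordMap.wordMap_surjective hw
  exact ⟨hsurj, hsurj 1⟩
end

section
/- For every k ∈ ℕ and every neighborhood V ⊆ SU(k) of the identity matrix, there exists a nontrivial element w ∈ F₂, w ≠ e, such that the image of the word map SU(k) × SU(k) → SU(k) associated with w is contained in V. -/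
/-!
Conjugation does not change the distance to the identity of a unitary matrix, and
`‖⁅u, v⁆ - 1‖ ≤ 2 ‖u - 1‖ ‖v - 1‖`. So a word that is small on a pair `(a, b)` can be made
arbitrarily small there by iterated commutators, and the commutator of two words is small wherever
one of them is. By compactness, for every `a` one of `a, a ^ 2, …, a ^ N` is close to `1`, with `N`
independent of `a`; combining by commutators the words obtained from `x₁, x₁ ^ 2, …, x₁ ^ N` gives a
word that is small everywhere. Conjugating one of the factors before taking each commutator keeps
the words nontrivial.
-/

open scoped commutatorElement Topology

section FreeGroup

variable {α : Type*}

theorem toWord_mul_eq_append [DecidableEq α] {u v : FreeGroup α}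
    (h : ∀ x ∈ u.toWord.getLast?, ∀ y ∈ v.toWord.head?, x.1 = y.1 → x.2 = y.2) :
    (u * v).toWord = u.toWord ++ v.toWord := by
  rw [FreeGroup.toWord_mul]
  exact FreeGroup.IsReduced.reduce_eq <| List.isChain_append.2
    ⟨FreeGroup.isReduced_toWord, FreeGroup.isReduced_toWord, h⟩

theorem not_commute_of_toWord_head?_getLast? [DecidableEq α] {a b : α} (hab : a ≠ b)
    {u v : FreeGroup α}
    (hu_head : u.toWord.head? = some (a, true)) (hu_last : u.toWord.getLast? = some (a, false))
    (hv_head : v.toWord.head? = some (b, true)) (hv_last : v.toWord.getLast? = some (b, false)) :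
    ¬ Commute u v := by
  intro hcomm
  have huv : (u * v).toWord = u.toWord ++ v.toWord :=
    toWord_mul_eq_append (by simp [hu_last, hv_head, hab])
  have hvu : (v * u).toWord = v.toWord ++ u.toWord :=
    toWord_mul_eq_append (by simp [hu_head, hv_last, hab.symm])
  have hhead : (u.toWord ++ v.toWord).head? = (v.toWord ++ u.toWord).head? := by
    rw [← huv, ← hvu, hcomm.eq]
  simp [hu_head, hv_head, hab] at hhead

theorem fst_eq_imp_snd_eq_iff_ne_flip {x y : α × Bool} :
    (x.1 = y.1 → x.2 = y.2) ↔ x ≠ (y.1, !y.2) := by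
  simp only [ne_eq, Prod.ext_iff, not_and, Bool.not_eq_not]

variable [Nontrivial α]

theorem exists_letter_ne_ne_ne (x y z : α × Bool) : ∃ s, s ≠ x ∧ s ≠ y ∧ s ≠ z := by
  classical
  obtain ⟨a, b, hab⟩ := exists_pair_ne α
  obtain ⟨s, -, hs⟩ := Finset.exists_mem_notMem_of_card_lt_card
    (s := {x, y, z}) (t := ({a, b} : Finset α) ×ˢ Finset.univ)
    (Finset.card_le_three.trans_lt (by simp [Finset.card_pair hab]))
  exact ⟨s, by simpa using hs⟩

theorem exists_conj_toWord_head?_getLast? [DecidableEq α] (a : α) {u : FreeGroup α} (hu : u ≠ 1) :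
    ∃ g : FreeGroup α, (g * u * g⁻¹).toWord.head? = some (a, true) ∧
      (g * u * g⁻¹).toWord.getLast? = some (a, false) := by
  have hne : u.toWord ≠ [] := mt FreeGroup.toWord_eq_nil_iff.1 hu
  set x := u.toWord.head hne with hx
  set y := u.toWord.getLast hne with hy
  obtain ⟨s, hsa, hsx, hsy⟩ := exists_letter_ne_ne_ne (a, false) (x.1, !x.2) y
  obtain ⟨g, hg⟩ : ∃ g : FreeGroup α, g.toWord = [(a, true), s] := by
    refine ⟨FreeGroup.mk [(a, true), s], ?_⟩
    rw [FreeGroup.toWord_mk, FreeGroup.IsReduced.reduce_eq]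
    refine List.isChain_pair.2 fun h ↦ ?_
    exact (fst_eq_imp_snd_eq_iff_ne_flip (y := (a, true)).2 hsa h.symm).symm
  have hg_inv : g⁻¹.toWord = [(s.1, !s.2), (a, false)] := by
    simp [FreeGroup.toWord_inv, hg, FreeGroup.invRev]
  have hgu : (g * u).toWord = g.toWord ++ u.toWord := by
    apply toWord_mul_eq_append
    rw [hg, List.head?_eq_some_head hne, ← hx]
    simpa using fst_eq_imp_snd_eq_iff_ne_flip.2 hsx
  have hgug : (g * u * g⁻¹).toWord = g.toWord ++ u.toWord ++ g⁻¹.toWord := by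
    rw [← hgu]
    apply toWord_mul_eq_append
    rw [hgu, hg_inv, List.getLast?_append_of_ne_nil _ hne, List.getLast?_eq_some_getLast hne, ← hy]
    simpa using fst_eq_imp_snd_eq_iff_ne_flip (y := (s.1, !s.2)).2 (by simpa using hsy.symm)
  refine ⟨g, by simp [hgug, hg], ?_⟩
  rw [hgug, hg_inv, List.getLast?_append_of_ne_nil _ (List.cons_ne_nil _ _)]
  rfl

theorem exists_conj_commutatorElement_ne_one {u v : FreeGroup α} (hu : u ≠ 1) (hv : v ≠ 1) :
    ∃ g : FreeGroup α, ⁅g * u * g⁻¹, v⁆ ≠ 1 := by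
  classical
  obtain ⟨a, b, hab⟩ := exists_pair_ne α
  obtain ⟨g, hg_head, hg_last⟩ := exists_conj_toWord_head?_getLast? a hu
  obtain ⟨h, hh_head, hh_last⟩ := exists_conj_toWord_head?_getLast? b hv
  refine ⟨h⁻¹ * g, fun hone ↦
    not_commute_of_toWord_head?_getLast? hab hg_head hg_last hh_head hh_last ?_⟩
  simpa [mul_assoc] using (commutatorElement_eq_one_iff_commute.1 hone).map (MulAut.conj h)

end FreeGroup

section BiinvariantMetric

variable {G : Type*} [Group G] [PseudoMetricSpace G] [IsIsometricSMul Gᵐᵒᵖ G]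

theorem dist_commutatorElement_one (g h : G) : dist ⁅g, h⁆ 1 = dist (g * h) (h * g) := by
  rw [← dist_mul_right ⁅g, h⁆ 1 (h * g), commutatorElement_def]
  group

theorem exists_forall_dist_pow_one_lt (hG : TotallyBounded (Set.univ : Set G)) {r : ℝ}
    (hr : 0 < r) : ∃ N : ℕ, ∀ g : G, ∃ n ∈ Set.Icc 1 N, dist (g ^ n) 1 < r := by
  obtain ⟨t, ht, hcover⟩ := Metric.totallyBounded_iff.1 hG (r / 2) (half_pos hr)
  have exists_center (g : G) : ∃ c ∈ t, dist g c < r / 2 := by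
    simpa using hcover (Set.mem_univ g)
  choose center hcenter hdist using exists_center
  refine ⟨ht.toFinset.card, fun g ↦ ?_⟩
  obtain ⟨i, hi, j, hj, hij, hcenter_eq⟩ := Finset.exists_ne_map_eq_of_card_lt_of_maps_to
    (s := Finset.range (ht.toFinset.card + 1)) (t := ht.toFinset) (by simp)
    (f := fun n ↦ center (g ^ n)) (fun n _ ↦ by simpa using hcenter (g ^ n))
  wlog hlt : i < j generalizing i j
  · exact this j hj i hi hij.symm hcenter_eq.symm (by lia)
  rw [Finset.mem_range] at hj
  refine ⟨j - i, ⟨by lia, by lia⟩, ?_⟩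
  calc dist (g ^ (j - i)) 1 = dist (g ^ j) (g ^ i) := by
        rw [← dist_mul_right _ _ (g ^ i), ← pow_add, Nat.sub_add_cancel hlt.le, one_mul]
    _ ≤ dist (g ^ j) (center (g ^ j)) + dist (g ^ i) (center (g ^ i)) := by
        rw [show center (g ^ i) = center (g ^ j) from hcenter_eq]
        exact dist_triangle_right ..
    _ < r / 2 + r / 2 := add_lt_add (hdist _) (hdist _)
    _ = r := add_halves r

variable [IsIsometricSMul G G]

theorem dist_conj_one (g h : G) : dist (g * h * g⁻¹) 1 = dist h 1 := by
  rw [← dist_mul_right _ _ g, inv_mul_cancel_right, one_mul, ← dist_mul_left g h 1, mul_one]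

theorem dist_commutatorElement_one_le_left (g h : G) : dist ⁅g, h⁆ 1 ≤ 2 * dist g 1 :=
  calc dist ⁅g, h⁆ 1 = dist (g * h) (h * g) := dist_commutatorElement_one g h
    _ ≤ dist (g * h) (1 * h) + dist (h * g) (h * 1) := by
        rw [one_mul, mul_one]
        exact dist_triangle_right ..
    _ = 2 * dist g 1 := by rw [dist_mul_right, dist_mul_left, two_mul]

theorem dist_commutatorElement_one_le_right (g h : G) : dist ⁅g, h⁆ 1 ≤ 2 * dist h 1 := by
  rw [dist_commutatorElement_one, dist_comm, ← dist_commutatorElement_one]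
  exact dist_commutatorElement_one_le_left h g

end BiinvariantMetric

section SmallWords

variable {α : Type*} [Nontrivial α] {G : Type*} [Group G] [PseudoMetricSpace G]
  [IsIsometricSMul G G] [IsIsometricSMul Gᵐᵒᵖ G] {c r : ℝ}

theorem exists_word_dist_map_one_le_pow_mul (hc₀ : 0 ≤ c)
    (hcr : ∀ g h : G, dist h 1 ≤ r → dist ⁅g, h⁆ 1 ≤ c * dist g 1)
    {u : FreeGroup α} (hu : u ≠ 1) (m : ℕ) :
    ∃ w : FreeGroup α, w ≠ 1 ∧
      ∀ φ : FreeGroup α →* G, dist (φ u) 1 ≤ r → dist (φ w) 1 ≤ c ^ m * r := by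
  induction m with
  | zero => exact ⟨u, hu, fun φ hφ ↦ by simpa only [pow_zero, one_mul] using hφ⟩
  | succ m ih =>
    obtain ⟨w, hw, hw_small⟩ := ih
    obtain ⟨g, hg⟩ := exists_conj_commutatorElement_ne_one hw hu
    refine ⟨⁅g * w * g⁻¹, u⁆, hg, fun φ hφ ↦ ?_⟩
    calc dist (φ ⁅g * w * g⁻¹, u⁆) 1
        = dist ⁅φ g * φ w * (φ g)⁻¹, φ u⁆ 1 := by
          simp only [map_commutatorElement, map_mul, map_inv]
      _ ≤ c * dist (φ w) 1 := by simpa only [dist_conj_one] using hcr (φ g * φ w * (φ g)⁻¹) _ hφ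
      _ ≤ c * (c ^ m * r) := mul_le_mul_of_nonneg_left (hw_small φ hφ) hc₀
      _ = c ^ (m + 1) * r := by ring

theorem exists_word_dist_map_one_le (hc₀ : 0 ≤ c) (hc₁ : c < 1)
    (hcr : ∀ g h : G, dist h 1 ≤ r → dist ⁅g, h⁆ 1 ≤ c * dist g 1)
    {u : FreeGroup α} (hu : u ≠ 1) {δ : ℝ} (hδ : 0 < δ) :
    ∃ w : FreeGroup α, w ≠ 1 ∧
      ∀ φ : FreeGroup α →* G, dist (φ u) 1 ≤ r → dist (φ w) 1 ≤ δ := by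
  have hlim : Filter.Tendsto (fun m : ℕ ↦ c ^ m * r) Filter.atTop (𝓝 0) := by
    simpa only [zero_mul] using (tendsto_pow_atTop_nhds_zero_of_lt_one hc₀ hc₁).mul_const r
  obtain ⟨m, hm⟩ := (hlim.eventually_le_const hδ).exists
  obtain ⟨w, hw, hw_small⟩ := exists_word_dist_map_one_le_pow_mul hc₀ hcr hu m
  exact ⟨w, hw, fun φ hφ ↦ (hw_small φ hφ).trans hm⟩

theorem exists_word_dist_map_one_le_of_finite (hc₀ : 0 ≤ c) (hc₁ : c < 1)
    (hcr : ∀ g h : G, dist h 1 ≤ r → dist ⁅g, h⁆ 1 ≤ c * dist g 1)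
    {S : Set (FreeGroup α)} (hS : S.Finite) (hS_one : 1 ∉ S) {δ : ℝ} (hδ : 0 < δ) :
    ∃ w : FreeGroup α, w ≠ 1 ∧
      ∀ φ : FreeGroup α →* G, (∃ u ∈ S, dist (φ u) 1 ≤ r) → dist (φ w) 1 ≤ δ := by
  induction S, hS using Set.Finite.induction_on generalizing δ with
  | empty =>
    obtain ⟨w, hw⟩ := exists_ne (1 : FreeGroup α)
    exact ⟨w, hw, by simp⟩
  | @insert v S _ _ ih =>
    rw [Set.mem_insert_iff, not_or, eq_comm] at hS_one
    obtain ⟨w, hw, hw_small⟩ := ih hS_one.2 (half_pos hδ)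
    obtain ⟨w', hw', hw'_small⟩ := exists_word_dist_map_one_le hc₀ hc₁ hcr hS_one.1 (half_pos hδ)
    obtain ⟨g, hg⟩ := exists_conj_commutatorElement_ne_one hw hw'
    refine ⟨⁅g * w * g⁻¹, w'⁆, hg, fun φ ⟨u, hu, hφu⟩ ↦ ?_⟩
    have hleft : dist (φ ⁅g * w * g⁻¹, w'⁆) 1 ≤ 2 * dist (φ w) 1 := by
      simpa only [map_commutatorElement, map_mul, map_inv, dist_conj_one] using
        dist_commutatorElement_one_le_left (φ g * φ w * (φ g)⁻¹) (φ w')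
    have hright : dist (φ ⁅g * w * g⁻¹, w'⁆) 1 ≤ 2 * dist (φ w') 1 := by
      simpa only [map_commutatorElement] using dist_commutatorElement_one_le_right _ (φ w')
    rcases hu with rfl | hu
    · linarith [hw'_small φ hφu]
    · linarith [hw_small φ ⟨u, hu, hφu⟩]

theorem exists_word_forall_lift_mem_of_totallyBounded (hG : TotallyBounded (Set.univ : Set G))
    (hr : 0 < r) (hc₀ : 0 ≤ c) (hc₁ : c < 1)
    (hcr : ∀ g h : G, dist h 1 ≤ r → dist ⁅g, h⁆ 1 ≤ c * dist g 1)
    {V : Set G} (hV : V ∈ 𝓝 1) :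
    ∃ w : FreeGroup α, w ≠ 1 ∧ ∀ f : α → G, FreeGroup.lift f w ∈ V := by
  obtain ⟨δ, hδ, hδV⟩ := Metric.nhds_basis_closedBall.mem_iff.1 hV
  obtain ⟨N, hN⟩ := exists_forall_dist_pow_one_lt hG hr
  obtain ⟨a⟩ := (inferInstance : Nonempty α)
  have one_notMem : 1 ∉ (FreeGroup.of a ^ ·) '' Set.Icc 1 N := by
    rintro ⟨n, hn, hpow⟩
    exact FreeGroup.of_ne_one a (pow_eq_one_iff_left (Nat.one_le_iff_ne_zero.1 hn.1) |>.1 hpow)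
  obtain ⟨w, hw, hw_small⟩ := exists_word_dist_map_one_le_of_finite hc₀ hc₁ hcr
    ((Set.finite_Icc 1 N).image _) one_notMem hδ
  refine ⟨w, hw, fun f ↦ hδV (hw_small _ ?_)⟩
  obtain ⟨n, hn, hdist⟩ := hN (f a)
  refine ⟨_, Set.mem_image_of_mem _ hn, ?_⟩
  simpa only [map_pow, FreeGroup.lift_apply_of] using hdist.le

end SmallWords

section Unitary

variable {A : Type*} [NormedRing A] [StarRing A] [CStarRing A] (H : Subgroup (unitary A))

instance isIsometricSMul_subgroup_unitary : IsIsometricSMul H H where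
  isometry_smul u := Isometry.of_dist_eq fun v w ↦ by
    simp only [Subtype.dist_eq, dist_eq_norm, smul_eq_mul, Subgroup.coe_mul, Submonoid.coe_mul,
      ← mul_sub, CStarRing.norm_coe_unitary_mul]

instance isIsometricSMul_op_subgroup_unitary : IsIsometricSMul Hᵐᵒᵖ H where
  isometry_smul u := Isometry.of_dist_eq fun v w ↦ by
    simp only [Subtype.dist_eq, dist_eq_norm, MulOpposite.smul_eq_mul_unop, Subgroup.coe_mul,
      Submonoid.coe_mul, ← sub_mul, CStarRing.norm_mul_coe_unitary]

variable {H}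

theorem dist_commutatorElement_one_le_two_mul (u v : H) :
    dist ⁅u, v⁆ 1 ≤ 2 * dist u 1 * dist v 1 := by
  rw [dist_commutatorElement_one]
  simp only [Subtype.dist_eq, dist_eq_norm, Subgroup.coe_mul, Submonoid.coe_mul,
    OneMemClass.coe_one]
  generalize ((u : unitary A) : A) = a, ((v : unitary A) : A) = b
  calc ‖a * b - b * a‖ = ‖(a - 1) * (b - 1) - (b - 1) * (a - 1)‖ := by congr 1; noncomm_ring
    _ ≤ ‖a - 1‖ * ‖b - 1‖ + ‖b - 1‖ * ‖a - 1‖ :=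
      (norm_sub_le _ _).trans (add_le_add (norm_mul_le _ _) (norm_mul_le _ _))
    _ = 2 * ‖a - 1‖ * ‖b - 1‖ := by ring

theorem dist_commutatorElement_one_le_half_mul (u : H) {v : H} (hv : dist v 1 ≤ 1 / 4) :
    dist ⁅u, v⁆ 1 ≤ 1 / 2 * dist u 1 :=
  calc dist ⁅u, v⁆ 1 ≤ 2 * dist u 1 * dist v 1 := dist_commutatorElement_one_le_two_mul u v
    _ ≤ 2 * dist u 1 * (1 / 4) := by gcongr
    _ = 1 / 2 * dist u 1 := by ring

variable (H)

theorem totallyBounded_univ_subgroup_unitary [ProperSpace A] :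
    TotallyBounded (Set.univ : Set H) := by
  have hball := (isCompact_closedBall (0 : A) ‖(1 : A)‖).totallyBounded
  have hcoe : IsUniformInducing fun u : H ↦ ((u : unitary A) : A) :=
    (isometry_subtype_coe.comp isometry_subtype_coe).isUniformInducing
  refine (totallyBounded_preimage hcoe hball).subset fun u _ ↦ ?_
  rw [Set.mem_preimage, mem_closedBall_zero_iff, ← CStarRing.norm_coe_unitary_mul u.1 1, mul_one]

end Unitary

section Matrix

open scoped Matrix.Norms.L2Operator

theorem exists_word_with_image_in_neighborhood_general {n : Type*} [Fintype n] [DecidableEq n]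
    (H : Subgroup (Matrix.unitaryGroup n ℂ)) {V : Set H} (hV : V ∈ 𝓝 1)
    (α : Type*) [Nontrivial α] :
    ∃ w : FreeGroup α, w ≠ 1 ∧ ∀ f : α → H, FreeGroup.lift f w ∈ V := by
  have : ProperSpace (Matrix n n ℂ) := FiniteDimensional.proper ℂ _
  exact exists_word_forall_lift_mem_of_totallyBounded (totallyBounded_univ_subgroup_unitary H)
    (r := 1 / 4) (c := 1 / 2) (by norm_num) (by norm_num) (by norm_num)
    (fun u _ hv ↦ dist_commutatorElement_one_le_half_mul u hv) hV

end Matrix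

/-- **Theorem (Thom).** For every `k` and every neighborhood `V` of the identity in
`SU(k)` there is a nontrivial word `w ∈ F₂` whose word map on `SU(k)` has image
contained in `V`. -/
theorem exists_word_with_image_in_neighborhood
    (k : ℕ) (V : Set (SU k)) (hV : V ∈ nhds (1 : SU k)) :
    ∃ w : FreeGroup (Fin 2), w ≠ 1 ∧
      ∀ a b : SU k, FreeGroup.lift ![a, b] w ∈ V := by
  obtain ⟨w, hw, hwV⟩ :=
    exists_word_with_image_in_neighborhood_general (SU k) hV (Fin 2)
  exact ⟨w, hw, fun a b ↦ hwV ![a, b]⟩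
end
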